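/- arXiv:math/0607428 — 2 statements merged into one kernel-verified Lean document; each statement's English description precedes it below -/
import Mathlib

section
/- Let (W,S) be a Coxeter system of finite rank with Coxeter matrix m, and let B = {a,b} be a base of (W,S) of type D_2(4q+2) for some q ≥ 1 (i.e. m(a,b) = 4q+2). Then W has a set of Coxeter generators S' such that B matches a base B' of (W,S') of type D_2(2q+1) if and only if either v = a or v = b has the property that for all s ∈ S−B with m(s,v) < ∞ one has m(s,a) = m(s,b) = 2. -/
/-!
# Even dihedral bases matching odd dihedral bases

Throughout, `{p, q}` is a base with `m_pq = 4 k + 2`, `a` and `b` are its generators, and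
`z = (a b) ^ (2 k + 1)` is the central involution of `⟨a, b⟩`.

*Sufficiency.* As `D₂(4k+2) = D₂(2k+1) × Z/2`, with factors `⟨a b a, b⟩` and `⟨z⟩`, one may replace the
generator `a` by the two generators `a b a` and `z`. If every other generator either commutes with
both `a` and `b` or forms an infinite dihedral group with `a`, the result is again a Coxeter system,
with the label of `{a b a, b}` equal to `2 k + 1` (`splitMatrix`, `exists_split`); the pair
`{a b a, b}` is a base of it, and both commutator subgroups are `⟨(a b) ^ 2⟩` (`backward`).

*Necessity.* The tool is the geometric representation, with its roots. Every root is positive or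
negative (`rep_root_nonneg`), and every finite subgroup lies in a maximal finite subgroup, which is
the stabilizer of a linear form (`exists_maximal_finite`). Maximality of a dihedral base is used in
the form `PairBase`: a third generator which generates a finite group together with the base commutes
with it. Consequently an element permuting the two simple roots of the base fixes both
(`PairBase.fix`).

Let `{x, y}` be a matching base of type `D₂(2k+1)` of another system. A conjugate `g` of `x` inverts
the rotation `(a b) ^ 2`, hence preserves the plane of the base, and so `g = d v` with `d ∈ ⟨a, b⟩`
and `v` fixing both simple roots (`PairBase.exists_fix`); in particular `v` centralizes `⟨a, b⟩`.
After conjugation by a power of `(a b) ^ 2`, the element `g` becomes `b ω` or `a ω` with `ω = z v`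
(`dihedral_conj`); say `b ω`. The element `ω` negates the simple roots of `{a, b}`, since `z` does
(`rep_central`). On the other hand, the corresponding conjugate of `ω` centralizes `{x, y}` and hence
*fixes* the simple roots of this odd base (`PairBase.fix_of_commute`). Let `t` be another generator
with `t b` of finite order. Comparing the two behaviours of `ω`, a maximal finite subgroup containing
`t` and `b` must contain `ω`, and then also `a`, so by `PairBase` the generator `t` commutes with both
`a` and `b` (`PairBase.criterion`).
-/


variable {W : Type*} [Group W]

/-- `S` is a set of Coxeter generators of the group `W`, with Coxeter matrix given by the
restriction of `m` to `S × S` (the value `0` of `m` encodes `∞`). -/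
def IsCoxeterSystemOn (m : W → W → ℕ) (S : Set W) : Prop :=
  ∃ (cm : CoxeterMatrix S) (cs : CoxeterSystem cm W),
    (∀ s : S, cs.simple s = (s : W)) ∧ ∀ s t : S, cm.M s t = m s t

/-- The subset `B` is irreducible: its Coxeter diagram (edges between distinct `x, y` with
`m x y > 2`, including `m x y = ∞`, i.e. `m x y = 0`) is nonempty and connected. -/
def IsIrreducibleOn (m : W → W → ℕ) (B : Set W) : Prop :=
  B.Nonempty ∧ ∀ u ∈ B, ∀ v ∈ B,
    Relation.ReflTransGen
      (fun x y => x ∈ B ∧ y ∈ B ∧ x ≠ y ∧ (m x y = 0 ∨ 2 < m x y)) u v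

/-- `B` is a base of the Coxeter system `(W, S)`: the visual subgroup `⟨B⟩` is a noncyclic,
maximal, finite, irreducible visual subgroup. -/
def IsBase (m : W → W → ℕ) (S B : Set W) : Prop :=
  B ⊆ S ∧ IsIrreducibleOn m B ∧ (Subgroup.closure B : Set W).Finite ∧
    ¬ IsCyclic ↥(Subgroup.closure B) ∧
    ∀ B' : Set W, B' ⊆ S → B ⊆ B' → IsIrreducibleOn m B' →
      (Subgroup.closure B' : Set W).Finite → B' = B

/-- The base `B` matches the base `B'`: the commutator subgroups of the visual subgroups
`⟨B⟩` and `⟨B'⟩` are conjugate in `W`. -/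
def Matches (B B' : Set W) : Prop :=
  ∃ w : W,
    Subgroup.map ((MulAut.conj w).toMonoidHom)
        (⁅Subgroup.closure B, Subgroup.closure B⁆ : Subgroup W)
      = ⁅Subgroup.closure B', Subgroup.closure B'⁆

/-- `(⟨B⟩, B)` has the isomorphism type of the Coxeter system of the Coxeter matrix `std`. -/
def HasType (m : W → W → ℕ) (B : Set W) {n : ℕ} (std : Fin n → Fin n → ℕ) : Prop :=
  ∃ e : ↥B ≃ Fin n, ∀ u v : ↥B, m u v = std (e u) (e v)

/-- The Coxeter matrix of type `Aₙ` (Coxeter's notation): linear diagram, all labels 3. -/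
def aMat (n : ℕ) : Fin n → Fin n → ℕ := fun i j =>
  if i = j then 1 else if i.val + 1 = j.val ∨ j.val + 1 = i.val then 3 else 2

/-- The Coxeter matrix of type `Cₙ` in Coxeter's notation (Bourbaki's `Bₙ`):
linear diagram with labels 3, …, 3, 4. -/
def cMat (n : ℕ) : Fin n → Fin n → ℕ := fun i j =>
  if i = j then 1
  else if i.val + 1 = j.val ∨ j.val + 1 = i.val then
    (if i.val + 1 = n ∨ j.val + 1 = n then 4 else 3)
  else 2

/-- The Coxeter matrix of type `Bₙ` in Coxeter's notation (Bourbaki's `Dₙ`), for `n ≥ 3`: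
a chain `0, …, n-2` with labels 3 together with the edge `{n-3, n-1}` labelled 3. -/
def bMat (n : ℕ) : Fin n → Fin n → ℕ := fun i j =>
  if i = j then 1
  else if ((i.val + 1 = j.val ∧ j.val + 2 ≤ n) ∨ (j.val + 1 = i.val ∧ i.val + 2 ≤ n))
      ∨ (i.val + 3 = n ∧ j.val + 1 = n) ∨ (j.val + 3 = n ∧ i.val + 1 = n) then 3
  else 2

/-- The dihedral Coxeter matrix `D₂(k)` (i.e. `I₂(k)`). -/
def d2Mat (k : ℕ) : Fin 2 → Fin 2 → ℕ := fun i j => if i = j then 1 else k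

/-- The Coxeter matrix of type `G₃` in Coxeter's notation (i.e. `H₃`). -/
def g3Mat : Fin 3 → Fin 3 → ℕ := ![![1,3,2], ![3,1,5], ![2,5,1]]

/-- The Coxeter matrix of type `G₄` in Coxeter's notation (i.e. `H₄`). -/
def g4Mat : Fin 4 → Fin 4 → ℕ := ![![1,3,2,2], ![3,1,3,2], ![2,3,1,5], ![2,2,5,1]]

/-- The Coxeter matrix of type `F₄`. -/
def f4Mat : Fin 4 → Fin 4 → ℕ := ![![1,3,2,2], ![3,1,4,2], ![2,4,1,3], ![2,2,3,1]]

/-- The 2-part of `k`: the largest power of 2 dividing `k` (with `0` encoding `∞`;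
the 2-part of `∞` is `∞`). -/
def twoPart (k : ℕ) : ℕ := if k = 0 then 0 else 2 ^ (k.factorization 2)

/-- The subgroup `N_b`: the normal closure in `W` of the elements `(st) ^ b(s,t)` for
`s, t ∈ S` with `m s t < ∞`, where `b(s,t)` is the 2-part of `m s t`. -/
def NbSubgroup (m : W → W → ℕ) (S : Set W) : Subgroup W :=
  Subgroup.normalClosure
    {x | ∃ s ∈ S, ∃ t ∈ S, m s t ≠ 0 ∧ x = (s * t) ^ twoPart (m s t)}

instance (m : W → W → ℕ) (S : Set W) : (NbSubgroup m S).Normal :=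
  Subgroup.normalClosure_normal

/-- `(a, b)` is a special pair of elements of `S`: `m a b ≡ 2 mod 4` and either `v = a` or
`v = b` has the property that `m s a = m s b = 2` for every `s ∈ S \ {a, b}` with
`m s v < ∞`. -/
def IsSpecialPair (m : W → W → ℕ) (S : Set W) (a b : W) : Prop :=
  a ∈ S ∧ b ∈ S ∧ a ≠ b ∧ m a b % 4 = 2 ∧
    ((∀ s ∈ S, s ≠ a → s ≠ b → m s a ≠ 0 → m s a = 2 ∧ m s b = 2) ∨
     (∀ s ∈ S, s ≠ a → s ≠ b → m s b ≠ 0 → m s a = 2 ∧ m s b = 2))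

open scoped Classical in
/-- `m̄ a b = 2` if `(a, b)` is a special pair and `m̄ a b = m a b` otherwise. -/
noncomputable def mbar (m : W → W → ℕ) (S : Set W) (a b : W) : ℕ :=
  if IsSpecialPair m S a b then 2 else m a b

/-- The subgroup `N_e`: the normal closure in `W` of the elements `st` with `m s t` odd
together with the elements `(ab)²` with `(a, b)` a special pair. -/
def NeSubgroup (m : W → W → ℕ) (S : Set W) : Subgroup W :=
  Subgroup.normalClosure
    ({x | ∃ s ∈ S, ∃ t ∈ S, Odd (m s t) ∧ x = s * t} ∪
     {x | ∃ a b : W, IsSpecialPair m S a b ∧ x = (a * b) ^ 2})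

instance (m : W → W → ℕ) (S : Set W) : (NeSubgroup m S).Normal :=
  Subgroup.normalClosure_normal

/-- The word length of `w` with respect to the generating set `B`. -/
noncomputable def wordLength (B : Set W) (w : W) : ℕ :=
  sInf {n | ∃ l : List W, (∀ x ∈ l, x ∈ B) ∧ l.length = n ∧ l.prod = w}

/-- `z` is a longest element of the visual subgroup `⟨B⟩`. -/
def IsLongestElement (B : Set W) (z : W) : Prop :=
  z ∈ Subgroup.closure B ∧
    ∀ w ∈ Subgroup.closure B, wordLength B w ≤ wordLength B z

/-- The basic subgroup `⟨B⟩` of `(W, S)` is reduced: for every set of Coxeter generators `S'`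
of `W`, any base of `(W, S')` matching `B` generates a subgroup of order at least `|⟨B⟩|`. -/
def IsReducedBase (m : W → W → ℕ) (S B : Set W) : Prop :=
  ∀ (S' : Set W) (m' : W → W → ℕ) (B' : Set W),
    IsCoxeterSystemOn m' S' → S'.Finite → IsBase m' S' B' → Matches B B' →
      Nat.card ↥(Subgroup.closure B) ≤ Nat.card ↥(Subgroup.closure B')

/-- The isomorphism type of `(⟨B⟩, B)` belongs to the family `F` of isomorphism types of
Coxeter systems (a family of Coxeter matrices). -/
def TypeIn (F : ∀ n : ℕ, (Fin n → Fin n → ℕ) → Prop) (m : W → W → ℕ) (B : Set W) : Prop :=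
  ∃ (n : ℕ) (Mt : Fin n → Fin n → ℕ), F n Mt ∧ HasType m B Mt

/-- The subgroup `N(F)`: the normal closure in `W` of the commutator subgroups of all
reduced basic subgroups of `(W, S)` of type in `F` together with the commutator subgroups of
all unreduced basic subgroups of `(W, S)` matching a reduced basic subgroup of type in `F`
of another system `(W, S')`. -/
def NFSubgroup (F : ∀ n : ℕ, (Fin n → Fin n → ℕ) → Prop)
    (m : W → W → ℕ) (S : Set W) : Subgroup W :=
  Subgroup.normalClosure
    {x | ∃ B : Set W, IsBase m S B ∧
      x ∈ (⁅Subgroup.closure B, Subgroup.closure B⁆ : Subgroup W) ∧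
      ((IsReducedBase m S B ∧ TypeIn F m B) ∨
       (¬ IsReducedBase m S B ∧ ∃ (S' : Set W) (m' : W → W → ℕ) (B' : Set W),
          IsCoxeterSystemOn m' S' ∧ S'.Finite ∧ IsBase m' S' B' ∧
          IsReducedBase m' S' B' ∧ TypeIn F m' B' ∧ Matches B B'))}

instance (F : ∀ n : ℕ, (Fin n → Fin n → ℕ) → Prop) (m : W → W → ℕ) (S : Set W) :
    (NFSubgroup F m S).Normal :=
  Subgroup.normalClosure_normal

/-- The normal closure, within the subgroup `H`, of the subset `X ⊆ H`,
as a subgroup of the ambient group. -/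
def nClosIn (H : Subgroup W) (X : Set W) : Subgroup W :=
  Subgroup.map H.subtype (Subgroup.normalClosure ((fun x : H => (x : W)) ⁻¹' X))

/-- The generating set for the subgroup `N(⟨B⟩)` of a basic subgroup `⟨B⟩` of rank at least 3:
the commutator subgroup of `⟨B⟩` if the rank is at least 5 or the type is `A₄`, `G₃` or `G₄`;
`a₁a₃` for type `A₃`; `b₁b₂, b₂b₃` (products of distinct commuting generators) for type `B₄`;
`(c₂c₃)²` for type `C₃`; `c₁c₃` for type `C₄`; and `(f₂f₃)²` for type `F₄`. -/
def genSetNB (m : W → W → ℕ) (B : Set W) : Set W :=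
  {x | ((5 ≤ B.ncard ∨ HasType m B (aMat 4) ∨ HasType m B g3Mat ∨ HasType m B g4Mat) ∧
          x ∈ (⁅Subgroup.closure B, Subgroup.closure B⁆ : Subgroup W)) ∨
       (HasType m B (aMat 3) ∧ ∃ u ∈ B, ∃ v ∈ B, u ≠ v ∧ m u v = 2 ∧ x = u * v) ∨
       (HasType m B (bMat 4) ∧ ∃ u ∈ B, ∃ v ∈ B, u ≠ v ∧ m u v = 2 ∧ x = u * v) ∨
       (HasType m B (cMat 3) ∧ ∃ u ∈ B, ∃ v ∈ B, m u v = 4 ∧ x = (u * v) ^ 2) ∨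
       (HasType m B (cMat 4) ∧ ∃ u ∈ B, ∃ p ∈ B, ∃ v ∈ B, ∃ q ∈ B,
          m u p = 3 ∧ m p v = 3 ∧ m v q = 4 ∧ m u v = 2 ∧ x = u * v) ∨
       (HasType m B f4Mat ∧ ∃ u ∈ B, ∃ v ∈ B, m u v = 4 ∧ x = (u * v) ^ 2)}

/-- The subgroup `N(⟨B⟩)` of the visual subgroup `⟨B⟩`, viewed as a subgroup of `W`. -/
def NBSubgroup (m : W → W → ℕ) (B : Set W) : Subgroup W :=
  nClosIn (Subgroup.closure B) (genSetNB m B)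

/-- The subgroup `N(W)`: the normal closure in `W` of the subgroups `N(⟨B⟩)` over all
bases `B` of `(W, S)` of rank greater than 2. -/
def NWSubgroup (m : W → W → ℕ) (S : Set W) : Subgroup W :=
  Subgroup.normalClosure
    {x | ∃ B : Set W, IsBase m S B ∧ 2 < B.ncard ∧ x ∈ NBSubgroup m B}

instance (m : W → W → ℕ) (S : Set W) : (NWSubgroup m S).Normal :=
  Subgroup.normalClosure_normal

/-! ### The geometric representation -/

namespace CoxGeom

open CoxeterSystem

section Rep

variable {I : Type*}

/-- The entry `B(α_i, α_j) = -cos (π / m_ij)` of the canonical form (`-1` when `m_ij = ∞`). -/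
noncomputable def gram (M : CoxeterMatrix I) (i j : I) : ℝ :=
  if M i j = 0 then -1 else -Real.cos (Real.pi / M i j)

/-- The canonical symmetric bilinear form on the space with basis the simple roots. -/
noncomputable def form (M : CoxeterMatrix I) : (I →₀ ℝ) →ₗ[ℝ] (I →₀ ℝ) →ₗ[ℝ] ℝ :=
  Finsupp.linearCombination ℝ (fun i => Finsupp.linearCombination ℝ (fun j => gram M i j))

/-- The simple root `α_i`. -/
noncomputable def root (i : I) : I →₀ ℝ := Finsupp.single i 1

/-- The reflection in the simple root `α_i`. -/
noncomputable def refl (M : CoxeterMatrix I) (i : I) : Module.End ℝ (I →₀ ℝ) :=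
  LinearMap.id - (2 : ℝ) • (form M (root i)).smulRight (root i)

/-- `sin (k π / m) / sin (π / m)`, with its limit value `k` for `m = ∞`, encoded as `m = 0`. -/
noncomputable def cheb (m k : ℕ) : ℝ :=
  if m = 0 then k else Real.sin (k * (Real.pi / m)) / Real.sin (Real.pi / m)

variable (M : CoxeterMatrix I)

lemma gram_symm (i j : I) : gram M i j = gram M j i := by
  simp [gram, M.symmetric i j]

lemma gram_self (i : I) : gram M i i = 1 := by simp [gram]

lemma form_root_root (i j : I) : form M (root i) (root j) = gram M i j := by
  simp [form, root]

lemma form_symm (u v : I →₀ ℝ) : form M u v = form M v u := by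
  have : form M = (form M).flip := by
    ext i j
    simpa [form] using gram_symm M i j
  exact congrArg (fun f => f u v) this

lemma refl_apply (i : I) (v : I →₀ ℝ) :
    refl M i v = v - (2 * form M (root i) v) • root i := by
  simp [refl, mul_smul]

lemma refl_root_self (i : I) : refl M i (root i) = - root i := by
  rw [refl_apply, form_root_root, gram_self]; module

lemma refl_root (i j : I) : refl M i (root j) = root j - (2 * gram M i j) • root i := by
  rw [refl_apply, form_root_root]

lemma refl_refl (i : I) (v : I →₀ ℝ) : refl M i (refl M i v) = v := by
  simp only [refl_apply, map_sub, map_smul, form_root_root, gram_self]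
  module

lemma form_refl (i : I) (u v : I →₀ ℝ) : form M (refl M i u) (refl M i v) = form M u v := by
  simp only [refl_apply, map_sub, map_smul, LinearMap.sub_apply, LinearMap.smul_apply,
    form_root_root, gram_self, smul_eq_mul, form_symm M u (root i)]
  ring

lemma sin_pos_of {m : ℕ} (h : 2 ≤ m) : 0 < Real.sin (Real.pi / m) := by
  have hm : (2 : ℝ) ≤ m := by exact_mod_cast h
  apply Real.sin_pos_of_pos_of_lt_pi
  · positivity
  · rw [div_lt_iff₀ (by positivity)]
    nlinarith [Real.pi_pos]

lemma cheb_zero (m : ℕ) : cheb m 0 = 0 := by simp [cheb]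

lemma cheb_one {m : ℕ} (h : m ≠ 1) : cheb m 1 = 1 := by
  unfold cheb
  split_ifs with h0
  · simp
  · have := sin_pos_of (show 2 ≤ m by omega)
    simp [this.ne']

/-- The Chebyshev recursion `sin ((k+2) θ) = 2 cos θ sin ((k+1) θ) - sin (k θ)`. -/
lemma cheb_add_two {i j : I} (h : i ≠ j) (k : ℕ) :
    cheb (M i j) (k + 2) = -2 * gram M i j * cheb (M i j) (k + 1) - cheb (M i j) k := by
  unfold cheb gram
  split_ifs with h0
  · push_cast; ring
  · have h1 := M.off_diagonal i j h
    have := sin_pos_of (show 2 ≤ M i j by omega)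
    set θ := Real.pi / (M i j)
    have e2 : ((k + 2 : ℕ) : ℝ) * θ = ((k + 1 : ℕ) : ℝ) * θ + θ := by push_cast; ring
    have e0 : (k : ℝ) * θ = ((k + 1 : ℕ) : ℝ) * θ - θ := by push_cast; ring
    rw [e2, e0, Real.sin_add, Real.sin_sub]
    field_simp
    ring

lemma cheb_nonneg {m k : ℕ} (h : m = 0 ∨ k ≤ m) : 0 ≤ cheb m k := by
  unfold cheb
  split_ifs with h0
  · positivity
  · have hk : k ≤ m := by omega
    have hm : (0 : ℝ) < m := by positivity
    have hk' : (k : ℝ) ≤ m := by exact_mod_cast hk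
    apply div_nonneg
    · apply Real.sin_nonneg_of_nonneg_of_le_pi
      · positivity
      · calc (k : ℝ) * (Real.pi / m) ≤ m * (Real.pi / m) := by gcongr
          _ = Real.pi := by field_simp
    · apply Real.sin_nonneg_of_nonneg_of_le_pi
      · positivity
      · apply div_le_self Real.pi_pos.le
        exact_mod_cast (by omega : 1 ≤ m)

lemma cheb_pos {m k : ℕ} (h : m = 0 ∨ k < m) (hk : 0 < k) : 0 < cheb m k := by
  unfold cheb
  split_ifs with h0
  · exact_mod_cast hk
  · have hkm : k < m := by omega
    have hm : (0 : ℝ) < m := by positivity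
    have hk' : (k : ℝ) < m := by exact_mod_cast hkm
    have hk0 : (0 : ℝ) < k := by exact_mod_cast hk
    apply div_pos
    · apply Real.sin_pos_of_pos_of_lt_pi
      · positivity
      · calc (k : ℝ) * (Real.pi / m) < m * (Real.pi / m) := by gcongr
          _ = Real.pi := by field_simp
    · exact sin_pos_of (by omega)

lemma cheb_self (m : ℕ) : cheb m m = 0 := by
  unfold cheb
  split_ifs with h0
  · simp [h0]
  · have hm : (m : ℝ) ≠ 0 := by exact_mod_cast h0
    rw [mul_div_cancel₀ _ hm]; simp

lemma cheb_pred {m : ℕ} (h : 2 ≤ m) : cheb m (m - 1) = 1 := by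
  unfold cheb
  have hm : (m : ℝ) ≠ 0 := by exact_mod_cast (by omega : m ≠ 0)
  have h1 := sin_pos_of h
  rw [if_neg (by omega), Nat.cast_sub (by omega)]
  have : ((m : ℝ) - (1 : ℕ)) * (Real.pi / m) = Real.pi - Real.pi / m := by
    push_cast; field_simp
  rw [this, Real.sin_pi_sub, div_self h1.ne']

/-- The product of two simple reflections rotates the plane spanned by the simple roots. -/
lemma refl_mul_pow_root {i j : I} (h : i ≠ j) (k : ℕ) :
    ((refl M i * refl M j) ^ k) (root i) =
      cheb (M i j) (2 * k + 1) • root i + cheb (M i j) (2 * k) • root j ∧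
    ((refl M i * refl M j) ^ (k + 1)) (root j) =
      -(cheb (M i j) (2 * k + 2) • root i) - cheb (M i j) (2 * k + 1) • root j := by
  have hm := M.off_diagonal i j h
  have hx : (refl M i * refl M j) (root i)
      = (4 * gram M i j ^ 2 - 1) • root i - (2 * gram M i j) • root j := by
    simp only [Module.End.mul_apply, refl_root, map_sub, map_smul, gram_self, gram_symm M j i]
    module
  have hy : (refl M i * refl M j) (root j) = (2 * gram M i j) • root i - root j := by
    simp only [Module.End.mul_apply, refl_root, map_sub, map_smul, gram_self]
    module
  have r := cheb_add_two M h
  induction k with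
  | zero =>
    constructor
    · simp [cheb_zero, cheb_one hm]
    · have := r 0
      simp only [zero_add, cheb_zero, cheb_one hm] at this
      simp only [zero_add, pow_one, hy, mul_zero, this, cheb_one hm]
      module
  | succ k ih =>
    obtain ⟨ih1, ih2⟩ := ih
    have r1 := r (2 * k + 1)
    have r2 := r (2 * k + 2)
    have r0 := r (2 * k)
    have e3 : 2 * (k + 1) = 2 * k + 2 := by ring
    rw [pow_succ' _ k, pow_succ' _ (k + 1), Module.End.mul_apply _ (_ ^ k), ih1,
      Module.End.mul_apply _ (_ ^ (k + 1)), ih2]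
    simp only [map_add, map_sub, map_neg, map_smul, hx, hy, e3]
    rw [show 2 * k + 1 + 2 = 2 * k + 3 by ring, show 2 * k + 1 + 1 = 2 * k + 2 by ring] at r1
    rw [show 2 * k + 2 + 2 = 2 * k + 4 by ring, show 2 * k + 2 + 1 = 2 * k + 3 by ring] at r2
    constructor
    · rw [r1, r0]; module
    · rw [r2, r1, r0]; module

/-- The braid relations hold for the reflections: on the plane of the two simple roots their product
is a rotation of the required order, and on the orthogonal complement it is the identity. -/
lemma refl_liftable : M.IsLiftable (refl M) := by
  intro i j
  by_cases h0 : M i j = 0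
  · rw [h0, pow_zero]
  by_cases hij : i = j
  · subst hij
    rw [M.diagonal, pow_one]
    exact LinearMap.ext fun v => refl_refl M i v
  have h1 := M.off_diagonal i j hij
  have h2 : 2 ≤ M i j := by omega
  have hs := sin_pos_of h2
  have hmpos : (M i j : ℝ) ≠ 0 := by exact_mod_cast h0
  set T := refl M i * refl M j with hT
  obtain ⟨m, hm⟩ : ∃ m, M i j = m + 1 := ⟨M i j - 1, by omega⟩
  have c1 : cheb (M i j) (2 * M i j + 1) = 1 := by
    unfold cheb
    rw [if_neg h0]
    have : ((2 * M i j + 1 : ℕ) : ℝ) * (Real.pi / M i j) = Real.pi / M i j + 2 * Real.pi := by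
      push_cast; field_simp; ring
    rw [this, Real.sin_add_two_pi, div_self hs.ne']
  have c0 : cheb (M i j) (2 * M i j) = 0 := by
    unfold cheb
    rw [if_neg h0]
    have : ((2 * M i j : ℕ) : ℝ) * (Real.pi / M i j) = 2 * Real.pi := by
      push_cast; field_simp
    rw [this, Real.sin_two_pi, zero_div]
  have cm : cheb (M i j) (2 * m + 1) = -1 := by
    unfold cheb
    rw [if_neg h0]
    have : ((2 * m + 1 : ℕ) : ℝ) * (Real.pi / M i j) = 2 * Real.pi - Real.pi / M i j := by
      have : ((2 * m + 1 : ℕ) : ℝ) = 2 * M i j - 1 := by rw [hm]; push_cast; ring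
      rw [this]; field_simp
    rw [this, Real.sin_two_pi_sub, neg_div, div_self hs.ne']
  have fx : (T ^ M i j) (root i) = root i := by
    rw [(refl_mul_pow_root M hij _).1, c1, c0]; module
  have fy : (T ^ M i j) (root j) = root j := by
    have := (refl_mul_pow_root M hij m).2
    rw [← hm, show 2 * m + 2 = 2 * M i j by omega, c0, cm] at this
    rw [this]; module
  refine LinearMap.ext fun v => ?_
  -- A vector is the sum of a vector of the plane and a vector orthogonal to the plane, because
  -- the form is nondegenerate on the plane.
  have hg : 1 - gram M i j ^ 2 ≠ 0 := by
    have : gram M i j = - Real.cos (Real.pi / M i j) := by simp [gram, h0]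
    rw [this, neg_sq, ← Real.sin_sq]
    positivity
  set p := form M (root i) v
  set r := form M (root j) v
  set α := (p - gram M i j * r) / (1 - gram M i j ^ 2) with hα
  set β := (r - gram M i j * p) / (1 - gram M i j ^ 2) with hβ
  set u := v - α • root i - β • root j with hu
  have ui : form M (root i) u = 0 := by
    simp only [hu, map_sub, map_smul, form_root_root, gram_self, smul_eq_mul]
    change p - _ - _ = 0
    rw [hα, hβ]; field_simp; ring
  have uj : form M (root j) u = 0 := by
    simp only [hu, map_sub, map_smul, form_root_root, gram_self, smul_eq_mul, gram_symm M j i]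
    change r - _ - _ = 0
    rw [hα, hβ]; field_simp; ring
  have fu : ∀ k, (T ^ k) u = u := by
    intro k
    induction k with
    | zero => simp
    | succ k ih =>
      rw [pow_succ', Module.End.mul_apply, ih, hT, Module.End.mul_apply, refl_apply M j, uj]
      simp [refl_apply, ui]
  have : v = u + α • root i + β • root j := by rw [hu]; module
  rw [this, map_add, map_add, map_smul, map_smul, fu, fx, fy]
  rfl

variable {M} (cs : CoxeterSystem M W)

/-- The geometric representation. -/
noncomputable def rep : W →* Module.End ℝ (I →₀ ℝ) := cs.lift ⟨refl M, refl_liftable M⟩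

@[simp] lemma rep_simple (i : I) : rep cs (cs.simple i) = refl M i :=
  cs.lift_apply_simple _ i

lemma rep_mul_apply (g h : W) (v : I →₀ ℝ) : rep cs (g * h) v = rep cs g (rep cs h v) := by
  rw [map_mul]; rfl

@[simp] lemma rep_inv_apply (g : W) (v : I →₀ ℝ) : rep cs g⁻¹ (rep cs g v) = v := by
  rw [← rep_mul_apply]; simp

@[simp] lemma rep_apply_inv (g : W) (v : I →₀ ℝ) : rep cs g (rep cs g⁻¹ v) = v := by
  rw [← rep_mul_apply]; simp

lemma form_rep (g : W) (u v : I →₀ ℝ) : form M (rep cs g u) (rep cs g v) = form M u v := by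
  induction g using cs.simple_induction_left generalizing u v with
  | one => simp
  | mul_simple_left w i ih => simp only [rep_mul_apply, rep_simple, form_refl, ih]

/-- The action of an alternating word on a simple root. -/
lemma rep_alternating {s t : I} (h : s ≠ t) (k : ℕ) :
    rep cs (cs.wordProd (alternatingWord s t k)) (root s) =
      if Even k then cheb (M s t) (k + 1) • root s + cheb (M s t) k • root t
      else cheb (M s t) k • root s + cheb (M s t) (k + 1) • root t := by
  induction k with
  | zero => simp [alternatingWord, cheb_zero, cheb_one (M.off_diagonal s t h)]
  | succ k ih =>
    rw [alternatingWord_succ', wordProd_cons, rep_mul_apply, ih]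
    have r := cheb_add_two M h k
    by_cases hk : Even k
    · have hk' : ¬ Even (k + 1) := by simp [Nat.even_add_one, hk]
      simp only [hk, hk', if_true, if_false, rep_simple, map_add, map_smul, refl_root, gram_self,
        gram_symm M t s, r]
      module
    · have hk' : Even (k + 1) := by simp [Nat.even_add_one, hk]
      simp only [hk, hk', if_true, if_false, rep_simple, map_add, map_smul, refl_root, gram_self, r]
      module

/-- Every `w` with `ℓ(w s) > ℓ(w)` is a reduced product of a minimal representative of its coset modulo
the rank two visual subgroup of `s` and `t`, and of an alternating word in `s` and `t`. -/
lemma exists_strip (n : ℕ) : ∀ (w : W) (s t : I), cs.length w = n →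
    cs.length w < cs.length (w * cs.simple s) →
    ∃ (k : ℕ) (v : W), w = v * cs.wordProd (alternatingWord s t k) ∧ cs.length w = cs.length v + k ∧
      cs.length v < cs.length (v * cs.simple s) ∧ cs.length v < cs.length (v * cs.simple t) := by
  induction n with
  | zero =>
    intro w s t hn hs
    refine ⟨0, w, by simp [alternatingWord], rfl, hs, ?_⟩
    rcases cs.length_mul_simple w t with h | h <;> omega
  | succ n ih =>
    intro w s t hn hs
    rcases cs.length_mul_simple w t with h | h
    · exact ⟨0, w, by simp [alternatingWord], rfl, hs, by omega⟩
    · obtain ⟨k, v, h1, h2, h3, h4⟩ := ih (w * cs.simple t) t s (by omega) (by simp; omega)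
      refine ⟨k + 1, v, ?_, by omega, h4, h3⟩
      rw [alternatingWord_succ, wordProd_concat, ← mul_assoc, ← h1]
      simp

/-- If `ℓ(w s) > ℓ(w)` then `w` sends the simple root `α_s` to a positive root. The induction on the
length writes `w = v u` with `u` alternating in `s` and a right descent `t` of `w`, and `v` of smaller
length sending `α_s` and `α_t` to positive roots; `u α_s` is a nonnegative combination of these. -/
theorem rep_root_nonneg (n : ℕ) : ∀ (w : W) (s : I), cs.length w = n →
    cs.length w < cs.length (w * cs.simple s) → 0 ≤ rep cs w (root s) := by
  induction n using Nat.strong_induction_on with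
  | _ n ih =>
    intro w s hn hs
    by_cases hw : w = 1
    · subst hw
      simp [root]
    obtain ⟨t, ht⟩ := cs.exists_rightDescent_of_ne_one hw
    unfold IsRightDescent at ht
    have hst : s ≠ t := by rintro rfl; omega
    obtain ⟨k, v, h1, h2, h3, h4⟩ := exists_strip cs n w s t hn hs
    have hk : k ≠ 0 := by
      rintro rfl
      simp [alternatingWord] at h1
      subst h1; omega
    have hvs := ih _ (by omega) v s rfl h3
    have hvt := ih _ (by omega) v t rfl h4
    have hkm : M s t = 0 ∨ k + 1 ≤ M s t := by
      by_contra! hc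
      have hred := cs.not_isReduced_alternatingWord t s (m := k + 1)
        (by rw [M.symmetric]; exact hc.1) (by rw [M.symmetric]; exact hc.2)
      apply hred
      have e1 : w * cs.simple s = v * cs.wordProd (alternatingWord t s (k + 1)) := by
        rw [alternatingWord_succ, wordProd_concat, ← mul_assoc, ← h1]
      have e2 := cs.length_mul_le v (cs.wordProd (alternatingWord t s (k + 1)))
      have e3 := cs.length_wordProd_le (alternatingWord t s (k + 1))
      rw [← e1] at e2
      unfold CoxeterSystem.IsReduced
      simp only [length_alternatingWord] at *
      omega
    have n1 := cheb_nonneg (m := M s t) (k := k) (by omega)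
    have n2 := cheb_nonneg (m := M s t) (k := k + 1) (by omega)
    rw [h1, rep_mul_apply, rep_alternating cs hst]
    split_ifs
    all_goals
      simp only [map_add, map_smul]
      exact add_nonneg (smul_nonneg (by assumption) (by assumption))
        (smul_nonneg (by assumption) (by assumption))

end Rep
end CoxGeom

/-! ### Roots and finite subgroups -/

namespace CoxGeom

open CoxeterSystem

section Roots

variable {I : Type*} {M : CoxeterMatrix I} (cs : CoxeterSystem M W)

/-- The roots are the images of the simple roots under the group. -/
def IsRoot (v : I →₀ ℝ) : Prop := ∃ (w : W) (i : I), v = rep cs w (root i)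

/-- The positive roots made negative by `g`. -/
def inv (g : W) : Set (I →₀ ℝ) := {v | IsRoot cs v ∧ 0 ≤ v ∧ rep cs g v ≤ 0}

/-- The stabilizer of a linear form. -/
def stab (h : (I →₀ ℝ) →ₗ[ℝ] ℝ) : Subgroup W where
  carrier := {g | ∀ v, h (rep cs g v) = h v}
  one_mem' := by simp
  mul_mem' := by
    intro a b ha hb v
    rw [rep_mul_apply, ha, hb]
  inv_mem' := by
    intro a ha v
    rw [← ha, rep_apply_inv]

lemma mem_stab {h : (I →₀ ℝ) →ₗ[ℝ] ℝ} {g : W} :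
    g ∈ stab cs h ↔ ∀ v, h (rep cs g v) = h v := Iff.rfl

lemma root_apply_self (i : I) : (root i : I →₀ ℝ) i = 1 := by simp [root]

lemma root_apply_ne {i j : I} (h : j ≠ i) : (root i : I →₀ ℝ) j = 0 := by simp [root, h]

lemma root_nonneg (i : I) : 0 ≤ (root i : I →₀ ℝ) := by simp [root]

lemma root_injective {i j : I} (h : (root i : I →₀ ℝ) = root j) : i = j := by
  by_contra hne
  have := DFunLike.congr_fun h i
  rw [root_apply_self, root_apply_ne hne] at this
  exact one_ne_zero this

lemma isRoot_root (i : I) : IsRoot cs (root i) := ⟨1, i, by simp⟩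

variable {cs} in
lemma IsRoot.rep {v : I →₀ ℝ} (h : IsRoot cs v) (g : W) : IsRoot cs (rep cs g v) := by
  obtain ⟨w, i, rfl⟩ := h
  exact ⟨g * w, i, by rw [rep_mul_apply]⟩

variable {cs} in
lemma IsRoot.neg {v : I →₀ ℝ} (h : IsRoot cs v) : IsRoot cs (-v) := by
  obtain ⟨w, i, rfl⟩ := h
  exact ⟨w * cs.simple i, i, by rw [rep_mul_apply, rep_simple, refl_root_self, map_neg]⟩

variable {cs} in
lemma IsRoot.form_self {v : I →₀ ℝ} (h : IsRoot cs v) : form M v v = 1 := by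
  obtain ⟨w, i, rfl⟩ := h
  rw [form_rep, form_root_root, gram_self]

variable {cs} in
lemma IsRoot.ne_zero {v : I →₀ ℝ} (h : IsRoot cs v) : v ≠ 0 := by
  rintro rfl
  simpa using h.form_self

lemma rep_root_nonpos {w : W} {s : I} (h : cs.length (w * cs.simple s) < cs.length w) :
    rep cs w (root s) ≤ 0 := by
  have := rep_root_nonneg cs _ (w * cs.simple s) s rfl (by simpa using h)
  rw [rep_mul_apply, rep_simple, refl_root_self, map_neg] at this
  exact neg_nonneg.mp this

variable {cs} in
lemma IsRoot.nonneg_or_nonpos {v : I →₀ ℝ} (h : IsRoot cs v) : 0 ≤ v ∨ v ≤ 0 := by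
  obtain ⟨w, i, rfl⟩ := h
  rcases cs.length_mul_simple w i with h | h
  · exact Or.inl (rep_root_nonneg cs _ w i rfl (by omega))
  · exact Or.inr (rep_root_nonpos cs (by omega))

variable {cs} in
lemma IsRoot.nonneg_of_pos {v : I →₀ ℝ} (h : IsRoot cs v) {j : I} (hj : 0 < v j) : 0 ≤ v := by
  rcases h.nonneg_or_nonpos with h | h
  · exact h
  · exact absurd (h j) (by simpa using hj)

variable {cs} in
lemma IsRoot.nonpos_of_neg {v : I →₀ ℝ} (h : IsRoot cs v) {j : I} (hj : v j < 0) : v ≤ 0 := by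
  rcases h.nonneg_or_nonpos with h | h
  · exact absurd (h j) (by simpa using hj)
  · exact h

lemma refl_apply_ne (i : I) {j : I} (h : j ≠ i) (v : I →₀ ℝ) : refl M i v j = v j := by
  simp [refl_apply, root_apply_ne h]

/-- A simple reflection permutes the positive roots other than its own simple root. -/
lemma IsRoot.refl_nonneg {v : I →₀ ℝ} (h : IsRoot cs v) (hv : 0 ≤ v) {s : I} (hs : v ≠ root s) :
    0 ≤ refl M s v := by
  have hr : IsRoot cs (refl M s v) := by simpa using h.rep (cs.simple s)
  by_contra hneg
  have hz : ∀ j, j ≠ s → v j = 0 := by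
    intro j hj
    by_contra hne
    have h1 : 0 < v j := lt_of_le_of_ne (hv j) (Ne.symm hne)
    exact hneg (hr.nonneg_of_pos (j := j) (by rwa [refl_apply_ne s hj]))
  have hv' : v = v s • root s := by
    ext j
    by_cases hj : j = s
    · subst hj; simp [root_apply_self]
    · simp [root_apply_ne hj, hz j hj]
  have h1 := h.form_self
  rw [hv'] at h1
  simp only [map_smul, LinearMap.smul_apply, form_root_root, gram_self, smul_eq_mul] at h1
  have h2 : 0 ≤ v s := hv s
  have h3 : v s = 1 := by nlinarith
  rw [h3, one_smul] at hv'
  exact hs hv'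

lemma inv_finite (g : W) : (inv cs g).Finite := by
  induction g using cs.simple_induction_right with
  | one =>
    apply Set.Finite.subset Set.finite_empty
    rintro v ⟨h1, h2, h3⟩
    simp only [map_one, Module.End.one_apply] at h3
    exact h1.ne_zero (le_antisymm h3 h2)
  | mul_simple_right w s ih =>
    apply Set.Finite.subset ((ih.image (refl M s)).insert (root s))
    rintro v ⟨h1, h2, h3⟩
    by_cases hv : v = root s
    · exact Or.inl hv
    · refine Or.inr ⟨refl M s v, ⟨by simpa using h1.rep (cs.simple s), h1.refl_nonneg cs h2 hv, ?_⟩,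
        refl_refl M s v⟩
      rwa [rep_mul_apply, rep_simple] at h3

/-- The number of positive roots made negative bounds the length: for a right descent `s` of `g`,
those of `g` include `α_s` and the images under `s` of those of `g s`. -/
lemma length_le_ncard_inv (n : ℕ) : ∀ g : W, cs.length g = n → n ≤ (inv cs g).ncard := by
  induction n with
  | zero => intro g _; omega
  | succ n ih =>
    intro g hg
    obtain ⟨s, hs⟩ := cs.exists_rightDescent_of_ne_one (w := g) (by rintro rfl; simp at hg)
    have hs' := (cs.isRightDescent_iff).1 hs
    have h1 := ih (g * cs.simple s) (by omega)
    have hpos := rep_root_nonneg cs _ (g * cs.simple s) s rfl (by simp; omega)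
    have hsub : insert (root s) (refl M s '' inv cs (g * cs.simple s)) ⊆ inv cs g := by
      rintro v (rfl | ⟨u, ⟨h1, h2, h3⟩, rfl⟩)
      · exact ⟨isRoot_root cs s, root_nonneg s, rep_root_nonpos cs hs⟩
      · refine ⟨by simpa using h1.rep (cs.simple s), h1.refl_nonneg cs h2 ?_, ?_⟩
        · rintro rfl
          exact (h1.rep (g * cs.simple s)).ne_zero (le_antisymm h3 hpos)
        · rwa [rep_mul_apply, rep_simple] at h3
    have hnot : root s ∉ refl M s '' inv cs (g * cs.simple s) := by
      rintro ⟨u, ⟨h1, h2, h3⟩, hu⟩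
      have : u = - root s := by rw [← refl_root_self M, ← hu, refl_refl]
      have h4 := h2 s
      rw [this] at h4
      simp [root_apply_self] at h4
      linarith
    have hinj : Function.Injective (refl M s) := fun u v h => by
      rw [← refl_refl M s u, h, refl_refl]
    have h5 := Set.ncard_le_ncard hsub (inv_finite cs g)
    rw [Set.ncard_insert_of_notMem hnot ((inv_finite cs _).image _),
      Set.ncard_image_of_injective _ hinj] at h5
    omega

lemma finite_length_le [Finite I] (n : ℕ) : {g : W | cs.length g ≤ n}.Finite := by
  apply Set.Finite.subset ((List.finite_length_le I n).image cs.wordProd)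
  intro g hg
  obtain ⟨ω, h1, h2⟩ := cs.exists_isReduced g
  refine ⟨ω, ?_, h2.symm⟩
  have := h1.eq
  rw [← h2] at this
  simpa [← this] using hg

lemma finite_of_inv_ncard_le [Finite I] {H : Set W} (n : ℕ) (h : ∀ g ∈ H, (inv cs g).ncard ≤ n) :
    H.Finite :=
  (finite_length_le cs n).subset fun g hg => (length_le_ncard_inv cs _ g rfl).trans (h g hg)

/-- The order of the product of two distinct simple reflections is at least the entry of the Coxeter
matrix, and is infinite when this entry is `0`. -/
lemma pow_eq_one {s t : I} (h : s ≠ t) {k : ℕ} (hk : (cs.simple s * cs.simple t) ^ k = 1)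
    (hk0 : k ≠ 0) : M s t ≠ 0 ∧ M s t ≤ k := by
  have h1 := (refl_mul_pow_root M h k).1
  rw [← rep_simple cs, ← rep_simple cs, ← map_mul, ← map_pow, hk, map_one,
    Module.End.one_apply] at h1
  have h2 := DFunLike.congr_fun h1 s
  have h3 := DFunLike.congr_fun h1 t
  simp only [Finsupp.add_apply, Finsupp.smul_apply, root_apply_self, root_apply_ne h,
    root_apply_ne h.symm, smul_eq_mul] at h2 h3
  ring_nf at h2 h3
  have hm : M s t ≠ 0 := by
    intro hm
    rw [hm] at h3
    simp [cheb] at h3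
    omega
  refine ⟨hm, ?_⟩
  by_contra! hlt
  have hm1 := M.off_diagonal s t h
  have hs := sin_pos_of (show 2 ≤ M s t by omega)
  unfold cheb at h2 h3
  rw [if_neg hm] at h2 h3
  set θ := Real.pi / (M s t) with hθ
  have h3' : Real.sin ((k * 2 : ℕ) * θ) = 0 := by
    rcases div_eq_zero_iff.1 h3.symm with h | h
    · exact h
    · exact absurd h hs.ne'
  have e : ((1 + k * 2 : ℕ) : ℝ) * θ = (k * 2 : ℕ) * θ + θ := by push_cast; ring
  rw [e, Real.sin_add, h3', zero_mul, zero_add, mul_div_assoc, div_self hs.ne', mul_one] at h2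
  have hkm : (k : ℝ) < M s t := by exact_mod_cast hlt
  have hk1 : (0 : ℝ) < k := by positivity
  have hmm : (0 : ℝ) < M s t := by positivity
  have hp := Real.pi_pos
  have hθp : 0 < θ := by positivity
  have h6 : ((k * 2 : ℕ) : ℝ) * θ < 2 * Real.pi := by
    have : (M s t : ℝ) * θ = Real.pi := by rw [hθ]; field_simp
    push_cast
    nlinarith
  have h7 : (0 : ℝ) < ((k * 2 : ℕ) : ℝ) * θ := by positivity
  have := (Real.cos_eq_one_iff_of_lt_of_lt (by linarith) h6).1 h2.symm
  linarith

lemma simple_injective : Function.Injective cs.simple := by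
  intro s t hst
  by_contra h
  obtain ⟨h1, h2⟩ := pow_eq_one cs h (k := 1) (by simp [hst]) one_ne_zero
  have := M.off_diagonal s t h
  omega

/-- The geometric representation is faithful. -/
lemma rep_injective {g : W} (h : ∀ v, rep cs g v = v) : g = 1 := by
  by_contra hg
  obtain ⟨s, hs⟩ := cs.exists_rightDescent_of_ne_one hg
  have h1 := rep_root_nonpos cs hs
  rw [h] at h1
  exact (isRoot_root cs s).ne_zero (le_antisymm h1 (root_nonneg s))

/-- Every finite subgroup fixes a linear form whose stabilizer is finite: the average of a form
that is positive on all simple roots. -/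
theorem exists_finite_stab [Finite I] (F : Subgroup W) (hF : (F : Set W).Finite) :
    ∃ h : (I →₀ ℝ) →ₗ[ℝ] ℝ, F ≤ stab cs h ∧ (stab cs h : Set W).Finite := by
  classical
  have : Finite F := hF
  have := Fintype.ofFinite F
  set f : (I →₀ ℝ) →ₗ[ℝ] ℝ := Finsupp.linearCombination ℝ (fun _ => (1 : ℝ)) with hf
  have fpos : ∀ v : I →₀ ℝ, 0 ≤ v → v ≠ 0 → 0 < f v := by
    intro v hv hv0
    rw [hf, Finsupp.linearCombination_apply, Finsupp.sum]
    simp only [smul_eq_mul, mul_one]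
    apply Finset.sum_pos
    · intro i hi
      exact lt_of_le_of_ne (hv i) (Ne.symm (Finsupp.mem_support_iff.1 hi))
    · exact Finsupp.support_nonempty_iff.2 hv0
  set h : (I →₀ ℝ) →ₗ[ℝ] ℝ := ∑ g : F, f ∘ₗ rep cs (g : W) with hh
  have happ : ∀ v, h v = ∑ g : F, f (rep cs (g : W) v) := by
    intro v; simp [hh, LinearMap.sum_apply]
  set Z : Set (I →₀ ℝ) := ⋃ g : F, inv cs (g : W) with hZ
  have Zfin : Z.Finite := Set.finite_iUnion (fun g : F => inv_finite cs (g : W))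
  have hposZ : ∀ v, IsRoot cs v → 0 ≤ v → v ∉ Z → 0 < h v := by
    intro v h1 h2 h3
    rw [happ]
    refine Finset.sum_pos ?_ Finset.univ_nonempty
    intro g _
    have hr := h1.rep (g : W)
    refine fpos _ ?_ hr.ne_zero
    rcases hr.nonneg_or_nonpos with h | h
    · exact h
    · exact absurd (show v ∈ Z from Set.mem_iUnion.2 ⟨g, (⟨h1, h2, h⟩ : v ∈ inv cs (g : W))⟩) h3
  refine ⟨h, ?_, ?_⟩
  · intro g hg v
    rw [happ, happ]
    simp only [← rep_mul_apply]
    exact Fintype.sum_equiv (Equiv.mulRight (⟨g, hg⟩ : F)) _ _ (fun x => by simp)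
  · apply finite_of_inv_ncard_le cs (Z.ncard + Z.ncard)
    intro g hg
    -- If neither `v` nor `-g v` lies in `Z`, then `h` is positive at both, against `h (g v) = h v`.
    have hsub : inv cs g ⊆ Z ∪ (fun v => -(rep cs g⁻¹ v)) '' Z := by
      rintro v ⟨h1, h2, h3⟩
      by_contra hc
      rw [Set.mem_union, not_or] at hc
      have h4 := hposZ v h1 h2 hc.1
      have h5 := hposZ (-(rep cs g v)) (h1.rep g).neg (neg_nonneg.2 h3) (by
        intro hz
        exact hc.2 ⟨_, hz, by simp⟩)
      rw [map_neg, hg v] at h5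
      linarith
    calc (inv cs g).ncard ≤ _ := Set.ncard_le_ncard hsub (Zfin.union (Zfin.image _))
      _ ≤ _ := Set.ncard_union_le _ _
      _ ≤ _ := Nat.add_le_add_left (Set.ncard_image_le Zfin) _

/-- Every finite subgroup lies in a maximal finite subgroup, which is the stabilizer of a form:
choose a finite overgroup whose space of invariant forms has the smallest dimension. -/
theorem exists_maximal_finite [Finite I] (F₀ : Subgroup W) (hF : (F₀ : Set W).Finite) :
    ∃ h : (I →₀ ℝ) →ₗ[ℝ] ℝ, F₀ ≤ stab cs h ∧ (stab cs h : Set W).Finite ∧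
      ∀ G : Subgroup W, stab cs h ≤ G → (G : Set W).Finite → G ≤ stab cs h := by
  let fix (H : Subgroup W) : Submodule ℝ ((I →₀ ℝ) →ₗ[ℝ] ℝ) :=
    { carrier := {h | H ≤ stab cs h}
      add_mem' := by
        intro a b ha hb g hg v
        rw [LinearMap.add_apply, LinearMap.add_apply, ha hg, hb hg]
      zero_mem' := by intro g _ v; rfl
      smul_mem' := by
        intro c a ha g hg v
        rw [LinearMap.smul_apply, LinearMap.smul_apply, ha hg] }
  have hmem : ∀ H h, h ∈ fix H ↔ H ≤ stab cs h := fun _ _ => Iff.rfl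
  have hanti : ∀ H K, H ≤ K → fix K ≤ fix H := fun H K hHK h hh => hHK.trans hh
  let P : Set (Subgroup W) := {H | F₀ ≤ H ∧ (H : Set W).Finite}
  have hP : P.Nonempty := ⟨F₀, le_rfl, hF⟩
  obtain ⟨F₁, ⟨h1, h2⟩, h3⟩ : ∃ F₁ ∈ P, ∀ H ∈ P, Module.finrank ℝ (fix F₁) ≤ Module.finrank ℝ (fix H) := by
    obtain ⟨n, ⟨F₁, hF₁, rfl⟩, hn⟩ :=
      WellFounded.has_min (wellFounded_lt (α := ℕ)) ((fun H => Module.finrank ℝ (fix H)) '' P)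
        (hP.image _)
    exact ⟨F₁, hF₁, fun H hH => not_lt.1 (hn _ ⟨H, hH, rfl⟩)⟩
  obtain ⟨h, h4, h5⟩ := exists_finite_stab cs F₁ h2
  refine ⟨h, h1.trans h4, h5, ?_⟩
  intro G hG hGfin
  have e : fix G = fix F₁ :=
    Submodule.eq_of_le_of_finrank_le (hanti _ _ (h4.trans hG))
      (h3 G ⟨(h1.trans h4).trans hG, hGfin⟩)
  have : h ∈ fix G := by rw [e]; exact h4
  exact this

/-- An element of the visual subgroup of `J` changes only the coordinates in `J`. -/
lemma rep_closure_apply {J : Set I} {g : W} (hg : g ∈ Subgroup.closure (cs.simple '' J))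
    {j : I} (hj : j ∉ J) (v : I →₀ ℝ) : rep cs g v j = v j := by
  induction hg using Subgroup.closure_induction generalizing v with
  | mem x hx =>
    obtain ⟨i, hi, rfl⟩ := hx
    rw [rep_simple, refl_apply_ne]
    rintro rfl; exact hj hi
  | one => simp
  | mul x y _ _ hx hy => rw [rep_mul_apply, hx, hy]
  | inv x _ hx => rw [← hx, rep_apply_inv]

/-- A Coxeter system of a finitely generated group has finite rank. -/
lemma finite_of_fg (cs : CoxeterSystem M W) [Group.FG W] : Finite I := by
  obtain ⟨T, hT⟩ := Group.fg_def.1 (inferInstance : Group.FG W)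
  choose ω hω using (fun g => cs.wordProd_surjective g)
  set J : Set I := {i | ∃ g ∈ T, i ∈ ω g} with hJ
  have hJfin : J.Finite := by
    have : J = ⋃ g ∈ T, {i | i ∈ ω g} := by ext; simp [hJ]
    rw [this]
    exact T.finite_toSet.biUnion fun g _ => (ω g).finite_toSet
  have hword : ∀ l : List I, (∀ i ∈ l, i ∈ J) → cs.wordProd l ∈ Subgroup.closure (cs.simple '' J) := by
    intro l
    induction l with
    | nil => intro _; simp
    | cons i l ih =>
      intro hl
      rw [wordProd_cons]
      exact mul_mem (Subgroup.subset_closure ⟨i, hl i (by simp), rfl⟩)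
        (ih fun j hj => hl j (by simp [hj]))
  have htop : Subgroup.closure (cs.simple '' J) = ⊤ := by
    rw [eq_top_iff, ← hT, Subgroup.closure_le]
    intro g hg
    rw [← hω g]
    exact hword _ fun i hi => ⟨g, hg, hi⟩
  have : ∀ i, i ∈ J := by
    intro i
    by_contra hi
    have := rep_closure_apply cs (g := cs.simple i) (by rw [htop]; trivial) hi (root i)
    rw [rep_simple, refl_root_self, Finsupp.neg_apply, root_apply_self] at this
    linarith
  exact Set.finite_univ_iff.1 (hJfin.subset fun i _ => this i)

end Roots
end CoxGeom

/-! ### Dihedral bases in the geometric representation -/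

namespace CoxGeom

open CoxeterSystem

section Rank2

variable {I : Type*} {M : CoxeterMatrix I} (cs : CoxeterSystem M W)

lemma gram_bounds {p q : I} (h : 3 ≤ M p q) : gram M p q < 0 ∧ -1 < gram M p q := by
  unfold gram
  rw [if_neg (by omega)]
  have hm : (3 : ℝ) ≤ M p q := by exact_mod_cast h
  have hp := Real.pi_pos
  have h1 : Real.pi / M p q < Real.pi / 2 := by gcongr; linarith
  have h2 : 0 < Real.pi / M p q := by positivity
  constructor
  · have := Real.cos_pos_of_mem_Ioo ⟨by linarith, h1⟩
    linarith
  · have := Real.cos_lt_cos_of_nonneg_of_le_pi_div_two le_rfl h1.le h2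
    rw [Real.cos_zero] at this
    linarith

lemma gram_eq_zero {p q : I} (h : M p q = 2) : gram M p q = 0 := by
  simp [gram, h]

lemma cheb_succ_self {p q : I} (hpq : p ≠ q) (h0 : M p q ≠ 0) : cheb (M p q) (M p q + 1) = -1 := by
  have h1 := M.off_diagonal p q hpq
  obtain ⟨k, hk⟩ : ∃ k, M p q = k + 1 := ⟨M p q - 1, by omega⟩
  have h2 := cheb_add_two M hpq k
  have h3 := cheb_self (M p q)
  have h4 := cheb_pred (m := M p q) (by omega)
  rw [hk, Nat.add_sub_cancel] at h4
  rw [hk] at h3 h2 ⊢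
  rw [h2, h3, h4]
  ring

/-- The longest element of a finite dihedral visual subgroup negates the two simple roots, up to
a swap when the order of the product is odd. -/
lemma exists_longest {p q : I} (hpq : p ≠ q) (h0 : M p q ≠ 0) : ∃ w : W,
    (rep cs w (root p) = -root p ∧ rep cs w (root q) = -root q) ∨
    (rep cs w (root p) = -root q ∧ rep cs w (root q) = -root p) := by
  have h1 := rep_alternating cs hpq (M p q)
  have h2 := rep_alternating cs hpq.symm (M q p)
  have e := cs.wordProd_braidWord_eq p q
  unfold braidWord at e
  rw [← e, M.symmetric q p] at h2
  rw [cheb_succ_self hpq h0, cheb_self] at h1 h2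
  refine ⟨cs.wordProd (alternatingWord p q (M p q)), ?_⟩
  by_cases hev : Even (M p q)
  · rw [if_pos hev] at h1 h2
    left
    exact ⟨by rw [h1]; module, by rw [h2]; module⟩
  · rw [if_neg hev] at h1 h2
    right
    exact ⟨by rw [h1]; module, by rw [h2]; module⟩

lemma exists_longest_odd {p q : I} (hpq : p ≠ q) (h0 : Odd (M p q)) : ∃ w : W,
    (rep cs w (root p) = -root q ∧ rep cs w (root q) = -root p) := by
  have h1 := rep_alternating cs hpq (M p q)
  have h2 := rep_alternating cs hpq.symm (M q p)
  have e := cs.wordProd_braidWord_eq p q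
  unfold braidWord at e
  rw [← e, M.symmetric q p] at h2
  rw [cheb_succ_self hpq h0.pos.ne', cheb_self, if_neg (Nat.not_even_iff_odd.2 h0)] at h1 h2
  exact ⟨_, by rw [h1]; module, by rw [h2]; module⟩

lemma eq_two {p q : I} (hpq : p ≠ q) {v : I →₀ ℝ} (hv : ∀ j, j ≠ p → j ≠ q → v j = 0) :
    v = v p • root p + v q • root q := by
  ext j
  by_cases h1 : j = p
  · subst h1; simp [root_apply_self, root_apply_ne hpq]
  by_cases h2 : j = q
  · subst h2; simp [root_apply_self, root_apply_ne hpq.symm]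
  simp [root_apply_ne h1, root_apply_ne h2, hv j h1 h2]

lemma form_two {p q : I} (a b : ℝ) : form M (a • root p + b • root q) (a • root p + b • root q) =
    a ^ 2 + b ^ 2 + 2 * gram M p q * a * b := by
  simp only [map_add, map_smul, LinearMap.add_apply, LinearMap.smul_apply, form_root_root,
    gram_self, gram_symm M q p, smul_eq_mul]
  ring

/-- The positive roots of a finite dihedral visual subgroup are finite in number. -/
lemma finite_posRoots_two {p q : I} (hpq : p ≠ q) (h0 : M p q ≠ 0) :
    {v | IsRoot cs v ∧ 0 ≤ v ∧ ∀ j, j ≠ p → j ≠ q → v j = 0}.Finite := by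
  obtain ⟨w, hw⟩ := exists_longest cs hpq h0
  refine (inv_finite cs w).subset ?_
  rintro v ⟨h1, h2, h3⟩
  refine ⟨h1, h2, ?_⟩
  have hp := h2 p
  have hq := h2 q
  rw [eq_two hpq h3, map_add, map_smul, map_smul]
  intro j
  have hp' := root_nonneg p j
  have hq' := root_nonneg q j
  simp only [Finsupp.coe_zero, Pi.zero_apply] at hp hq hp' hq'
  rcases hw with ⟨e1, e2⟩ | ⟨e1, e2⟩ <;> rw [e1, e2] <;>
    simp only [Finsupp.add_apply, Finsupp.smul_apply, Finsupp.neg_apply, smul_eq_mul,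
      Finsupp.coe_zero, Pi.zero_apply] <;> nlinarith [mul_nonneg hp hp', mul_nonneg hp hq', mul_nonneg hq hp', mul_nonneg hq hq']

/-- The hypothesis on a pair of simple reflections which holds when it is a base: a third one
generating a finite group together with the pair commutes with both. -/
def PairBase (cs : CoxeterSystem M W) (p q : I) : Prop :=
  ∀ s, s ≠ p → s ≠ q → (Subgroup.closure (cs.simple '' {p, q, s}) : Set W).Finite →
    M p s = 2 ∧ M q s = 2

variable {cs} in
/-- Over a finite dihedral pair satisfying `PairBase`, an element permuting the two simple roots fixes
both, because its right descents commute with the pair. -/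
theorem PairBase.fix [Finite I] {p q : I} (hb : PairBase cs p q) (hpq : p ≠ q) (h0 : M p q ≠ 0)
    (n : ℕ) : ∀ g : W, cs.length g = n →
    ((rep cs g (root p) = root p ∧ rep cs g (root q) = root q) ∨
      (rep cs g (root p) = root q ∧ rep cs g (root q) = root p)) →
    rep cs g (root p) = root p ∧ rep cs g (root q) = root q := by
  induction n with
  | zero =>
    intro g hg _
    rw [cs.length_eq_zero_iff] at hg
    simp [hg]
  | succ n ih =>
    intro g hg hperm
    obtain ⟨s, hs⟩ := cs.exists_rightDescent_of_ne_one (w := g) (by rintro rfl; simp at hg)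
    have hneg := rep_root_nonpos cs hs
    have hsp : s ≠ p := by
      rintro rfl
      rcases hperm with ⟨h, _⟩ | ⟨h, _⟩ <;> rw [h] at hneg <;>
        exact (isRoot_root cs _).ne_zero (le_antisymm hneg (root_nonneg _))
    have hsq : s ≠ q := by
      rintro rfl
      rcases hperm with ⟨_, h⟩ | ⟨_, h⟩ <;> rw [h] at hneg <;>
        exact (isRoot_root cs _).ne_zero (le_antisymm hneg (root_nonneg _))
    have hout : ∀ j, j ≠ p → j ≠ q →
        rep cs g (root p) j = 0 ∧ rep cs g (root q) j = 0 := by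
      intro j h1 h2
      rcases hperm with ⟨e1, e2⟩ | ⟨e1, e2⟩ <;> rw [e1, e2] <;>
        simp [root_apply_ne h1, root_apply_ne h2]
    have hex : ∃ j, j ≠ p ∧ j ≠ q ∧ rep cs g (root s) j < 0 := by
      by_contra! hcon
      have hz : ∀ j, j ≠ p → j ≠ q → rep cs g (root s) j = 0 := fun j h1 h2 =>
        le_antisymm (hneg j) (hcon j h1 h2)
      have e := eq_two hpq hz
      set x := rep cs g (root s) p
      set y := rep cs g (root s) q
      rcases hperm with ⟨e1, e2⟩ | ⟨e1, e2⟩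
      · have : root s = x • root p + y • root q := by
          rw [← rep_inv_apply cs g (root s), e, map_add, map_smul, map_smul]
          rw [show rep cs g⁻¹ (root p) = root p by conv_lhs => rw [← e1, rep_inv_apply],
            show rep cs g⁻¹ (root q) = root q by conv_lhs => rw [← e2, rep_inv_apply]]
        have := DFunLike.congr_fun this s
        simp [root_apply_self, root_apply_ne hsp, root_apply_ne hsq] at this
      · have : root s = x • root q + y • root p := by
          rw [← rep_inv_apply cs g (root s), e, map_add, map_smul, map_smul]
          rw [show rep cs g⁻¹ (root p) = root q by rw [← e2, rep_inv_apply],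
            show rep cs g⁻¹ (root q) = root p by rw [← e1, rep_inv_apply]]
        have := DFunLike.congr_fun this s
        simp [root_apply_self, root_apply_ne hsp, root_apply_ne hsq] at this
    obtain ⟨j₀, hj1, hj2, hj3⟩ := hex
    -- A positive root supported on `{p, q, s}` either is supported on `{p, q}` or is made negative
    -- by `g`, so these roots are finite in number and the visual subgroup of `{p, q, s}` is finite.
    set R : Set (I →₀ ℝ) := inv cs g ∪ {v | IsRoot cs v ∧ 0 ≤ v ∧ ∀ j, j ≠ p → j ≠ q → v j = 0}
    have hR : R.Finite := (inv_finite cs g).union (finite_posRoots_two cs hpq h0)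
    have hsub : ∀ v, IsRoot cs v → 0 ≤ v → (∀ j ∉ ({p, q, s} : Set I), v j = 0) → v ∈ R := by
      intro v h1 h2 h3
      by_cases hvs : v s = 0
      · refine Or.inr ⟨h1, h2, fun j hj hj' => ?_⟩
        by_cases hjs : j = s
        · rw [hjs, hvs]
        · exact h3 j (by simp [hj, hj', hjs])
      · refine Or.inl ⟨h1, h2, ?_⟩
        have hvs' : 0 < v s := lt_of_le_of_ne (h2 s) (Ne.symm hvs)
        have e : v = v p • root p + v q • root q + v s • root s := by
          ext j
          by_cases c1 : j = p
          · subst c1; simp [root_apply_self, root_apply_ne hpq, root_apply_ne hsp.symm]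
          by_cases c2 : j = q
          · subst c2; simp [root_apply_self, root_apply_ne hpq.symm, root_apply_ne hsq.symm]
          by_cases c3 : j = s
          · subst c3; simp [root_apply_self, root_apply_ne c1, root_apply_ne c2]
          simp [root_apply_ne c1, root_apply_ne c2, root_apply_ne c3, h3 j (by simp [c1, c2, c3])]
        refine (h1.rep g).nonpos_of_neg (j := j₀) ?_
        rw [e]
        simp only [map_add, map_smul, Finsupp.add_apply, Finsupp.smul_apply, smul_eq_mul,
          (hout j₀ hj1 hj2).1, (hout j₀ hj1 hj2).2]
        nlinarith
    have hfin : (Subgroup.closure (cs.simple '' {p, q, s}) : Set W).Finite := by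
      apply finite_of_inv_ncard_le cs R.ncard
      intro h hh
      refine Set.ncard_le_ncard ?_ hR
      rintro v ⟨h1, h2, h3⟩
      refine hsub v h1 h2 fun j hj => le_antisymm ?_ (h2 j)
      rw [← rep_closure_apply cs hh hj]
      exact h3 j
    obtain ⟨c1, c2⟩ := hb s hsp hsq hfin
    have d1 : refl M s (root p) = root p := by
      rw [refl_root, gram_symm, gram_eq_zero c1]; simp
    have d2 : refl M s (root q) = root q := by
      rw [refl_root, gram_symm, gram_eq_zero c2]; simp
    have f : ∀ v, refl M s v = v → rep cs (g * cs.simple s) v = rep cs g v := by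
      intro v hv
      rw [rep_mul_apply, rep_simple, hv]
    have := ih (g * cs.simple s) (by have := (cs.isRightDescent_iff).1 hs; omega)
      (by rwa [f _ d1, f _ d2])
    rwa [f _ d1, f _ d2] at this

/-- Conjugation of simple reflections is detected, up to sign, on the simple roots. -/
lemma rep_root_of_conj {p q : I} {g : W} (h : g * cs.simple p = cs.simple q * g) :
    rep cs g (root p) = root q ∨ rep cs g (root p) = -root q := by
  have h1 : rep cs (g * cs.simple p) (root p) = rep cs (cs.simple q * g) (root p) := by rw [h]
  rw [rep_mul_apply, rep_mul_apply, rep_simple, rep_simple, refl_root_self, map_neg,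
    refl_apply] at h1
  set u := rep cs g (root p) with hu
  set c := form M (root q) u
  have h2 : u = c • root q := by
    have : (2 : ℝ) • u = (2 : ℝ) • (c • root q) := by
      have : (2 * c) • root q = u - -u := by rw [h1]; module
      rw [smul_smul, this]; module
    exact smul_right_injective _ two_ne_zero this
  have h3 : form M u u = 1 := by rw [hu, form_rep, form_root_root, gram_self]
  rw [h2] at h3
  simp only [map_smul, LinearMap.smul_apply, form_root_root, gram_self, smul_eq_mul] at h3
  have h4 : (c - 1) * (c + 1) = 0 := by linarith
  rcases mul_eq_zero.1 h4 with h | h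
  · left; rw [h2, show c = 1 by linarith, one_smul]
  · right; rw [h2, show c = -1 by linarith]; simp

lemma conj_of_rep_root {p q : I} {g : W} (h : rep cs g (root p) = root q) :
    g * cs.simple p = cs.simple q * g := by
  rw [← inv_mul_eq_one]
  apply rep_injective cs
  intro v
  have : rep cs (g * cs.simple p) v = rep cs (cs.simple q * g) v := by
    rw [rep_mul_apply, rep_mul_apply, rep_simple, rep_simple, refl_apply, refl_apply, map_sub,
      map_smul, h, ← h, form_rep]
  rw [rep_mul_apply, ← this, rep_inv_apply]

variable {cs} in
/-- Over a dihedral pair of odd type satisfying `PairBase`, the centralizer of the pair fixes its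
simple roots. The signs on the two roots agree by invariance of the form; if both were negative,
multiplying by the longest element of the pair would give an element swapping the roots. -/
lemma PairBase.fix_of_commute [Finite I] {p q : I} (hb : PairBase cs p q) (hpq : p ≠ q)
    (hodd : Odd (M p q)) {g : W} (h1 : g * cs.simple p = cs.simple p * g)
    (h2 : g * cs.simple q = cs.simple q * g) : rep cs g (root p) = root p := by
  have hm1 := M.off_diagonal p q hpq
  have hm : 3 ≤ M p q := by obtain ⟨k, hk⟩ := hodd; omega
  have hg := (gram_bounds hm).1
  have hf := form_rep cs g (root p) (root q)
  rw [form_root_root] at hf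
  rcases rep_root_of_conj cs h1 with e1 | e1
  · exact e1
  rcases rep_root_of_conj cs h2 with e2 | e2
  · rw [e1, e2, map_neg, LinearMap.neg_apply, form_root_root] at hf
    linarith
  obtain ⟨w, hw1, hw2⟩ := exists_longest_odd cs hpq hodd
  have := (hb.fix hpq (by omega) _ (g * w) rfl (Or.inr ⟨by simp [hw1, e2],
    by simp [hw2, e1]⟩)).1
  rw [rep_mul_apply, hw1, map_neg, e2, neg_neg] at this
  exact absurd (root_injective this).symm hpq

/-- If `g` inverts the rotation `ρ = (s_p s_q) ^ 2`, it preserves the plane of `α_p` and `α_q`. Indeed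
`g` maps the image of `ρ - 1` into that of `ρ⁻¹ - 1`, and both are this plane. -/
lemma rep_plane {p q : I} (hm : 3 ≤ M p q) {g : W}
    (hg : g * (cs.simple p * cs.simple q) ^ 2 = ((cs.simple p * cs.simple q) ^ 2)⁻¹ * g) :
    ∀ j, j ≠ p → j ≠ q → rep cs g (root p) j = 0 ∧ rep cs g (root q) j = 0 := by
  obtain ⟨c1, c2⟩ := gram_bounds hm
  set c := gram M p q with hc
  set ρ := (cs.simple p * cs.simple q) ^ 2 with hρ
  -- `T` is the trace of `ρ` on the plane. There `(ρ - 1) (ρ - (T - 1)) = T - 2` by Cayley-Hamilton,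
  -- which exhibits both simple roots in the image of `ρ - 1`.
  set T : ℝ := (4 * c ^ 2 - 2) ^ 2 - 2 with hT
  have hT2 : T - 2 ≠ 0 := by
    have e : T - 2 = -(16 * c ^ 2 * (1 - c) * (1 + c)) := by rw [hT]; ring
    have := sq_pos_of_neg c1
    have h1 : 0 < 1 - c := by linarith
    have h2 : 0 < 1 + c := by linarith
    rw [e, neg_ne_zero]
    positivity
  have hρa : ∀ v, rep cs ρ v = refl M p (refl M q (refl M p (refl M q v))) := by
    intro v; rw [hρ, pow_two]; simp
  have hmem : ρ⁻¹ ∈ Subgroup.closure (cs.simple '' {p, q}) :=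
    inv_mem (pow_mem (mul_mem (Subgroup.subset_closure (Set.mem_image_of_mem _ (by simp)))
      (Subgroup.subset_closure (Set.mem_image_of_mem _ (by simp)))) 2)
  have key : ∀ u j, j ≠ p → j ≠ q → rep cs g (rep cs ρ u - u) j = 0 := by
    intro u j h1 h2
    rw [map_sub, ← rep_mul_apply, hg, rep_mul_apply, Finsupp.sub_apply,
      rep_closure_apply cs hmem (by simp [h1, h2]), sub_self]
  have hqp : gram M q p = c := gram_symm M q p
  have ep : (T - 2) • root p = rep cs ρ (rep cs ρ (root p) - (T - 1) • root p) -
      (rep cs ρ (root p) - (T - 1) • root p) := by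
    simp only [hρa, map_sub, map_smul, refl_root, gram_self, ← hc, hqp]
    rw [hT]
    module
  have eq : (T - 2) • root q = rep cs ρ (rep cs ρ (root q) - (T - 1) • root q) -
      (rep cs ρ (root q) - (T - 1) • root q) := by
    simp only [hρa, map_sub, map_smul, refl_root, gram_self, ← hc, hqp]
    rw [hT]
    module
  intro j h1 h2
  have k1 := key (rep cs ρ (root p) - (T - 1) • root p) j h1 h2
  have k2 := key (rep cs ρ (root q) - (T - 1) • root q) j h1 h2
  rw [← ep, map_smul, Finsupp.smul_apply, smul_eq_mul] at k1
  rw [← eq, map_smul, Finsupp.smul_apply, smul_eq_mul] at k2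
  exact ⟨(mul_eq_zero.1 k1).resolve_left hT2, (mul_eq_zero.1 k2).resolve_left hT2⟩

end Rank2
end CoxGeom

namespace CoxGeom

open CoxeterSystem
open scoped commutatorElement


/-! ### Algebra in a dihedral group -/

section Dihedral

variable {a b : W}

lemma inv_ab (ha : a * a = 1) (hb : b * b = 1) : (a * b)⁻¹ = b * a := by
  rw [mul_inv_rev, inv_eq_of_mul_eq_one_left ha, inv_eq_of_mul_eq_one_left hb]

lemma a_mul_zpow (ha : a * a = 1) (hb : b * b = 1) (i : ℤ) :
    a * (a * b) ^ i = (a * b) ^ (-i) * a := by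
  have h : SemiconjBy a (a * b) (a * b)⁻¹ := by
    rw [SemiconjBy, inv_ab ha hb, ← mul_assoc, ha, mul_assoc, ha, one_mul, mul_one]
  have := h.zpow_right i
  rw [inv_zpow'] at this
  exact this

lemma b_eq (ha : a * a = 1) (hb : b * b = 1) : b = (a * b) ^ (-1 : ℤ) * a := by
  rw [zpow_neg_one, inv_ab ha hb, mul_assoc, ha, mul_one]

lemma zpow_a_mul_zpow (ha : a * a = 1) (hb : b * b = 1) (i j : ℤ) :
    (a * b) ^ i * a * (a * b) ^ j = (a * b) ^ (i - j) * a := by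
  rw [mul_assoc, a_mul_zpow ha hb, ← mul_assoc, ← zpow_add, sub_eq_add_neg]

lemma zpow_a_mul_zpow_a (ha : a * a = 1) (hb : b * b = 1) (i j : ℤ) :
    (a * b) ^ i * a * ((a * b) ^ j * a) = (a * b) ^ (i - j) := by
  rw [← mul_assoc, zpow_a_mul_zpow ha hb, mul_assoc, ha, mul_one]

lemma zpow_a_inv (ha : a * a = 1) (hb : b * b = 1) (i : ℤ) :
    ((a * b) ^ i * a)⁻¹ = (a * b) ^ i * a := by
  rw [inv_eq_iff_mul_eq_one, zpow_a_mul_zpow_a ha hb, sub_self, zpow_zero]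

lemma mem_closure_pair' (ha : a * a = 1) (hb : b * b = 1) {g : W}
    (hg : g ∈ Subgroup.closure {a, b}) : ∃ i : ℤ, g = (a * b) ^ i ∨ g = (a * b) ^ i * a := by
  induction hg using Subgroup.closure_induction with
  | mem x hx =>
    rcases hx with rfl | rfl
    · exact ⟨0, Or.inr (by simp)⟩
    · exact ⟨-1, Or.inr (b_eq ha hb)⟩
  | one => exact ⟨0, Or.inl (by simp)⟩
  | mul x y _ _ hx hy =>
    obtain ⟨i, rfl | rfl⟩ := hx <;> obtain ⟨j, rfl | rfl⟩ := hy
    · exact ⟨i + j, Or.inl (zpow_add _ _ _).symm⟩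
    · exact ⟨i + j, Or.inr (by rw [zpow_add, mul_assoc])⟩
    · exact ⟨i - j, Or.inr (zpow_a_mul_zpow ha hb i j)⟩
    · exact ⟨i - j, Or.inl (zpow_a_mul_zpow_a ha hb i j)⟩
  | inv x _ hx =>
    obtain ⟨i, rfl | rfl⟩ := hx
    · exact ⟨-i, Or.inl (zpow_neg _ _).symm⟩
    · exact ⟨i, Or.inr (zpow_a_inv ha hb i)⟩

lemma finite_closure_pair (ha : a * a = 1) (hb : b * b = 1) {n : ℕ} (hn : n ≠ 0)
    (h : (a * b) ^ n = 1) : (Subgroup.closure {a, b} : Set W).Finite := by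
  have hfin : (Subgroup.zpowers (a * b) : Set W).Finite := by
    have : IsOfFinOrder (a * b) := isOfFinOrder_iff_pow_eq_one.2 ⟨n, Nat.pos_of_ne_zero hn, h⟩
    exact finite_zpowers.2 this
  refine (hfin.union (hfin.image (· * a))).subset ?_
  intro g hg
  obtain ⟨i, rfl | rfl⟩ := mem_closure_pair' ha hb hg
  · exact Or.inl ⟨i, rfl⟩
  · exact Or.inr ⟨_, ⟨i, rfl⟩, rfl⟩

lemma commutator_closure_pair (ha : a * a = 1) (hb : b * b = 1) :
    ⁅Subgroup.closure {a, b}, Subgroup.closure {a, b}⁆ = Subgroup.zpowers ((a * b) ^ 2) := by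
  have hmem : ∀ i : ℤ, (a * b) ^ (2 * i) ∈ Subgroup.zpowers ((a * b) ^ 2) := fun i =>
    ⟨i, by simp [zpow_mul]⟩
  apply le_antisymm
  · rw [Subgroup.commutator_le]
    intro g hg h hh
    obtain ⟨i, hi⟩ := mem_closure_pair' ha hb hg
    obtain ⟨j, hj⟩ := mem_closure_pair' ha hb hh
    rw [commutatorElement_def]
    rcases hi with rfl | rfl <;> rcases hj with rfl | rfl
    · rw [← zpow_neg, ← zpow_neg, ← zpow_add, ← zpow_add, ← zpow_add]
      convert hmem 0 using 2; ring
    · rw [zpow_a_inv ha hb, ← zpow_neg, ← mul_assoc ((a * b) ^ i), ← zpow_add,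
        zpow_a_mul_zpow ha hb, zpow_a_mul_zpow_a ha hb]
      convert hmem i using 2; ring
    · rw [zpow_a_inv ha hb, zpow_a_mul_zpow ha hb, zpow_a_mul_zpow_a ha hb, ← zpow_neg, ← zpow_add]
      convert hmem (-j) using 2; ring
    · rw [zpow_a_inv ha hb, zpow_a_inv ha hb, zpow_a_mul_zpow_a ha hb, mul_assoc,
        zpow_a_mul_zpow_a ha hb, ← zpow_add]
      convert hmem (i - j) using 2; ring
  · rw [Subgroup.zpowers_le]
    have : (a * b) ^ 2 = ⁅a, b⁆ := by
      rw [commutatorElement_def, inv_eq_of_mul_eq_one_left ha, inv_eq_of_mul_eq_one_left hb, pow_two,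
        mul_assoc (a * b)]
    rw [this]
    exact Subgroup.commutator_mem_commutator (Subgroup.subset_closure (by simp))
      (Subgroup.subset_closure (by simp))

/-- Involutions `g = d v` inverting `(ab) ^ 2`, where `d` lies in the dihedral group `⟨a, b⟩` of
order `2 (4 k + 2)` and `v` centralizes it, are conjugate by a power of `(ab) ^ 2` to `b (z v)` or
`a (z v)`, for `z` the central involution of `⟨a, b⟩`. -/
lemma dihedral_conj (ha : a * a = 1) (hb : b * b = 1) {k : ℕ} (hab : (a * b) ^ (4 * k + 2) = 1)
    (h4 : (a * b) ^ 4 ≠ 1) {d v g : W} (hd : d ∈ Subgroup.closure {a, b}) (hva : Commute v a)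
    (hvb : Commute v b) (hgdv : g = d * v) (hgρ : g * (a * b) ^ 2 = ((a * b) ^ 2)⁻¹ * g) :
    ∃ l : ℤ, (((a * b) ^ 2) ^ l)⁻¹ * g * ((a * b) ^ 2) ^ l = b * ((a * b) ^ (2 * k + 1) * v) ∨
      (((a * b) ^ 2) ^ l)⁻¹ * g * ((a * b) ^ 2) ^ l = a * ((a * b) ^ (2 * k + 1) * v) := by
  have hvr : Commute v (a * b) := hva.mul_right hvb
  have hN : ∀ i : ℤ, (a * b) ^ ((4 * k + 2 : ℤ) * i) = 1 := by
    intro i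
    rw [zpow_mul]
    have : (a * b) ^ (4 * k + 2 : ℤ) = 1 := by exact_mod_cast hab
    rw [this, one_zpow]
  obtain ⟨j, rfl | rfl⟩ := mem_closure_pair' ha hb hd
  · exfalso
    have hc : Commute g ((a * b) ^ 2) := by
      rw [hgdv]
      exact (((Commute.refl (a * b)).zpow_left j).mul_left hvr).pow_right 2
    rw [hc.eq, mul_left_inj, eq_inv_iff_mul_eq_one, ← pow_add] at hgρ
    exact h4 hgρ
  · have hconj : ∀ l : ℤ, (((a * b) ^ 2) ^ l)⁻¹ * g * ((a * b) ^ 2) ^ l =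
        (a * b) ^ (j - 4 * l) * a * v := by
      intro l
      have e : ((a * b) ^ 2) ^ l = (a * b) ^ (2 * l) := by simp [zpow_mul]
      rw [e, ← zpow_neg, hgdv, mul_assoc, mul_assoc _ v, (hvr.zpow_right _).eq, ← mul_assoc _ _ v,
        zpow_a_mul_zpow ha hb, ← mul_assoc, ← mul_assoc, ← zpow_add]
      congr 3; ring
    obtain ⟨i, hi | hi⟩ := Int.even_or_odd' j
    -- Modulo `4 k + 2`, the exponent `l` must solve `4 l = j + 2 k + 2`, resp. `4 l = j + 2 k + 1`;
    -- the right side is even, and `4 (k + 1)` is congruent to `2`.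
    · refine ⟨(i - k) * (k + 1), Or.inl ?_⟩
      rw [hconj, hi]
      have e1 : b * ((a * b) ^ (2 * k + 1) * v) = (a * b) ^ (-1 - (2 * k + 1) : ℤ) * a * v := by
        rw [← mul_assoc, ← zpow_a_mul_zpow ha hb, ← b_eq ha hb]
        norm_cast
      rw [e1]
      have e2 : (2 * i - 4 * ((i - k) * (k + 1)) : ℤ) =
          (-1 - (2 * k + 1)) + (4 * k + 2) * (1 - (i - k)) := by ring
      rw [e2, zpow_add, hN, mul_one]
    · refine ⟨(i - k) * (k + 1), Or.inr ?_⟩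
      rw [hconj, hi]
      have e1 : a * ((a * b) ^ (2 * k + 1) * v) = (a * b) ^ (-(2 * k + 1) : ℤ) * a * v := by
        rw [← mul_assoc, ← a_mul_zpow ha hb]
        norm_cast
      rw [e1]
      have e2 : (2 * i + 1 - 4 * ((i - k) * (k + 1)) : ℤ) =
          (-(2 * k + 1)) + (4 * k + 2) * (1 - (i - k)) := by ring
      rw [e2, zpow_add, hN, mul_one]

end Dihedral

/-! ### Elements preserving the plane of a dihedral base -/

section Structure

/-- A nonnegative invertible `2 × 2` matrix with nonnegative inverse is monomial. The last two
hypotheses normalize its columns. -/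
lemma monomial_of_inverse {α β γ δ a b c e G : ℝ} (yp1 : 0 ≤ α) (yp2 : 0 ≤ β) (yq1 : 0 ≤ γ)
    (yq2 : 0 ≤ δ) (xp1 : 0 ≤ a) (xp2 : 0 ≤ b) (xq1 : 0 ≤ c) (xq2 : 0 ≤ e)
    (n3 : a ^ 2 + b ^ 2 + 2 * G * a * b = 1) (n4 : c ^ 2 + e ^ 2 + 2 * G * c * e = 1)
    (i1p : 1 = a * α + b * γ) (i1q : 0 = a * β + b * δ) (i2p : 0 = c * α + e * γ)
    (i3p : 1 = α * a + β * c) (i3q : 0 = α * b + β * e) :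
    (a = 0 ∧ b = 1 ∧ c = 1 ∧ e = 0) ∨ (a = 1 ∧ b = 0 ∧ c = 0 ∧ e = 1) := by
  have one : ∀ t : ℝ, 0 ≤ t → t ^ 2 = 1 → t = 1 := by intro t h1 h2; nlinarith
  have split : ∀ s t : ℝ, 0 ≤ s → 0 ≤ t → 0 = s + t → s = 0 ∧ t = 0 := by
    intro s t h1 h2 h3; constructor <;> linarith
  obtain ⟨z1, z2⟩ := split _ _ (mul_nonneg yp1 xp2) (mul_nonneg yp2 xq2) i3q
  obtain ⟨z5, z6⟩ := split _ _ (mul_nonneg xp1 yp2) (mul_nonneg xp2 yq2) i1q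
  obtain ⟨z7, z8⟩ := split _ _ (mul_nonneg xq1 yp1) (mul_nonneg xq2 yq1) i2p
  rcases mul_eq_zero.1 z1 with h | h
  · left
    have β0 : β ≠ 0 := by intro h'; rw [h, h'] at i3p; simp at i3p
    have e0 : e = 0 := (mul_eq_zero.1 z2).resolve_left β0
    have a0 : a = 0 := (mul_eq_zero.1 z5).resolve_right β0
    exact ⟨a0, one b xp2 (by rw [a0] at n3; linarith), one c xq1 (by rw [e0] at n4; linarith), e0⟩
  · right
    have α0 : α ≠ 0 := by intro h'; rw [h, h'] at i1p; simp at i1p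
    have c0 : c = 0 := (mul_eq_zero.1 z7).resolve_right α0
    exact ⟨one a xp1 (by rw [h] at n3; linarith), h, c0, one e xq2 (by rw [c0] at n4; linarith)⟩

variable {I : Type*} {M : CoxeterMatrix I} {cs : CoxeterSystem M W}

/-- Over a dihedral base, an element inverting `(s_p s_q) ^ 2` can be corrected by an element of the
base subgroup so as to fix both simple roots: take the shortest coset representative. -/
theorem PairBase.exists_fix [Finite I] {p q : I} (hb : PairBase cs p q) (hpq : p ≠ q)
    (hm : 3 ≤ M p q) {g : W}
    (hg : g * (cs.simple p * cs.simple q) ^ 2 = ((cs.simple p * cs.simple q) ^ 2)⁻¹ * g) :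
    ∃ d ∈ Subgroup.closure {cs.simple p, cs.simple q},
      rep cs (d * g) (root p) = root p ∧ rep cs (d * g) (root q) = root q := by
  set H := Subgroup.closure {cs.simple p, cs.simple q} with hH
  have hHJ : H = Subgroup.closure (cs.simple '' {p, q}) := by rw [hH, Set.image_pair]
  have hg' : g⁻¹ * (cs.simple p * cs.simple q) ^ 2 =
      ((cs.simple p * cs.simple q) ^ 2)⁻¹ * g⁻¹ := by
    rw [inv_mul_eq_iff_eq_mul, ← mul_assoc, eq_mul_inv_iff_mul_eq, eq_mul_inv_iff_mul_eq, mul_assoc,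
      hg, mul_inv_cancel_left]
  have P' := rep_plane cs hm hg'
  have P := rep_plane cs hm hg
  -- For `x = d g` of minimal length in its coset, `x⁻¹` sends `α_p` and `α_q` to positive roots;
  -- then so does `x`, and the matrix of `x` on the plane is monomial.
  obtain ⟨⟨d, hd⟩, -, hmin⟩ := (measure fun d : H => cs.length (d * g)).wf.has_min Set.univ
    ⟨1, trivial⟩
  have hmin' : ∀ d' ∈ H, cs.length (d * g) ≤ cs.length (d' * g) := fun d' hd' =>
    not_lt.1 (hmin ⟨d', hd'⟩ trivial)
  set x := d * g with hx
  have hyx : ∀ v, rep cs x⁻¹ (rep cs x v) = v := fun v => rep_inv_apply cs x v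
  have hxy : ∀ v, rep cs x (rep cs x⁻¹ v) = v := fun v => rep_apply_inv cs x v
  have hypos : ∀ s, s ∈ ({p, q} : Set I) → 0 ≤ rep cs x⁻¹ (root s) := by
    intro s hs
    refine rep_root_nonneg cs _ x⁻¹ s rfl ?_
    have e : cs.length (x⁻¹ * cs.simple s) = cs.length (cs.simple s * x) := by
      rw [← cs.length_inv, mul_inv_rev, inv_inv, cs.inv_simple]
    rw [e, cs.length_inv]
    refine lt_of_le_of_ne ?_ (cs.length_simple_mul_ne x s).symm
    rw [hx, ← mul_assoc]
    exact hmin' _ (mul_mem (hHJ ▸ Subgroup.subset_closure ⟨s, hs, rfl⟩) hd)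
  have hxU : ∀ j, j ≠ p → j ≠ q → rep cs x (root p) j = 0 ∧ rep cs x (root q) j = 0 := by
    intro j h1 h2
    rw [hHJ] at hd
    rw [hx, rep_mul_apply, rep_mul_apply, rep_closure_apply cs hd (by simp [h1, h2]),
      rep_closure_apply cs hd (by simp [h1, h2])]
    exact P j h1 h2
  have hyU' : ∀ s ∈ ({p, q} : Set I), ∀ j, j ≠ p → j ≠ q → rep cs x⁻¹ (root s) j = 0 := by
    intro s hs j h1 h2
    have hd' : d⁻¹ ∈ Subgroup.closure (cs.simple '' {p, q}) := hHJ ▸ inv_mem hd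
    rw [hx, mul_inv_rev, rep_mul_apply]
    have : ∀ i, i ≠ p → i ≠ q → rep cs d⁻¹ (root s) i = 0 := by
      intro i h1 h2
      rw [rep_closure_apply cs hd' (by simp [h1, h2]), root_apply_ne]
      rcases hs with rfl | rfl <;> assumption
    rw [eq_two hpq this, map_add, map_smul, map_smul]
    simp [P' j h1 h2]
  have hyp := eq_two hpq (hyU' p (by simp))
  have hyv : ∀ v : I →₀ ℝ, v ≤ 0 → (∀ j, j ≠ p → j ≠ q → v j = 0) → rep cs x⁻¹ v ≤ 0 := by
    intro v hv hvU j
    have hp := hypos p (by simp) j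
    have hq := hypos q (by simp) j
    have hvp := hv p
    have hvq := hv q
    rw [eq_two hpq hvU, map_add, map_smul, map_smul]
    simp only [Finsupp.add_apply, Finsupp.smul_apply, smul_eq_mul, Finsupp.coe_zero,
      Pi.zero_apply] at hp hq hvp hvq ⊢
    nlinarith [mul_nonneg hp (neg_nonneg.2 hvp), mul_nonneg hq (neg_nonneg.2 hvq)]
  have hxpos : ∀ s, (∀ j, j ≠ p → j ≠ q → rep cs x (root s) j = 0) → 0 ≤ rep cs x (root s) := by
    intro s hs
    rcases ((isRoot_root cs s).rep x).nonneg_or_nonpos with r | r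
    · exact r
    · have := hyv _ r hs
      rw [hyx] at this
      exact absurd (le_antisymm this (root_nonneg s)) (isRoot_root cs s).ne_zero
  have hxp := eq_two hpq fun j h1 h2 => (hxU j h1 h2).1
  have hxq := eq_two hpq fun j h1 h2 => (hxU j h1 h2).2
  have xp := hxpos p fun j h1 h2 => (hxU j h1 h2).1
  have xq := hxpos q fun j h1 h2 => (hxU j h1 h2).2
  have n3 := ((isRoot_root cs p).rep x).form_self
  have n4 := ((isRoot_root cs q).rep x).form_self
  rw [hxp, form_two] at n3
  rw [hxq, form_two] at n4
  have hcoord : ∀ y z : ℝ, (y • root p + z • root q : I →₀ ℝ) p = y ∧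
      (y • root p + z • root q : I →₀ ℝ) q = z := by
    intro y z
    simp [root_apply_self, root_apply_ne hpq, root_apply_ne hpq.symm]
  have hcomb : ∀ (g : W) (s i : I), (rep cs g (root s) = rep cs g (root s) p • root p +
      rep cs g (root s) q • root q) → rep cs g⁻¹ (rep cs g (root s)) i =
      rep cs g (root s) p * rep cs g⁻¹ (root p) i + rep cs g (root s) q * rep cs g⁻¹ (root q) i := by
    intro g s i h
    rw [h, map_add, map_smul, map_smul, (hcoord _ _).1, (hcoord _ _).2]
    simp
  have ex := fun s i => hcomb x s i
  have ey := fun s i => hcomb x⁻¹ s i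
  simp only [hyx, inv_inv, hxy] at ex ey
  have i1p := ex p p hxp
  have i1q := ex p q hxp
  have i2p := ex q p hxq
  have i3p := ey p p hyp
  have i3q := ey p q hyp
  rw [root_apply_self] at i1p i3p
  rw [root_apply_ne hpq] at i2p
  rw [root_apply_ne hpq.symm] at i1q i3q
  refine ⟨d, hd, hb.fix hpq (by omega) _ x rfl ?_⟩
  rcases monomial_of_inverse (hypos p (by simp) p) (hypos p (by simp) q) (hypos q (by simp) p)
    (hypos q (by simp) q) (xp p) (xp q) (xq p) (xq q) n3 n4 i1p i1q i2p i3p i3q with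
    ⟨h1, h2, h3, h4⟩ | ⟨h1, h2, h3, h4⟩
  · right
    exact ⟨by rw [hxp, h1, h2]; simp, by rw [hxq, h3, h4]; simp⟩
  · left
    exact ⟨by rw [hxp, h1, h2]; simp, by rw [hxq, h3, h4]; simp⟩

lemma simple_mem_stab {h : (I →₀ ℝ) →ₗ[ℝ] ℝ} {p : I} (hp : h (root p) = 0) :
    cs.simple p ∈ stab cs h := by
  intro v
  rw [rep_simple, refl_apply, map_sub, map_smul, hp]; simp

end Structure

/-! ### Comparison of two Coxeter systems -/

section Criterion

variable {I I' : Type*} {M : CoxeterMatrix I} {cs : CoxeterSystem M W}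
  {M' : CoxeterMatrix I'} {cs' : CoxeterSystem M' W}

/-- If a conjugate of a simple reflection of an odd base has the form `s_q ω`, where `ω` negates the
simple roots of the pair `{p, q}` and its conjugate `ω'` centralizes the odd base, then every other
generator `t` with `s_t s_q` of finite order commutes with both `s_p` and `s_q`.

A maximal finite subgroup containing `s_t` and `s_q` also contains `ω`: in the other system it fixes a
form `h'`, and `ω'` and `s_{p'}` have their product fixing `h'`, while `ω'` fixes `α_{p'}`, so that
`h' (α_{p'}) = 0` and both factors fix `h'`. Its invariant form then vanishes on `α_p`, so it contains
`s_p`, and `{p, q, t}` generates a finite group. -/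
theorem PairBase.criterion [Finite I] [Finite I'] {p q : I} (hb : PairBase cs p q)
    {p' q' : I'} (hb' : PairBase cs' p' q') (hpq' : p' ≠ q') (hodd : Odd (M' p' q'))
    {w ω : W} (hx : w⁻¹ * cs'.simple p' * w = cs.simple q * ω)
    (hωp : rep cs ω (root p) = -root p) (hωq : rep cs ω (root q) = -root q)
    (hcx : (w * ω * w⁻¹) * cs'.simple p' = cs'.simple p' * (w * ω * w⁻¹))
    (hcy : (w * ω * w⁻¹) * cs'.simple q' = cs'.simple q' * (w * ω * w⁻¹)) :
    ∀ t, t ≠ p → t ≠ q → M t q ≠ 0 → M p t = 2 ∧ M q t = 2 := by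
  intro t htp htq ht0
  have hfin : (Subgroup.closure {cs.simple t, cs.simple q} : Set W).Finite :=
    finite_closure_pair (cs.simple_mul_simple_self t) (cs.simple_mul_simple_self q) ht0
      (cs.simple_mul_simple_pow t q)
  obtain ⟨h, h1, h2, h3⟩ := exists_maximal_finite cs _ hfin
  have htF : cs.simple t ∈ stab cs h := h1 (Subgroup.subset_closure (by simp))
  have hqF : cs.simple q ∈ stab cs h := h1 (Subgroup.subset_closure (by simp))
  obtain ⟨h', h4, h5⟩ := exists_finite_stab cs' ((stab cs h).map (MulAut.conj w).toMonoidHom)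
    (by rw [Subgroup.coe_map]; exact h2.image _)
  have hback : ∀ u, w * u * w⁻¹ ∈ stab cs' h' → u ∈ stab cs h := by
    intro u hu
    refine h3 ((stab cs' h').comap (MulAut.conj w).toMonoidHom) ?_ ?_ ?_
    · exact Subgroup.map_le_iff_le_comap.1 h4
    · rw [Subgroup.coe_comap]
      exact h5.preimage ((MulAut.conj w).injective.injOn)
    · exact hu
  set ω' := w * ω * w⁻¹ with hω'
  have hfix := hb'.fix_of_commute hpq' hodd hcx hcy
  have hmem : ω' * cs'.simple p' ∈ stab cs' h' := by
    have e : ω' * cs'.simple p' = (w * cs.simple q * w⁻¹)⁻¹ := by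
      rw [eq_inv_iff_mul_eq_one, hcx, hω']
      have : cs.simple q = w⁻¹ * cs'.simple p' * w * ω⁻¹ := by rw [hx]; group
      have hc := hcx
      rw [hω'] at hc
      rw [this]
      calc _ = cs'.simple p' * (w * ω * w⁻¹ * cs'.simple p') * (w * ω⁻¹ * w⁻¹) := by group
        _ = 1 := by
          rw [hc]
          calc _ = cs'.simple p' * cs'.simple p' := by group
            _ = 1 := cs'.simple_mul_simple_self p'
    rw [e]
    exact inv_mem (h4 ⟨_, hqF, rfl⟩)
  have hα : h' (root p') = 0 := by
    have := hmem (root p')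
    rw [rep_mul_apply, rep_simple, refl_root_self, map_neg, hfix, map_neg] at this
    linarith
  have hω'mem : ω' ∈ stab cs' h' := by
    have := mul_mem hmem (simple_mem_stab (cs := cs') hα)
    rwa [mul_assoc, cs'.simple_mul_simple_self, mul_one] at this
  have hω := hback ω hω'mem
  have hp0 : h (root p) = 0 := by
    have := hω (root p)
    rw [hωp, map_neg] at this
    linarith
  refine hb t htp htq (h2.subset ?_)
  rw [SetLike.coe_subset_coe, Subgroup.closure_le]
  rintro _ ⟨i, rfl | rfl | rfl, rfl⟩
  · exact simple_mem_stab hp0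
  · exact hqF
  · exact htF

/-- When `m_pq = 4 k + 2`, the rotation `(s_p s_q) ^ (2 k + 1)` of order two negates both simple roots. -/
lemma rep_central {p q : I} (hpq : p ≠ q) {k : ℕ} (hm : M p q = 4 * k + 2) :
    rep cs ((cs.simple p * cs.simple q) ^ (2 * k + 1)) (root p) = -root p ∧
    rep cs ((cs.simple p * cs.simple q) ^ (2 * k + 1)) (root q) = -root q := by
  have h1 := (refl_mul_pow_root M hpq (2 * k + 1)).1
  have h2 := (refl_mul_pow_root M hpq (2 * k)).2
  have c1 := cheb_succ_self hpq (by omega : M p q ≠ 0)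
  have c2 := cheb_self (M p q)
  have c3 := cheb_pred (m := M p q) (by omega)
  rw [map_pow, map_mul, rep_simple, rep_simple]
  constructor
  · rw [h1, show 2 * (2 * k + 1) + 1 = M p q + 1 by omega, show 2 * (2 * k + 1) = M p q by omega,
      c1, c2]
    module
  · rw [h2, show 2 * (2 * k) + 1 = M p q - 1 by omega, show 2 * (2 * k) + 2 = M p q by omega, c3, c2]
    module

end Criterion
end CoxGeom

/-! ### The criterion is necessary -/

namespace CoxGeom

open CoxeterSystem

section Forward

variable {I I' : Type*} {M : CoxeterMatrix I} {cs : CoxeterSystem M W}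
  {M' : CoxeterMatrix I'} {cs' : CoxeterSystem M' W}

lemma PairBase.symm {p q : I} (hb : PairBase cs p q) : PairBase cs q p := by
  intro s h1 h2 h3
  rw [Set.insert_comm] at h3
  exact (hb s h2 h1 h3).symm

/-- If a base of type `D₂(4k+2)` and a base of type `D₂(2k+1)` of another system have conjugate
rotation subgroups, then one of the two generators of the former forms, with every
generator outside the base, either an infinite dihedral group or a group of order four. -/
theorem PairBase.forward [Finite I] [Finite I'] {p q : I} (hb : PairBase cs p q) (hpq : p ≠ q)
    {k : ℕ} (hk : 1 ≤ k) (hm : M p q = 4 * k + 2) {p' q' : I'} (hb' : PairBase cs' p' q')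
    (hpq' : p' ≠ q') (hm' : M' p' q' = 2 * k + 1) {w : W}
    (hw : (Subgroup.zpowers ((cs.simple p * cs.simple q) ^ 2)).map (MulAut.conj w).toMonoidHom =
      Subgroup.zpowers ((cs'.simple p' * cs'.simple q') ^ 2)) :
    (∀ t, t ≠ p → t ≠ q → M t p ≠ 0 → M p t = 2 ∧ M q t = 2) ∨
    (∀ t, t ≠ p → t ≠ q → M t q ≠ 0 → M p t = 2 ∧ M q t = 2) := by
  have ha := cs.simple_mul_simple_self p
  have hbb := cs.simple_mul_simple_self q
  have hxx := cs'.simple_mul_simple_self p'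
  have hyy := cs'.simple_mul_simple_self q'
  have hr := cs.simple_mul_simple_pow p q
  have hr' := cs'.simple_mul_simple_pow p' q'
  have h4 : (cs.simple p * cs.simple q) ^ 4 ≠ 1 := by
    intro h
    have := (pow_eq_one cs hpq h (by norm_num)).2
    omega
  rw [hm] at hr
  rw [hm'] at hr'
  set x := cs'.simple p' with hx
  set y := cs'.simple q' with hy
  set a := cs.simple p with ha'
  set b := cs.simple q with hb''
  set ρ := (a * b) ^ 2 with hρ
  obtain ⟨n, hn⟩ : ∃ n : ℤ, w * ρ * w⁻¹ = (x * y) ^ n := by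
    have : w * ρ * w⁻¹ ∈ Subgroup.zpowers ((x * y) ^ 2) := by
      rw [← hw]
      exact ⟨ρ, Subgroup.mem_zpowers ρ, rfl⟩
    obtain ⟨n, hn⟩ := this
    refine ⟨2 * n, ?_⟩
    rw [← hn, zpow_mul]
    norm_cast
  obtain ⟨j, hj⟩ : ∃ j : ℤ, x * y = w * ρ ^ j * w⁻¹ := by
    have : x * y ∈ Subgroup.zpowers ((x * y) ^ 2) := by
      refine ⟨(k + 1 : ℕ), ?_⟩
      have : ((x * y) ^ 2) ^ (k + 1) = x * y := by
        rw [← pow_mul, show 2 * (k + 1) = 2 * k + 1 + 1 by ring, pow_succ, hr', one_mul]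
      change ((x * y) ^ 2) ^ ((k + 1 : ℕ) : ℤ) = x * y
      rwa [zpow_natCast]
    rw [← hw] at this
    obtain ⟨_, ⟨j, rfl⟩, h⟩ := this
    exact ⟨j, h.symm⟩
  set g := w⁻¹ * x * w with hg
  have hgρ : g * ρ = ρ⁻¹ * g := by
    have e1 : ρ = w⁻¹ * (x * y) ^ n * w := by rw [← hn]; group
    have e2 : ρ⁻¹ = w⁻¹ * (x * y) ^ (-n) * w := by rw [e1, zpow_neg]; group
    calc g * ρ = w⁻¹ * (x * (x * y) ^ n) * w := by rw [hg, e1]; group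
      _ = w⁻¹ * ((x * y) ^ (-n) * x) * w := by rw [a_mul_zpow hxx hyy]
      _ = ρ⁻¹ * g := by rw [hg, e2]; group
  -- `g` inverts `ρ`, so it is a product `d⁻¹ v` with `d` in the base subgroup and `v` centralizing it.
  obtain ⟨d, hd, hv1, hv2⟩ := hb.exists_fix hpq (by omega) hgρ
  set v := d * g with hv
  have hva : Commute v a := conj_of_rep_root cs hv1
  have hvb : Commute v b := conj_of_rep_root cs hv2
  set z := (a * b) ^ (2 * k + 1) with hz
  have hzz : z⁻¹ = z := by
    rw [inv_eq_iff_mul_eq_one, hz, ← pow_add, ← hr]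
    congr 1; ring
  have hza : Commute z a := by
    have := a_mul_zpow ha hbb (2 * k + 1 : ℤ)
    rw [zpow_neg] at this
    have e : (a * b) ^ (2 * k + 1 : ℤ) = z := by rw [hz]; norm_cast
    rw [e, hzz] at this
    exact this.symm
  have hzr : Commute z (a * b) := (Commute.refl _).pow_left _
  have hzb : Commute z b := by
    have := (hza.mul_right hzr)
    rwa [← mul_assoc, ha, one_mul] at this
  -- `ω` centralizes the base and negates its roots, whereas its conjugate in the other system
  -- centralizes the odd base.
  set ω := z * v with hω
  have hωa : Commute ω a := hza.mul_left hva
  have hωb : Commute ω b := hzb.mul_left hvb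
  have hωρ : Commute ω ρ := (hωa.mul_right hωb).pow_right 2
  obtain ⟨c1, c2⟩ := rep_central (cs := cs) hpq hm
  have hωp : rep cs ω (root p) = -root p := by rw [hω, rep_mul_apply, hv1, c1]
  have hωq : rep cs ω (root q) = -root q := by rw [hω, rep_mul_apply, hv2, c2]
  obtain ⟨l, hl⟩ := dihedral_conj ha hbb hr h4 (inv_mem hd) hva hvb (by rw [hv]; group) hgρ
  set w₁ := w * ρ ^ l with hw₁
  have hg₁ : (ρ ^ l)⁻¹ * g * ρ ^ l = w₁⁻¹ * x * w₁ := by rw [hg, hw₁]; group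
  rw [hg₁] at hl
  have hωg : Commute ω (w₁⁻¹ * x * w₁) := by
    rcases hl with h | h <;> rw [h]
    · exact hωb.mul_right (Commute.refl _)
    · exact hωa.mul_right (Commute.refl _)
  have hconj : ∀ u, Commute ω (w₁⁻¹ * u * w₁) → Commute (w₁ * ω * w₁⁻¹) u := by
    intro u hu
    have := congrArg (fun t => w₁ * t * w₁⁻¹) hu.eq
    beta_reduce at this
    calc w₁ * ω * w₁⁻¹ * u = w₁ * (ω * (w₁⁻¹ * u * w₁)) * w₁⁻¹ := by group
      _ = u * (w₁ * ω * w₁⁻¹) := by rw [this]; group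
  have hcx := hconj x hωg
  have hcxy : Commute (w₁ * ω * w₁⁻¹) (x * y) := by
    apply hconj
    have : w₁⁻¹ * (x * y) * w₁ = ρ ^ j := by
      rw [hj, hw₁]
      calc _ = (ρ ^ l)⁻¹ * (ρ ^ j * ρ ^ l) := by group
        _ = _ := by rw [← zpow_add, add_comm, zpow_add, inv_mul_cancel_left]
    rw [this]
    exact hωρ.zpow_right j
  have hcy : Commute (w₁ * ω * w₁⁻¹) y := by
    have := hcx.mul_right hcxy
    rwa [← mul_assoc x x y, hxx, one_mul] at this
  rcases hl with h | h
  · right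
    exact hb.criterion hb' hpq' (by rw [hm']; exact ⟨k, rfl⟩) h hωp hωq hcx hcy
  · left
    intro t h1 h2 h3
    exact (hb.symm.criterion hb' hpq' (by rw [hm']; exact ⟨k, rfl⟩) h hωq hωp hcx hcy t h2 h1 h3).symm

end Forward

/-! ### Bases as subsets of the group -/

section Translate


lemma edge_iff {I : Type*} (M : CoxeterMatrix I) {i j : I} (h : i ≠ j) :
    (M i j = 0 ∨ 2 < M i j) ↔ M i j ≠ 2 := by
  have := M.off_diagonal i j h
  omega

/-- A dihedral base satisfies the hypothesis `PairBase`, by maximality among the finite irreducible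
visual subgroups. -/
lemma pairBase_of_isBase {m : W → W → ℕ} {S : Set W} {cm : CoxeterMatrix S}
    {cs : CoxeterSystem cm W} (hs : ∀ s : S, cs.simple s = (s : W))
    (hM : ∀ s t : S, cm.M s t = m s t) {p q : S} (hpq : p ≠ q) (hm : 3 ≤ m p q)
    (hB : IsBase m S {(p : W), (q : W)}) : PairBase cs p q := by
  intro s hsp hsq hfin
  by_contra hcon
  obtain ⟨-, -, -, -, hmax⟩ := hB
  set B' : Set W := {(p : W), (q : W), (s : W)} with hB'
  let R : W → W → Prop := fun x y => x ∈ B' ∧ y ∈ B' ∧ x ≠ y ∧ (m x y = 0 ∨ 2 < m x y)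
  have edge : ∀ i j : S, (i : W) ∈ B' → (j : W) ∈ B' → i ≠ j → cm.M i j ≠ 2 →
      R i j ∧ R j i := by
    intro i j hi hj hij h2
    refine ⟨⟨hi, hj, fun h => hij (Subtype.ext h), ?_⟩, ⟨hj, hi, fun h => hij (Subtype.ext h.symm), ?_⟩⟩
    · rw [← hM]; exact (edge_iff cm hij).2 h2
    · rw [← hM]; exact (edge_iff cm hij.symm).2 (by rwa [cm.symmetric j i])
  have e1 := edge p q (by simp [hB']) (by simp [hB']) hpq (by rw [hM]; omega)
  have e2 : (R p s ∧ R s p) ∨ (R q s ∧ R s q) := by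
    by_contra hh
    rw [not_or] at hh
    apply hcon
    constructor
    · by_contra h
      exact hh.1 (edge p s (by simp [hB']) (by simp [hB']) hsp.symm h)
    · by_contra h
      exact hh.2 (edge q s (by simp [hB']) (by simp [hB']) hsq.symm h)
  have conn : ∀ u ∈ B', Relation.ReflTransGen R p u ∧ Relation.ReflTransGen R u p := by
    rintro u (rfl | rfl | rfl)
    · exact ⟨.refl, .refl⟩
    · exact ⟨.single e1.1, .single e1.2⟩
    · rcases e2 with ⟨h1, h2⟩ | ⟨h1, h2⟩
      · exact ⟨.single h1, .single h2⟩
      · exact ⟨.tail (.single e1.1) h1, .head h2 (.single e1.2)⟩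
  have := hmax B' (by rintro u (rfl | rfl | rfl) <;> exact Subtype.coe_prop _)
    (by rintro u (rfl | rfl) <;> simp [hB'])
    ⟨⟨p, by simp [hB']⟩, fun u hu v hv => (conn u hu).2.trans (conn v hv).1⟩
    (by
      have : cs.simple '' {p, q, s} = B' := by
        rw [Set.image_insert_eq, Set.image_pair, hs, hs, hs]
      rwa [this] at hfin)
  have hs' : (s : W) ∈ ({(p : W), (q : W)} : Set W) := by rw [← this]; simp [hB']
  rcases hs' with h | h
  · exact hsp (Subtype.ext h)
  · exact hsq (Subtype.ext h)

/-- `PairBase.forward` for bases given as subsets of the group. -/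
theorem forward (m : W → W → ℕ) (S : Set W)
    (hcs : IsCoxeterSystemOn m S) (hfin : S.Finite)
    (k : ℕ) (hk : 1 ≤ k) (a b : W) (hab : a ≠ b)
    (hB : IsBase m S ({a, b} : Set W)) (hm : m a b = 4 * k + 2)
    {S' : Set W} {m' : W → W → ℕ} (hcs' : IsCoxeterSystemOn m' S') {B' : Set W}
    (hB' : IsBase m' S' B') (htype : HasType m' B' (d2Mat (2 * k + 1)))
    (hmatch : Matches ({a, b} : Set W) B') :
    ((∀ s ∈ S, s ∉ ({a, b} : Set W) → m s a ≠ 0 → m s a = 2 ∧ m s b = 2) ∨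
       (∀ s ∈ S, s ∉ ({a, b} : Set W) → m s b ≠ 0 → m s a = 2 ∧ m s b = 2)) := by
  obtain ⟨cm, cs, hs, hM⟩ := hcs
  obtain ⟨cm', cs', hs', hM'⟩ := hcs'
  have : Finite S := hfin
  have : Group.FG W := by
    rw [Group.fg_iff]
    exact ⟨_, cs.subgroup_closure_range_simple, Set.finite_range _⟩
  have : Finite S' := finite_of_fg cs'
  obtain ⟨e, he⟩ := htype
  obtain ⟨⟨x, hxB⟩, hx⟩ : ∃ x, e x = 0 := e.surjective 0
  obtain ⟨⟨y, hyB⟩, hy⟩ : ∃ y, e y = 1 := e.surjective 1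
  have hxy : x ≠ y := by
    rintro rfl
    rw [hx] at hy
    exact absurd hy (by decide)
  have hB'eq : B' = {x, y} := by
    apply Set.Subset.antisymm
    · intro u hu
      rcases Fin.exists_fin_two.1 ⟨e ⟨u, hu⟩, rfl⟩ with h | h
      · left
        exact congrArg Subtype.val (e.injective (h.trans hx.symm))
      · right
        exact congrArg Subtype.val (e.injective (h.trans hy.symm))
    · rintro u (rfl | rfl) <;> assumption
  have hmxy : m' x y = 2 * k + 1 := by
    have := he ⟨x, hxB⟩ ⟨y, hyB⟩
    rw [hx, hy] at this
    simpa [d2Mat] using this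
  subst hB'eq
  let p : S := ⟨a, hB.1 (by simp)⟩
  let q : S := ⟨b, hB.1 (by simp)⟩
  let p' : S' := ⟨x, hB'.1 (by simp)⟩
  let q' : S' := ⟨y, hB'.1 (by simp)⟩
  have hpq : p ≠ q := fun h => hab (congrArg Subtype.val h)
  have hpq' : p' ≠ q' := fun h => hxy (congrArg Subtype.val h)
  have sa : cs.simple p = a := hs p
  have sb : cs.simple q = b := hs q
  have sx : cs'.simple p' = x := hs' p'
  have sy : cs'.simple q' = y := hs' q'
  have ha := cs.simple_mul_simple_self p
  have hb := cs.simple_mul_simple_self q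
  have hx := cs'.simple_mul_simple_self p'
  have hy := cs'.simple_mul_simple_self q'
  obtain ⟨w, hw⟩ := hmatch
  rw [sa] at ha
  rw [sb] at hb
  rw [sx] at hx
  rw [sy] at hy
  rw [commutator_closure_pair ha hb, commutator_closure_pair hx hy] at hw
  have := (pairBase_of_isBase hs hM (p := p) (q := q) hpq (by change 3 ≤ m a b; omega) hB).forward
    hpq hk ((hM p q).trans hm)
    (pairBase_of_isBase hs' hM' (p := p') (q := q') hpq' (by change 3 ≤ m' x y; omega) hB')
    hpq' ((hM' p' q').trans hmxy) (w := w) (by rw [sa, sb, sx, sy]; exact hw)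
  have tr : ∀ s (hsS : s ∈ S), s ∉ ({a, b} : Set W) →
      (⟨s, hsS⟩ : S) ≠ p ∧ (⟨s, hsS⟩ : S) ≠ q ∧ m s a = cm.M p ⟨s, hsS⟩ ∧ m s b = cm.M q ⟨s, hsS⟩ := by
    intro s hsS hsn
    refine ⟨fun h => hsn (Or.inl (congrArg Subtype.val h)),
      fun h => hsn (Or.inr (congrArg Subtype.val h)), ?_, ?_⟩
    · rw [cm.symmetric]; exact (hM ⟨s, hsS⟩ p).symm
    · rw [cm.symmetric]; exact (hM ⟨s, hsS⟩ q).symm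
  rcases this with h | h
  · left
    intro s hsS hsn h0
    obtain ⟨t1, t2, t3, t4⟩ := tr s hsS hsn
    rw [t3, t4]
    rw [t3, cm.symmetric] at h0
    exact h _ t1 t2 h0
  · right
    intro s hsS hsn h0
    obtain ⟨t1, t2, t3, t4⟩ := tr s hsS hsn
    rw [t3, t4]
    rw [t4, cm.symmetric] at h0
    exact h _ t1 t2 h0

end Translate
end CoxGeom

/-! ### Algebra of the splitting `D₂(4k+2) = D₂(2k+1) × Z/2` -/

namespace CoxGeom

open CoxeterSystem

section SplitAlgebra

variable {a b c z x y : W}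

lemma mul_pow_comm {n : ℕ} (h : (x * y) ^ n = 1) : (y * x) ^ n = 1 := by
  have : SemiconjBy y (x * y) (y * x) := by rw [SemiconjBy, mul_assoc]
  have := this.pow_right n
  rw [h, SemiconjBy, mul_one] at this
  exact mul_eq_right.1 this.symm

lemma comm_sq (hx : x * x = 1) (hy : y * y = 1) : (x * y) ^ 2 = 1 ↔ Commute x y := by
  rw [pow_two, ← inv_eq_iff_mul_eq_one, inv_ab hx hy, Commute, SemiconjBy, eq_comm]

lemma mul_mul_pow (b c : W) (n : ℕ) : b * (c * b) ^ n = (b * c) ^ n * b := by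
  have : SemiconjBy b (c * b) (b * c) := by rw [SemiconjBy, mul_assoc]
  exact this.pow_right n

/-- The splitting `D₂(4k+2) = D₂(2k+1) × Z/2`: the second factor is generated by the central
element `z = (ab) ^ (2k+1)`, the first one by `c = aba` and `b`. -/
lemma split_forward (ha : a * a = 1) (hb : b * b = 1) {k : ℕ} (h : (a * b) ^ (4 * k + 2) = 1) :
    (a * b) ^ (2 * k + 1) * (a * b) ^ (2 * k + 1) = 1 ∧ Commute ((a * b) ^ (2 * k + 1)) a ∧
      Commute ((a * b) ^ (2 * k + 1)) b ∧ (a * b * a * b) ^ (2 * k + 1) = 1 ∧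
      (a * b) ^ (2 * k + 1) * b * (a * b * a * b) ^ k = a := by
  have hzz : (a * b) ^ (2 * k + 1) * (a * b) ^ (2 * k + 1) = 1 := by
    rw [← pow_add, ← h]; congr 1; ring
  have hza : Commute ((a * b) ^ (2 * k + 1)) a := by
    have := mul_mul_pow a b (2 * k + 1)
    have e : (b * a) ^ (2 * k + 1) = (a * b) ^ (2 * k + 1) := by
      rw [← inv_ab ha hb, inv_pow, inv_eq_iff_mul_eq_one, hzz]
    rw [e] at this
    exact this.symm
  have hzr : Commute ((a * b) ^ (2 * k + 1)) (a * b) := (Commute.refl _).pow_left _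
  have hzb : Commute ((a * b) ^ (2 * k + 1)) b := by
    have := hza.mul_right hzr
    rwa [← mul_assoc, ha, one_mul] at this
  have hcb : a * b * a * b = (a * b) ^ 2 := by rw [pow_two]; group
  refine ⟨hzz, hza, hzb, ?_, ?_⟩
  · rw [hcb, ← pow_mul, ← h]; congr 1; ring
  · have e1 : b * (a * b) ^ (2 * k) * (a * b) ^ (2 * k) = b * ((a * b) ^ (2 * k) * (a * b) ^ (2 * k)) :=
      mul_assoc _ _ _
    have e2 : b * (a * b) ^ (2 * k) = ((a * b) ^ (2 * k))⁻¹ * b := by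
      rw [mul_mul_pow, ← inv_ab ha hb, inv_pow]
    rw [hcb, ← pow_mul, mul_assoc, e2, pow_succ', mul_assoc, mul_inv_cancel_left, mul_assoc, hb,
      mul_one]

/-- Recovery of the first generator of `D₂(4k+2)` from the splitting. -/
lemma split_backward (hb : b * b = 1) (hc : c * c = 1) (hz : z * z = 1)
    (hzb : Commute z b) (hzc : Commute z c) {k : ℕ} (h : (c * b) ^ (2 * k + 1) = 1) :
    (z * b * (c * b) ^ k) * (z * b * (c * b) ^ k) = 1 ∧
      (z * b * (c * b) ^ k * b) ^ (2 * k + 1) = z ∧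
      z * b * (c * b) ^ k * b * (z * b * (c * b) ^ k) = c := by
  have e1 : (b * c) ^ k * (c * b) ^ k = 1 := by
    rw [← inv_ab hc hb, inv_pow, inv_mul_cancel]
  have e2 : z * b * (c * b) ^ k = z * ((b * c) ^ k * b) := by rw [mul_assoc, mul_mul_pow]
  have hzbc : Commute z ((b * c) ^ k) := (hzb.mul_right hzc).pow_right k
  have hbc := mul_pow_comm h
  have e3 : z * b * (c * b) ^ k * b = z * (b * c) ^ k := by
    rw [e2, mul_assoc, mul_assoc, hb, mul_one]
  refine ⟨?_, ?_, ?_⟩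
  · calc _ = z * ((b * c) ^ k * b) * (z * b * (c * b) ^ k) := by rw [e2]
      _ = z * (b * c) ^ k * (b * z) * b * (c * b) ^ k := by group
      _ = z * (b * c) ^ k * z * (b * b) * (c * b) ^ k := by rw [← hzb.eq]; group
      _ = 1 := by rw [hb, mul_one, hzbc.eq, mul_assoc _ z z, hz, mul_one, e1]
  · rw [e3, hzbc.mul_pow, ← pow_mul, mul_comm k, pow_mul, hbc, one_pow, mul_one, pow_succ, pow_mul,
      pow_two, hz, one_pow, one_mul]
  · rw [e3, e2, hzbc.eq]
    calc (b * c) ^ k * z * (z * ((b * c) ^ k * b))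
        = (b * c) ^ k * (z * z) * (b * c) ^ k * b := by group
      _ = (b * c) ^ (2 * k + 1) * (b * c)⁻¹ * b := by
        rw [hz, mul_one, ← pow_add, pow_succ, mul_inv_cancel_right, two_mul]
      _ = c := by rw [hbc, one_mul, inv_ab hb hc, mul_assoc, hb, mul_one]

end SplitAlgebra

/-! ### The split Coxeter system -/

section Split

variable {I : Type*} {M : CoxeterMatrix I}

open scoped Classical in
/-- The Coxeter matrix obtained from `M` by replacing the label of the edge `{p, q}` with `2k+1` and
adding a new generator `none`, which commutes with `p` and `q` and has the same labels as `p` with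
respect to the other generators. -/
noncomputable def splitMatrix (M : CoxeterMatrix I) {p q : I} (hpq : p ≠ q) {k : ℕ} (hk : 1 ≤ k) :
    CoxeterMatrix (Option I) where
  M := fun i j => match i, j with
    | none, none => 1
    | none, some s => if s = p ∨ s = q then 2 else M p s
    | some s, none => if s = p ∨ s = q then 2 else M p s
    | some s, some t => if (s = p ∧ t = q) ∨ (s = q ∧ t = p) then 2 * k + 1
        else M s t
  isSymm := by
    apply Matrix.IsSymm.ext
    rintro (_ | s) (_ | t) <;> dsimp only
    rw [M.symmetric s t]
    congr 1
    simp only [eq_iff_iff]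
    tauto
  diagonal := by
    rintro (_ | s) <;> dsimp only
    rw [if_neg, M.diagonal s]
    rintro (⟨rfl, h⟩ | ⟨rfl, h⟩)
    · exact hpq h
    · exact hpq h.symm
  off_diagonal := by
    rintro (_ | s) (_ | t) h <;> dsimp only
    · exact absurd rfl h
    · split_ifs with h1
      · norm_num
      · exact M.off_diagonal _ _ fun e => h1 (Or.inl e.symm)
    · split_ifs with h1
      · norm_num
      · exact M.off_diagonal _ _ fun e => h1 (Or.inl e.symm)
    · split_ifs with h1
      · omega
      · exact M.off_diagonal _ _ fun e => h (congrArg some e)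

section

variable {p q : I} {hpq : p ≠ q} {k : ℕ} {hk : 1 ≤ k}

lemma split_none (s : I) (hp : s ≠ p) (hq : s ≠ q) :
    splitMatrix M hpq hk none (some s) = M p s := if_neg (by tauto)

lemma split_none_p : splitMatrix M hpq hk none (some p) = 2 := if_pos (Or.inl rfl)

lemma split_none_q : splitMatrix M hpq hk none (some q) = 2 := if_pos (Or.inr rfl)

lemma split_pq : splitMatrix M hpq hk (some p) (some q) = 2 * k + 1 := if_pos (Or.inl ⟨rfl, rfl⟩)

lemma split_some (s t : I) (h : s ≠ p ∧ s ≠ q ∨ t ≠ p ∧ t ≠ q ∨ s = t) :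
    splitMatrix M hpq hk (some s) (some t) = M s t := if_neg (by
  rintro (⟨rfl, rfl⟩ | ⟨rfl, rfl⟩) <;> tauto)

/-- A generator other than `p` and `q` that does not form an infinite dihedral group with `p`
commutes with both. -/
abbrev Isolated (M : CoxeterMatrix I) (p q : I) : Prop :=
  ∀ s, s ≠ p → s ≠ q → M p s ≠ 0 → M p s = 2 ∧ M q s = 2

lemma liftable_of {G : Type*} [Group G] {N : CoxeterMatrix I} {f : I → G}
    (h : ∀ i j, (f i * f j) ^ N i j = 1 ∨ (f j * f i) ^ N i j = 1) : N.IsLiftable f := fun i j =>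
  (h i j).elim id mul_pow_comm

open scoped Classical in
/-- The images in `W` of the generators of the split Coxeter group. -/
noncomputable def splitGen (cs : CoxeterSystem M W) (p q : I) (k : ℕ) : Option I → W
  | none => (cs.simple p * cs.simple q) ^ (2 * k + 1)
  | some s => if s = p then cs.simple p * cs.simple q * cs.simple p else cs.simple s

lemma splitGen_p (cs : CoxeterSystem M W) :
    splitGen cs p q k (some p) = cs.simple p * cs.simple q * cs.simple p := if_pos rfl

lemma splitGen_ne (cs : CoxeterSystem M W) {s : I} (h : s ≠ p) :
    splitGen cs p q k (some s) = cs.simple s := if_neg h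

lemma splitGen_liftable (cs : CoxeterSystem M W) (hm : M p q = 4 * k + 2) (hiso : Isolated M p q) :
    (splitMatrix M hpq hk).IsLiftable (splitGen cs p q k) := by
  have ha := cs.simple_mul_simple_self p
  have hb := cs.simple_mul_simple_self q
  have hr := cs.simple_mul_simple_pow p q
  rw [hm] at hr
  obtain ⟨hzz, hza, hzb, hcb, -⟩ := split_forward ha hb hr
  have hcc : cs.simple p * cs.simple q * cs.simple p * (cs.simple p * cs.simple q * cs.simple p)
      = 1 := by
    simp [mul_assoc, cs.simple_mul_simple_self]
  have hcomm : ∀ s, s ≠ p → s ≠ q → M p s ≠ 0 → M p s = 2 ∧ Commute (cs.simple p) (cs.simple s) ∧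
      Commute (cs.simple q) (cs.simple s) := by
    intro s h1 h2 h3
    obtain ⟨h4, h5⟩ := hiso s h1 h2 h3
    have e1 := cs.simple_mul_simple_pow p s
    have e2 := cs.simple_mul_simple_pow q s
    rw [h4, comm_sq ha (cs.simple_mul_simple_self s)] at e1
    rw [h5, comm_sq hb (cs.simple_mul_simple_self s)] at e2
    exact ⟨h4, e1, e2⟩
  have key1 : ∀ t, (splitGen cs p q k none * splitGen cs p q k (some t)) ^
      splitMatrix M hpq hk none (some t) = 1 := by
    intro t
    by_cases htp : t = p
    · subst htp
      rw [split_none_p, splitGen_p, splitGen, comm_sq hzz hcc]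
      exact (hza.mul_right hzb).mul_right hza
    by_cases htq : t = q
    · subst htq
      rw [split_none_q, splitGen_ne _ htp, splitGen, comm_sq hzz hb]
      exact hzb
    rw [split_none _ htp htq, splitGen_ne _ htp, splitGen]
    by_cases h0 : M p t = 0
    · rw [h0, pow_zero]
    · obtain ⟨e, h1, h2⟩ := hcomm t htp htq h0
      rw [e, comm_sq hzz (cs.simple_mul_simple_self t)]
      exact (h1.mul_left h2).pow_left _
  have key2 : ∀ t, (splitGen cs p q k (some p) * splitGen cs p q k (some t)) ^
      splitMatrix M hpq hk (some p) (some t) = 1 := by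
    intro t
    rw [splitGen_p]
    by_cases htp : t = p
    · subst htp
      rw [splitGen_p, hcc, one_pow]
    rw [splitGen_ne _ htp]
    by_cases htq : t = q
    · subst htq
      rw [split_pq]
      exact hcb
    rw [split_some _ _ (by tauto)]
    by_cases h0 : M p t = 0
    · rw [h0, pow_zero]
    · obtain ⟨e, h1, h2⟩ := hcomm t htp htq h0
      rw [e, comm_sq hcc (cs.simple_mul_simple_self t)]
      exact (h1.mul_left h2).mul_left h1
  apply liftable_of
  rintro (_ | s) (_ | t)
  · left
    rw [splitGen, hzz, one_pow]
  · exact Or.inl (key1 t)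
  · right
    rw [CoxeterMatrix.symmetric]
    exact key1 s
  · by_cases hsp : s = p
    · subst hsp
      exact Or.inl (key2 t)
    by_cases htp : t = p
    · subst htp
      right
      rw [CoxeterMatrix.symmetric]
      exact key2 s
    left
    rw [split_some _ _ (by
      by_cases hsq : s = q
      · by_cases htq : t = q
        · exact Or.inr (Or.inr (hsq.trans htq.symm))
        · exact Or.inr (Or.inl ⟨htp, htq⟩)
      · exact Or.inl ⟨hsp, hsq⟩), splitGen_ne _ hsp, splitGen_ne _ htp]
    exact cs.simple_mul_simple_pow s t

open scoped Classical in
/-- The images in the split Coxeter group of the generators of `W`. -/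
noncomputable def unsplitGen {G : Type*} [Group G] {N : CoxeterMatrix (Option I)}
    (cs : CoxeterSystem N G) (p q : I) (k : ℕ) (s : I) : G :=
  if s = p then cs.simple none * cs.simple (some q) * (cs.simple (some p) * cs.simple (some q)) ^ k
  else cs.simple (some s)

lemma unsplitGen_liftable {G : Type*} [Group G] (cs : CoxeterSystem (splitMatrix M hpq hk) G)
    (hm : M p q = 4 * k + 2) (hiso : Isolated M p q) :
    M.IsLiftable (unsplitGen cs p q k) := by
  have hc := cs.simple_mul_simple_self (some p)
  have hb := cs.simple_mul_simple_self (some q)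
  have hz := cs.simple_mul_simple_self none
  have hzc := cs.simple_mul_simple_pow none (some p)
  have hzb := cs.simple_mul_simple_pow none (some q)
  have hcb := cs.simple_mul_simple_pow (some p) (some q)
  rw [split_none_p, comm_sq hz hc] at hzc
  rw [split_none_q, comm_sq hz hb] at hzb
  rw [split_pq] at hcb
  obtain ⟨h1, h2, -⟩ := split_backward hb hc hz hzb hzc hcb
  have hp : unsplitGen cs p q k p = cs.simple none * cs.simple (some q) *
    (cs.simple (some p) * cs.simple (some q)) ^ k := if_pos rfl
  have hne : ∀ s, s ≠ p → unsplitGen cs p q k s = cs.simple (some s) := fun s hs => if_neg hs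
  have key : ∀ t, (unsplitGen cs p q k p * unsplitGen cs p q k t) ^ M p t = 1 := by
    intro t
    rw [hp]
    by_cases htp : t = p
    · subst htp
      rw [hp, h1, one_pow]
    rw [hne _ htp]
    by_cases htq : t = q
    · subst htq
      rw [hm, show 4 * k + 2 = (2 * k + 1) * 2 by ring, pow_mul, h2, pow_two, hz]
    by_cases h0 : M p t = 0
    · rw [h0, pow_zero]
    obtain ⟨h4, h5⟩ := hiso t htp htq h0
    have ht := cs.simple_mul_simple_self (some t)
    have e1 := cs.simple_mul_simple_pow (some p) (some t)
    have e2 := cs.simple_mul_simple_pow (some q) (some t)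
    have e3 := cs.simple_mul_simple_pow none (some t)
    rw [split_some _ _ (by tauto), h4, comm_sq hc ht] at e1
    rw [split_some _ _ (by tauto), h5, comm_sq hb ht] at e2
    rw [split_none _ htp htq, h4, comm_sq hz ht] at e3
    rw [h4, comm_sq h1 ht]
    exact (e3.mul_left e2).mul_left ((e1.mul_left e2).pow_left k)
  apply liftable_of
  intro s t
  by_cases hsp : s = p
  · subst hsp
    exact Or.inl (key t)
  by_cases htp : t = p
  · subst htp
    right
    rw [CoxeterMatrix.symmetric]
    exact key s
  left
  rw [← split_some (hpq := hpq) (hk := hk) s t (by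
      by_cases hsq : s = q
      · by_cases htq : t = q
        · exact Or.inr (Or.inr (hsq.trans htq.symm))
        · exact Or.inr (Or.inl ⟨htp, htq⟩)
      · exact Or.inl ⟨hsp, hsq⟩), hne _ hsp, hne _ htp]
  exact cs.simple_mul_simple_pow _ _

/-- The split Coxeter system on `W` itself. -/
theorem exists_split (cs : CoxeterSystem M W) (hpq : p ≠ q) (hk : 1 ≤ k)
    (hm : M p q = 4 * k + 2) (hiso : Isolated M p q) :
    ∃ cs' : CoxeterSystem (splitMatrix M hpq hk) W, ∀ i, cs'.simple i = splitGen cs p q k i := by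
  set cs₀ := (splitMatrix M hpq hk).toCoxeterSystem with hcs₀
  have hf := splitGen_liftable (hpq := hpq) (hk := hk) cs hm hiso
  have hg := unsplitGen_liftable cs₀ hm hiso
  have Hf := cs₀.lift_apply_simple hf
  have Hg := cs.lift_apply_simple hg
  set f := cs₀.lift ⟨_, hf⟩ with hf'
  set g := cs.lift ⟨_, hg⟩ with hg'
  have ha := cs.simple_mul_simple_self p
  have hb := cs.simple_mul_simple_self q
  have hr := cs.simple_mul_simple_pow p q
  rw [hm] at hr
  obtain ⟨-, -, -, -, h0⟩ := split_forward ha hb hr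
  have hc := cs₀.simple_mul_simple_self (some p)
  have hb := cs₀.simple_mul_simple_self (some q)
  have hz := cs₀.simple_mul_simple_self none
  have hzc := cs₀.simple_mul_simple_pow none (some p)
  have hzb := cs₀.simple_mul_simple_pow none (some q)
  have hcb := cs₀.simple_mul_simple_pow (some p) (some q)
  rw [split_none_p, comm_sq hz hc] at hzc
  rw [split_none_q, comm_sq hz hb] at hzb
  rw [split_pq] at hcb
  obtain ⟨-, h2, h3⟩ := split_backward hb hc hz hzb hzc hcb
  have hp : unsplitGen cs₀ p q k p = cs₀.simple none * cs₀.simple (some q) *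
    (cs₀.simple (some p) * cs₀.simple (some q)) ^ k := if_pos rfl
  have hne : ∀ s, s ≠ p → unsplitGen cs₀ p q k s = cs₀.simple (some s) := fun s hs => if_neg hs
  have fg : f.comp g = MonoidHom.id W := by
    apply cs.ext_simple
    intro s
    rw [MonoidHom.comp_apply, Hg, MonoidHom.id_apply]
    by_cases hs : s = p
    · subst hs
      rw [hp, map_mul, map_mul, map_pow, map_mul, Hf, Hf, Hf, splitGen_p, splitGen_ne _ hpq.symm,
        splitGen]
      exact h0
    · rw [hne s hs, Hf, splitGen_ne _ hs]
  have gf : g.comp f = MonoidHom.id _ := by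
    apply cs₀.ext_simple
    rintro (_ | s)
    · rw [MonoidHom.comp_apply, Hf, MonoidHom.id_apply, splitGen, map_pow, map_mul, Hg, Hg, hp,
        hne q hpq.symm, h2]
    · rw [MonoidHom.comp_apply, Hf, MonoidHom.id_apply]
      by_cases hs : s = p
      · subst hs
        rw [splitGen_p, map_mul, map_mul, Hg, Hg, hp, hne q hpq.symm, h3]
      · rw [splitGen_ne _ hs, Hg, hne s hs]
  refine ⟨cs₀.map (MonoidHom.toMulEquiv f g gf fg), fun i => ?_⟩
  rw [map_simple, MonoidHom.toMulEquiv_apply, Hf]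

end

end Split

end CoxGeom

/-! ### The criterion is sufficient -/

namespace CoxGeom

open CoxeterSystem
open scoped commutatorElement

section Backward


/-- The set of simple reflections of a Coxeter system is a set of Coxeter generators. -/
lemma isCoxeterSystemOn_range {I : Type*} {M : CoxeterMatrix I} (cs : CoxeterSystem M W) :
    ∃ m : W → W → ℕ, IsCoxeterSystemOn m (Set.range cs.simple) ∧
      ∀ i j, m (cs.simple i) (cs.simple j) = M i j := by
  have hinj := simple_injective cs
  let m : W → W → ℕ := fun u v =>
    Function.extend cs.simple (fun i => Function.extend cs.simple (fun j => M i j) 0 v)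
      (fun _ => 0) u
  have hm : ∀ i j, m (cs.simple i) (cs.simple j) = M i j := by
    intro i j
    simp only [m, hinj.extend_apply]
  let e := Equiv.ofInjective cs.simple hinj
  have he : ∀ s, cs.simple (e.symm s) = s := fun s => Equiv.apply_ofInjective_symm hinj s
  refine ⟨m, ⟨M.reindex e, cs.reindex e, fun s => ?_, fun s t => ?_⟩, hm⟩
  · rw [reindex_simple, he]
  · rw [← he s, ← he t, hm]
    simp [CoxeterMatrix.reindex]

/-- Maximality of an edge `{p, q}` with a finite label: it suffices that every other generator
forms with `p` an infinite dihedral group or commutes with both `p` and `q`. -/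
lemma isBase_range {I : Type*} {M : CoxeterMatrix I} (cs : CoxeterSystem M W) {m : W → W → ℕ}
    (hM : ∀ i j, m (cs.simple i) (cs.simple j) = M i j) {p q : I} (hpq : p ≠ q)
    (hm : 3 ≤ M p q) (hiso : Isolated M p q) :
    IsBase m (Set.range cs.simple) {cs.simple p, cs.simple q} := by
  have hinj := simple_injective cs
  have ha := cs.simple_mul_simple_self p
  have hb := cs.simple_mul_simple_self q
  have hne : cs.simple p ≠ cs.simple q := fun h => hpq (hinj h)
  refine ⟨?_, ⟨⟨_, Or.inl rfl⟩, ?_⟩, ?_, ?_, ?_⟩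
  · rintro _ (rfl | rfl) <;> exact Set.mem_range_self _
  · rintro _ (rfl | rfl) _ (rfl | rfl)
    · exact .refl
    · refine .single ⟨Or.inl rfl, Or.inr rfl, hne, ?_⟩
      rw [hM]; omega
    · refine .single ⟨Or.inr rfl, Or.inl rfl, hne.symm, ?_⟩
      rw [hM, M.symmetric]; omega
    · exact .refl
  · exact finite_closure_pair ha hb (by omega) (cs.simple_mul_simple_pow p q)
  · intro hcyc
    have hcomm : Commute (cs.simple p) (cs.simple q) := by
      have := hcyc.isMulCommutative.is_comm.comm
        (⟨cs.simple p, Subgroup.subset_closure (Or.inl rfl)⟩ :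
          Subgroup.closure {cs.simple p, cs.simple q})
        ⟨cs.simple q, Subgroup.subset_closure (Or.inr rfl)⟩
      exact congrArg Subtype.val this
    have := (pow_eq_one cs hpq ((comm_sq ha hb).2 hcomm) (by norm_num)).2
    omega
  · intro B' hB'S hB' hirr hfin
    have hpB : cs.simple p ∈ B' := hB' (Or.inl rfl)
    refine Set.Subset.antisymm ?_ hB'
    intro u hu
    have := hirr.2 _ hpB u hu
    induction this with
    | refl => exact Or.inl rfl
    | @tail x y h1 h2 ih =>
      obtain ⟨hx, hy, hxy, hedge⟩ := h2
      obtain ⟨t, rfl⟩ := hB'S hy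
      by_contra hcon
      have htp : t ≠ p := by rintro rfl; exact hcon (Or.inl rfl)
      have htq : t ≠ q := by rintro rfl; exact hcon (Or.inr rfl)
      have h0 : M p t ≠ 0 := by
        have : Finite (Subgroup.closure B') := hfin
        obtain ⟨n, hn, h⟩ := isOfFinOrder_iff_pow_eq_one.1 (isOfFinOrder_of_finite
          (⟨cs.simple p * cs.simple t, mul_mem (Subgroup.subset_closure hpB)
            (Subgroup.subset_closure hy)⟩ : Subgroup.closure B'))
        exact (pow_eq_one cs htp.symm (congrArg Subtype.val h) hn.ne').1
      obtain ⟨h4, h5⟩ := hiso t htp htq h0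
      rcases ih hx with rfl | rfl <;> rw [hM] at hedge <;> omega

lemma hasType_pair {m : W → W → ℕ} {x y : W} (hxy : x ≠ y) {n : ℕ} (h1 : m x x = 1)
    (h2 : m y y = 1) (h3 : m x y = n) (h4 : m y x = n) : HasType m {x, y} (d2Mat n) := by
  classical
  let f : ({x, y} : Set W) → Fin 2 := fun u => if (u : W) = x then 0 else 1
  have hf : Function.Bijective f := by
    constructor
    · rintro ⟨_, rfl | rfl⟩ ⟨_, rfl | rfl⟩ h <;> simp [f, hxy.symm] at h ⊢
    · rw [Function.Surjective, Fin.forall_fin_two]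
      exact ⟨⟨⟨x, Or.inl rfl⟩, by simp [f]⟩, ⟨⟨y, Or.inr rfl⟩, by simp [f, hxy.symm]⟩⟩
  refine ⟨Equiv.ofBijective f hf, ?_⟩
  rintro ⟨_, rfl | rfl⟩ ⟨_, rfl | rfl⟩ <;> simp [f, d2Mat, hxy.symm, *]

/-- If `p` forms with every generator outside `{p, q}` an infinite dihedral group unless that
generator commutes with both `p` and `q`, then splitting `D₂(4k+2)` as `D₂(2k+1) × Z/2` yields a
Coxeter system with a matching base of type `D₂(2k+1)`. -/
theorem backward {I : Type*} {M : CoxeterMatrix I} (cs : CoxeterSystem M W) {p q : I}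
    (hpq : p ≠ q) {k : ℕ} (hk : 1 ≤ k) (hm : M p q = 4 * k + 2) (hiso : Isolated M p q) :
    ∃ (S' : Set W) (m' : W → W → ℕ), IsCoxeterSystemOn m' S' ∧
        ∃ B' : Set W, IsBase m' S' B' ∧ HasType m' B' (d2Mat (2 * k + 1)) ∧
          Matches ({cs.simple p, cs.simple q} : Set W) B' := by
  obtain ⟨cs', hcs'⟩ := exists_split cs hpq hk hm hiso
  obtain ⟨m', hS', hm'⟩ := isCoxeterSystemOn_range cs'
  have hne : some p ≠ some q := fun h => hpq (Option.some_injective _ h)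
  have hlab : splitMatrix M hpq hk (some p) (some q) = 2 * k + 1 := split_pq
  refine ⟨_, m', hS', {cs'.simple (some p), cs'.simple (some q)}, ?_, ?_, ?_⟩
  · refine isBase_range cs' hm' hne (by omega) ?_
    rintro (_ | s) h1 h2 h3
    · rw [CoxeterMatrix.symmetric _ (some p), CoxeterMatrix.symmetric _ (some q)]
      exact ⟨split_none_p, split_none_q⟩
    · have h1 : s ≠ p := fun h => h1 (congrArg some h)
      have h2 : s ≠ q := fun h => h2 (congrArg some h)
      rw [split_some _ _ (by tauto)] at h3
      rw [split_some _ _ (by tauto), split_some _ _ (by tauto)]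
      exact hiso s h1 h2 h3
  · refine hasType_pair (fun h => hne (simple_injective cs' h)) ?_ ?_ ?_ ?_
    · rw [hm', CoxeterMatrix.diagonal]
    · rw [hm', CoxeterMatrix.diagonal]
    · rw [hm', hlab]
    · rw [hm', CoxeterMatrix.symmetric, hlab]
  · refine ⟨1, ?_⟩
    have ha := cs.simple_mul_simple_self p
    have hb := cs.simple_mul_simple_self q
    have hr := cs.simple_mul_simple_pow p q
    rw [hm] at hr
    rw [commutator_closure_pair ha hb, commutator_closure_pair (cs'.simple_mul_simple_self _)
      (cs'.simple_mul_simple_self _), hcs', hcs', splitGen_p, splitGen_ne _ hpq.symm, map_one]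
    set r := cs.simple p * cs.simple q with hr'
    have e : r * cs.simple p * cs.simple q = r ^ 2 := by rw [mul_assoc, pow_two]
    rw [e]
    have e1 : Subgroup.map (MulEquiv.toMonoidHom (1 : MulAut W)) (Subgroup.zpowers (r ^ 2)) =
        Subgroup.zpowers (r ^ 2) := Subgroup.map_id _
    rw [e1]
    -- `r ^ 2` has odd order `2 k + 1`, hence is a power of its square.
    apply le_antisymm <;> rw [Subgroup.zpowers_le]
    · have := pow_mem (Subgroup.mem_zpowers ((r ^ 2) ^ 2)) (k + 1)
      rwa [← pow_mul, ← pow_mul, show 2 * 2 * (k + 1) = 4 * k + 2 + 2 by ring, pow_add r, hr,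
        one_mul, pow_mul] at this
    · exact pow_mem (Subgroup.mem_zpowers _) _

end Backward

end CoxGeom


theorem dihedral_matching_criterion (m : W → W → ℕ) (S : Set W)
    (hcs : IsCoxeterSystemOn m S) (hfin : S.Finite)
    (q : ℕ) (hq : 1 ≤ q) (a b : W) (hab : a ≠ b)
    (hB : IsBase m S ({a, b} : Set W)) (hm : m a b = 4 * q + 2) :
    (∃ (S' : Set W) (m' : W → W → ℕ), IsCoxeterSystemOn m' S' ∧
        ∃ B' : Set W, IsBase m' S' B' ∧ HasType m' B' (d2Mat (2 * q + 1)) ∧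
          Matches ({a, b} : Set W) B') ↔
      ((∀ s ∈ S, s ∉ ({a, b} : Set W) → m s a ≠ 0 → m s a = 2 ∧ m s b = 2) ∨
       (∀ s ∈ S, s ∉ ({a, b} : Set W) → m s b ≠ 0 → m s a = 2 ∧ m s b = 2)) := by
  constructor
  · rintro ⟨S', m', hcs', B', hB', ht, hmat⟩
    exact CoxGeom.forward m S hcs hfin q hq a b hab hB hm hcs' hB' ht hmat
  · obtain ⟨cm, cs, hs, hM⟩ := hcs
    let x : S := ⟨a, hB.1 (Or.inl rfl)⟩
    let y : S := ⟨b, hB.1 (Or.inr rfl)⟩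
    have hxy : x ≠ y := fun h => hab (congrArg Subtype.val h)
    have hmxy : cm x y = 4 * q + 2 := (hM x y).trans hm
    have hx : cs.simple x = a := hs x
    have hy : cs.simple y = b := hs y
    have tr : ∀ s : S, s ≠ x → s ≠ y → (s : W) ∉ ({a, b} : Set W) ∧
        m s a = cm x s ∧ m s b = cm y s := by
      intro s h1 h2
      refine ⟨?_, ?_, ?_⟩
      · rintro (h | h)
        · exact h1 (Subtype.ext h)
        · exact h2 (Subtype.ext h)
      · rw [cm.symmetric]; exact (hM s x).symm
      · rw [cm.symmetric]; exact (hM s y).symm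
    rintro (h | h)
    · have := CoxGeom.backward cs hxy hq hmxy (by
        intro s h1 h2 h3
        obtain ⟨t1, t2, t3⟩ := tr s h1 h2
        rw [← t2] at h3
        rw [← t2, ← t3]
        exact h s s.2 t1 h3)
      rwa [hx, hy] at this
    · have := CoxGeom.backward cs hxy.symm hq ((cm.symmetric y x).trans hmxy) (by
        intro s h1 h2 h3
        obtain ⟨t1, t2, t3⟩ := tr s h2 h1
        rw [← t3] at h3
        rw [← t2, ← t3]
        exact (h s s.2 t1 h3).symm)
      rwa [hx, hy, Set.pair_comm] at this
end

section
/- Let (W,S) be a Coxeter system of finite rank with Coxeter matrix m, and let B = {a,b} be a base of (W,S) of type D_2(4q+2) for some q ≥ 1. Suppose that for all s ∈ S−B with m(s,a) < ∞ one has m(s,a) = m(s,b) = 2. Let c = aba, let z be the longest element of ⟨B⟩, let S' = (S−{a}) ∪ {c,z}, and let B' = {b,c}. Then S' is a set of Coxeter generators of W such that: (1) B' is a base of (W,S') of type D_2(2q+1) that matches B; (2) m(z,b) = m(z,c) = 2; (3) for (s,t) ∈ (S−B)×{c,z}, one has m(s,t) < ∞ if and only if m(s,a) < ∞, and if m(s,t)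 < ∞ then m(s,t) = 2 (here m denotes the Coxeter matrix of (W,S')). -/
/-!
Write `n = 2 * q + 1`, `c = a * b * a` and `z = (a * b) ^ n`. Since `n` is odd, the dihedral group
`⟨a, b⟩` of order `4 * n` is the direct product of its centre `{1, z}` and the dihedral group
`⟨b, c⟩` of order `2 * n`, and `a = z * ((c * b) ^ q * c)` expresses `a` through the new generators.

The new Coxeter matrix `newMatrix` agrees with `m` on `S \ {a}`, makes `z` commute with `b` and `c`,
gives `b * c` the order `n`, and joins any other `s` to `c` and `z` by `2` or `∞` according as
`m s a` is finite or not. Because every `s` with `m s a` finite commutes with both `a` and `b`, the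
relations of the new matrix hold in `W`, and conversely sending `a` to the above word (and fixing
`S \ {a}`) respects the relations of `(W, S)`: when `m s a = ∞` nothing has to be checked, and
otherwise `s` commutes with `b`, `c`, `z` in the new Coxeter group. Two mutually inverse
homomorphisms result (`isCoxeterSystemOn_of_retraction`). A visual subgroup containing `{b, c}`
properly with irreducible diagram has an edge leaving `{b, c}`, which carries the label `∞`, so it
is infinite; hence `{b, c}` is a base. As `z` is central in `⟨a, b⟩ = ⟨z⟩ * ⟨b, c⟩`, the commutator
subgroups of `⟨a, b⟩` and `⟨b, c⟩` coincide, and the conjugating element can be taken to be `1`.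

Two facts about a general Coxeter system are needed: the order of `s * t` is not smaller than the
label `m s t` (`dvd_of_simple_mul_pow_eq_one`), and a simple reflection lies in `⟨s, t⟩` only if it
is `s` or `t` (`simple_notMem_closure_pair`), so that `c` and `z` are not already in `S \ {a}`. Both
come from the geometric representation. The identification of the longest element `z` with
`(a * b) ^ n` (`eq_of_isLongestElement`) is a computation of word lengths in a dihedral group.
-/

variable {W : Type*} [Group W]

/-! ### The geometric representation of a Coxeter group -/

/-- The linear form `v ↦ 2 ⟨e_i, v⟩` of the canonical bilinear form
`⟨e_i, e_j⟩ = -cos (π / m i j)`, on the space with basis `e_i` indexed by `I`. For the label `∞`,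
encoded as `0`, the convention `π / 0 = 0` produces the standard value `⟨e_i, e_j⟩ = -1`. -/
noncomputable def coxPairing {I : Type*} (M : CoxeterMatrix I) (i : I) : (I →₀ ℝ) →ₗ[ℝ] ℝ :=
  Finsupp.linearCombination ℝ fun j => -2 * Real.cos (Real.pi / (M i j : ℝ))

theorem coxPairing_single {I : Type*} (M : CoxeterMatrix I) (i j : I) :
    coxPairing M i (Finsupp.single j 1) = -2 * Real.cos (Real.pi / (M i j : ℝ)) := by
  simp [coxPairing]

theorem coxPairing_self {I : Type*} (M : CoxeterMatrix I) (i : I) :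
    coxPairing M i (Finsupp.single i 1) = 2 := by
  simp [coxPairing_single]

/-- The reflection `v ↦ v - 2 ⟨e_i, v⟩ e_i` by which the `i`-th simple reflection acts. -/
noncomputable def coxReflection {I : Type*} (M : CoxeterMatrix I) (i : I) :
    (I →₀ ℝ) ≃ₗ[ℝ] (I →₀ ℝ) :=
  Module.reflection (coxPairing_self M i)

theorem coxReflection_apply {I : Type*} (M : CoxeterMatrix I) (i : I) (v : I →₀ ℝ) :
    coxReflection M i v = v - coxPairing M i v • Finsupp.single i 1 :=
  Module.reflection_apply _ _

/-- The value `t` of Mathlib's lemmas `Module.reflection_mul_reflection_pow_apply` for two simple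
reflections, in the form `2 cos (2θ)` at which Chebyshev polynomials are evaluated. -/
theorem coxTrace_eq {I : Type*} (M : CoxeterMatrix I) (i j : I) :
    2 * Real.cos (2 * (Real.pi / (M i j : ℝ))) =
      coxPairing M i (Finsupp.single j 1) * coxPairing M j (Finsupp.single i 1) - 2 := by
  rw [coxPairing_single, coxPairing_single, M.symmetric j i, Real.cos_two_mul]
  ring

theorem sin_two_mul_pi_div_pos {k : ℕ} (hk : 3 ≤ k) :
    0 < Real.sin (2 * (Real.pi / (k : ℝ))) := by
  have hk' : (3 : ℝ) ≤ k := by exact_mod_cast hk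
  have := Real.pi_pos
  apply Real.sin_pos_of_pos_of_lt_pi
  · positivity
  · rw [← mul_div_assoc, div_lt_iff₀ (by linarith)]
    nlinarith

open Polynomial.Chebyshev in
/-- The reflections of the geometric representation satisfy the Coxeter relations. -/
theorem coxReflection_liftable {I : Type*} (M : CoxeterMatrix I) :
    M.IsLiftable (coxReflection M) := by
  intro i j
  rcases Nat.lt_or_ge (M i j) 3 with h | h
  · obtain h | h | h : M i j = 0 ∨ M i j = 1 ∨ M i j = 2 := by omega
    · rw [h, pow_zero]
    · have hij : i = j := by
        by_contra hne
        exact M.off_diagonal i j hne h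
      subst hij
      rw [h, pow_one]
      refine LinearEquiv.ext fun v => ?_
      rw [LinearEquiv.mul_apply, LinearEquiv.coe_one, id]
      exact Module.involutive_reflection (coxPairing_self M i) v
    · have h1 : coxPairing M i (Finsupp.single j 1) = 0 := by
        simp [coxPairing_single, h]
      have h2 : coxPairing M j (Finsupp.single i 1) = 0 := by
        simp [coxPairing_single, M.symmetric j i, h]
      rw [h]
      refine LinearEquiv.ext fun v => ?_
      simp only [pow_two, LinearEquiv.mul_apply, coxReflection_apply, map_sub, map_smul,
        coxPairing_self, h1, h2, LinearEquiv.coe_one, id]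
      module
  · set θ : ℝ := Real.pi / (M i j : ℝ) with hθ
    have hM : (M i j : ℝ) ≠ 0 := by
      have : M i j ≠ 0 := by omega
      exact_mod_cast this
    have hMθ : (M i j : ℝ) * θ = Real.pi := by rw [hθ]; field_simp
    have hs : Real.sin (2 * θ) ≠ 0 := (sin_two_mul_pi_div_pos h).ne'
    have hS := fun k : ℤ => S_two_mul_real_cos (2 * θ) k
    refine LinearEquiv.ext fun v => ?_
    unfold coxReflection
    rw [Module.reflection_mul_reflection_pow_apply _ _ _ _ _ (coxTrace_eq M i j)]
    rcases Nat.even_or_odd' (M i j) with ⟨k, hk | hk⟩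
    · have e1 : ((M i j : ℤ) - 2) / 2 = k - 1 := by omega
      have e2 : ((M i j : ℤ) - 1) / 2 = k - 1 := by omega
      -- `S_(k-1)(2 cos 2θ) * sin 2θ = sin (2kθ)`, and `2 * k * θ = π`
      have z : Polynomial.eval (2 * Real.cos (2 * θ)) (S ℝ ((k : ℤ) - 1)) = 0 := by
        apply (mul_eq_zero.mp _).resolve_right hs
        rw [hS]
        have : (((k : ℤ) - 1 : ℤ) + 1 : ℝ) * (2 * θ) = Real.pi := by
          rw [← hMθ, hk]; push_cast; ring
        rw [this, Real.sin_pi]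
      rw [e1, e2, z]
      simp
    · have e1 : ((M i j : ℤ) - 1) / 2 = k := by omega
      have e2 : ((M i j : ℤ) - 3) / 2 = k - 1 := by omega
      have e3 : ((M i j : ℤ)) / 2 = k := by omega
      have e4 : ((M i j : ℤ) - 2) / 2 = k - 1 := by omega
      -- here `(2 * k + 1) * θ = π`, so `sin (2(k+1)θ) + sin (2kθ) = 0`
      have z : Polynomial.eval (2 * Real.cos (2 * θ)) (S ℝ (k : ℤ)) +
          Polynomial.eval (2 * Real.cos (2 * θ)) (S ℝ ((k : ℤ) - 1)) = 0 := by
        apply (mul_eq_zero.mp _).resolve_right hs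
        rw [add_mul, hS, hS]
        have : ((k : ℤ) + 1 : ℝ) * (2 * θ) =
            2 * Real.pi - (((k : ℤ) - 1 : ℤ) + 1 : ℝ) * (2 * θ) := by
          rw [← hMθ, hk]; push_cast; ring
        rw [this, Real.sin_two_pi_sub]
        ring
      rw [e1, e2, e3, e4, z]
      simp

/-- The geometric representation of the Coxeter system `cs`. -/
noncomputable def coxRep {I : Type*} {M : CoxeterMatrix I} (cs : CoxeterSystem M W) :
    W →* ((I →₀ ℝ) ≃ₗ[ℝ] (I →₀ ℝ)) :=
  cs.lift ⟨coxReflection M, coxReflection_liftable M⟩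

theorem coxRep_simple {I : Type*} {M : CoxeterMatrix I} (cs : CoxeterSystem M W)
    (i : I) : coxRep cs (cs.simple i) = coxReflection M i :=
  cs.lift_apply_simple _ i

open Polynomial.Chebyshev in
/-- The order of a product of two simple reflections is divisible by their label, read off from
the action on `e_i` in the geometric representation; for the label `∞`, encoded as `0`, the
product has infinite order. -/
theorem dvd_of_simple_mul_pow_eq_one {I : Type*} {M : CoxeterMatrix I}
    (cs : CoxeterSystem M W) {i j : I} (hM : M i j = 0 ∨ 3 ≤ M i j) {k : ℕ}
    (hk : (cs.simple i * cs.simple j) ^ k = 1) : M i j ∣ k := by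
  have hij : j ≠ i := by
    rintro rfl
    simp at hM
  have h1 : ((coxReflection M i * coxReflection M j) ^ k) (Finsupp.single i 1) =
      Finsupp.single i 1 := by
    rw [← coxRep_simple cs, ← coxRep_simple cs, ← map_mul, ← map_pow, hk, map_one]
    rfl
  unfold coxReflection at h1
  rw [Module.reflection_mul_reflection_pow_apply_self _ _ _ _ (coxTrace_eq M i j)] at h1
  set θ : ℝ := Real.pi / (M i j : ℝ) with hθ
  have hi := DFunLike.congr_fun h1 i
  have hj := DFunLike.congr_fun h1 j
  simp [hij, hij.symm, coxPairing_single, M.symmetric j i] at hi hj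
  rcases hM with h | h
  · simp [hθ, h, S_eval_two] at hj
    simp [hj]
  · have hpi := Real.pi_pos
    have hM0 : (M i j : ℝ) ≠ 0 := by
      have : M i j ≠ 0 := by omega
      exact_mod_cast this
    have hM3 : (3 : ℝ) ≤ M i j := by exact_mod_cast h
    have hcos : Real.cos (Real.pi / (M i j : ℝ)) ≠ 0 := by
      apply ne_of_gt
      apply Real.cos_pos_of_mem_Ioo
      constructor
      · have : 0 < Real.pi / (M i j : ℝ) := by positivity
        linarith
      · rw [div_lt_div_iff₀ (by linarith) (by norm_num)]
        nlinarith
    have hj' := hj.resolve_right hcos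
    rw [hj', add_zero] at hi
    have hs : Real.sin (2 * θ) ≠ 0 := (sin_two_mul_pi_div_pos h).ne'
    have e1 := S_two_mul_real_cos (2 * θ) (k : ℤ)
    have e2 := S_two_mul_real_cos (2 * θ) ((k : ℤ) - 1)
    rw [hi] at e1
    rw [hj'] at e2
    -- the two coordinates say that rotating by `k * (2 * θ)` is trivial
    have e3 : Real.sin (k * (2 * θ)) = 0 := by
      rw [zero_mul] at e2
      rw [e2]
      congr 1
      push_cast
      ring
    have e4 : Real.cos (k * (2 * θ)) = 1 := by
      have : (((k : ℤ) : ℝ) + 1) * (2 * θ) = k * (2 * θ) + 2 * θ := by push_cast; ring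
      rw [this, Real.sin_add, e3, zero_mul, zero_add] at e1
      exact (mul_right_cancel₀ hs e1).symm
    obtain ⟨l, hl⟩ := (Real.cos_eq_one_iff _).1 e4
    rw [hθ] at hl
    have hl' : (l : ℝ) * M i j = k := by
      field_simp at hl
      linarith
    have : (M i j : ℤ) ∣ (k : ℤ) := ⟨l, by rw [mul_comm]; exact_mod_cast hl'.symm⟩
    exact_mod_cast this

/-- The action of `⟨s_i, s_j⟩` changes only the coordinates `i` and `j`, whereas `s_k` negates the
coordinate `k` of `e_k`. -/
theorem simple_notMem_closure_pair {I : Type*} {M : CoxeterMatrix I}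
    (cs : CoxeterSystem M W) {i j k : I} (hi : k ≠ i) (hj : k ≠ j) :
    cs.simple k ∉ Subgroup.closure {cs.simple i, cs.simple j} := by
  intro hk
  have key : ∀ g ∈ Subgroup.closure {cs.simple i, cs.simple j},
      ∀ v : I →₀ ℝ, (coxRep cs g v) k = v k := by
    intro g hg
    induction hg using Subgroup.closure_induction with
    | mem x hx =>
      intro v
      rcases hx with rfl | rfl
      · simp [coxRep_simple, coxReflection_apply, hi]
      · simp [coxRep_simple, coxReflection_apply, hj]
    | one => intro v; simp
    | mul x y _ _ hx hy =>
      intro v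
      rw [map_mul, LinearEquiv.mul_apply, hx, hy]
    | inv x _ hx =>
      intro v
      rw [← hx, ← LinearEquiv.mul_apply, ← map_mul]
      simp
  have := key _ hk (Finsupp.single k 1)
  rw [coxRep_simple, coxReflection_apply, coxPairing_self] at this
  simp at this

/-! ### Longest elements of dihedral groups -/

section Dihedral

variable {a b : W}

theorem mul_rot_zpow_left (ha : a * a = 1) (hb : b * b = 1) (i : ℤ) :
    a * (a * b) ^ i = (a * b) ^ (-i) * a := by
  have ha' : a⁻¹ = a := inv_eq_of_mul_eq_one_left ha
  have hb' : b⁻¹ = b := inv_eq_of_mul_eq_one_left hb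
  have h : a * (a * b) ^ i * a⁻¹ = (a * b) ^ (-i) := by
    rw [← conj_zpow, zpow_neg, ← inv_zpow, mul_inv_rev, ha', hb', ← mul_assoc a a b, ha, one_mul]
  rw [← h, inv_mul_cancel_right]

theorem mul_rot_zpow_right (ha : a * a = 1) (hb : b * b = 1) (i : ℤ) :
    b * (a * b) ^ i = (a * b) ^ (-i - 1) * a := by
  have ha' : a⁻¹ = a := inv_eq_of_mul_eq_one_left ha
  have hb' : b⁻¹ = b := inv_eq_of_mul_eq_one_left hb
  have h : b = a * (a * b) ^ (1 : ℤ) := by rw [zpow_one, ← mul_assoc, ha, one_mul]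
  have h2 : b * (a * b) ^ i = a * (a * b) ^ (1 + i) := by
    rw [zpow_add, ← mul_assoc, ← h]
  rw [h2, mul_rot_zpow_left ha hb]
  congr 2
  ring

/-- A word of length `l` in two involutions is a rotation `(a * b) ^ i` with `|2 * i| ≤ l` or a
reflection `(a * b) ^ i * a` with `|2 * i + 1| ≤ l`. -/
theorem list_prod_pair (ha : a * a = 1) (hb : b * b = 1) (l : List W)
    (hl : ∀ x ∈ l, x ∈ ({a, b} : Set W)) :
    (∃ i : ℤ, |2 * i| ≤ l.length ∧ l.prod = (a * b) ^ i) ∨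
      ∃ i : ℤ, |2 * i + 1| ≤ l.length ∧ l.prod = (a * b) ^ i * a := by
  induction l with
  | nil => exact Or.inl ⟨0, by simp, by simp⟩
  | cons x l ih =>
    have hx := hl x (by simp)
    rw [List.prod_cons, List.length_cons]
    push_cast
    rcases ih fun y hy => hl y (by simp [hy]) with ⟨i, hi, h⟩ | ⟨i, hi, h⟩ <;>
      rw [abs_le] at hi <;> rw [h] <;> rcases hx with rfl | rfl
    · exact Or.inr ⟨-i, by rw [abs_le]; omega, mul_rot_zpow_left ha hb i⟩
    · exact Or.inr ⟨-i - 1, by rw [abs_le]; omega, mul_rot_zpow_right ha hb i⟩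
    · refine Or.inl ⟨-i, by rw [abs_le]; omega, ?_⟩
      rw [← mul_assoc, mul_rot_zpow_left ha hb i, mul_assoc, ha, mul_one]
    · refine Or.inl ⟨-i - 1, by rw [abs_le]; omega, ?_⟩
      rw [← mul_assoc, mul_rot_zpow_right ha hb i, mul_assoc, ha, mul_one]

theorem mem_closure_pair (ha : a * a = 1) (hb : b * b = 1) {w : W}
    (hw : w ∈ Subgroup.closure {a, b}) :
    (∃ i : ℤ, w = (a * b) ^ i) ∨ ∃ i : ℤ, w = (a * b) ^ i * a := by
  have ha' : a⁻¹ = a := inv_eq_of_mul_eq_one_left ha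
  have hb' : b⁻¹ = b := inv_eq_of_mul_eq_one_left hb
  rw [← Subgroup.mem_toSubmonoid, Subgroup.closure_toSubmonoid] at hw
  obtain ⟨l, hl, rfl⟩ := Submonoid.exists_list_of_mem_closure hw
  rcases list_prod_pair ha hb l (fun x hx => by
    rcases hl x hx with h | h
    · exact h
    · rcases h with h | h
      · left; rw [← inv_inv x, h, ha']
      · right; rw [Set.mem_singleton_iff, ← inv_inv x, h, hb']) with ⟨i, -, h⟩ | ⟨i, -, h⟩
  · exact Or.inl ⟨i, h⟩
  · exact Or.inr ⟨i, h⟩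

theorem wordLength_le_of_list {B : Set W} {l : List W} (hl : ∀ x ∈ l, x ∈ B) :
    wordLength B l.prod ≤ l.length :=
  Nat.sInf_le ⟨l, hl, rfl, rfl⟩

theorem exists_list_rot (ha : a * a = 1) (hb : b * b = 1) (k : ℕ) :
    ∃ l : List W, (∀ x ∈ l, x ∈ ({a, b} : Set W)) ∧ l.length = 2 * k ∧ l.prod = (a * b) ^ k := by
  induction k with
  | zero => exact ⟨[], by simp⟩
  | succ k ih =>
    obtain ⟨l, h1, h2, h3⟩ := ih
    refine ⟨a :: b :: l, ?_, ?_, ?_⟩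
    · intro x hx
      simp only [List.mem_cons] at hx
      rcases hx with rfl | rfl | hx
      · simp
      · simp
      · exact h1 x hx
    · simp [h2]; ring
    · rw [List.prod_cons, List.prod_cons, h3, pow_succ', mul_assoc]

theorem wordLength_rot_le (ha : a * a = 1) (hb : b * b = 1) (i : ℤ) :
    (wordLength {a, b} ((a * b) ^ i) : ℤ) ≤ |2 * i| := by
  have ha' : a⁻¹ = a := inv_eq_of_mul_eq_one_left ha
  have hb' : b⁻¹ = b := inv_eq_of_mul_eq_one_left hb
  obtain ⟨k, rfl | rfl⟩ := i.eq_nat_or_neg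
  · obtain ⟨l, h1, h2, h3⟩ := exists_list_rot ha hb k
    have := wordLength_le_of_list h1
    rw [h2, h3] at this
    rw [zpow_natCast, abs_of_nonneg (by positivity)]
    exact_mod_cast this
  · obtain ⟨l, h1, h2, h3⟩ := exists_list_rot hb ha k
    rw [Set.pair_comm] at h1
    have := wordLength_le_of_list h1
    rw [h2, h3] at this
    rw [zpow_neg, zpow_natCast, ← inv_pow, mul_inv_rev, ha', hb', mul_neg, abs_neg,
      abs_of_nonneg (by positivity)]
    exact_mod_cast this

theorem wordLength_refl_le (ha : a * a = 1) (hb : b * b = 1) (i : ℤ) :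
    (wordLength {a, b} ((a * b) ^ i * a) : ℤ) ≤ |2 * i + 1| := by
  rcases le_or_gt 0 i with hi | hi
  · obtain ⟨k, rfl⟩ := Int.eq_ofNat_of_zero_le hi
    obtain ⟨l, h1, h2, h3⟩ := exists_list_rot ha hb k
    have := wordLength_le_of_list (B := {a, b}) (l := l ++ [a]) (by
      intro x hx
      rcases List.mem_append.1 hx with hx | hx
      · exact h1 x hx
      · simp_all)
    rw [List.prod_append, h3, List.prod_singleton, List.length_append, h2,
      List.length_singleton] at this
    rw [zpow_natCast, abs_of_nonneg (by positivity)]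
    exact_mod_cast this
  · obtain ⟨k, hk⟩ := Int.eq_ofNat_of_zero_le (show 0 ≤ -i - 1 by omega)
    obtain ⟨l, h1, h2, h3⟩ := exists_list_rot ha hb k
    have := wordLength_le_of_list (B := {a, b}) (l := b :: l) (by
      intro x hx
      rcases List.mem_cons.1 hx with hx | hx
      · simp_all
      · exact h1 x hx)
    rw [List.prod_cons, h3, List.length_cons, h2, ← zpow_natCast, mul_rot_zpow_right ha hb] at this
    have e : -(k : ℤ) - 1 = i := by omega
    rw [e] at this
    rw [abs_of_neg (by omega)]
    omega

/-- In a dihedral group of order `4 * n` with `1 < n`, the half-turn `(a * b) ^ n` is the only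
longest element. -/
theorem eq_of_isLongestElement (ha : a * a = 1) (hb : b * b = 1) {n : ℕ} (hn : 1 < n)
    (h1 : (a * b) ^ (2 * n) = 1) (hord : ∀ k : ℕ, (a * b) ^ k = 1 → 2 * n ∣ k) {z : W}
    (hz : IsLongestElement {a, b} z) : z = (a * b) ^ n := by
  have hordz : ∀ k : ℤ, (a * b) ^ k = 1 → ((2 * n : ℕ) : ℤ) ∣ k := by
    intro k hk
    obtain ⟨j, rfl | rfl⟩ := k.eq_nat_or_neg
    · exact_mod_cast hord j (by simpa using hk)
    · rw [dvd_neg]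
      exact_mod_cast hord j (by simpa using hk)
  have h1z : (a * b) ^ ((2 * n : ℕ) : ℤ) = 1 := by rw [zpow_natCast, h1]
  have hcomm : ∀ i : ℤ, (a * b) ^ (i % ((2 * n : ℕ) : ℤ)) = (a * b) ^ i := by
    intro i
    conv_rhs => rw [← Int.emod_add_mul_ediv i ((2 * n : ℕ) : ℤ)]
    rw [zpow_add, zpow_mul, h1z, one_zpow, mul_one]
  have hmem : (a * b) ^ n ∈ Subgroup.closure {a, b} :=
    pow_mem (mul_mem (Subgroup.subset_closure (by simp)) (Subgroup.subset_closure (by simp))) n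
  have hlow : 2 * n ≤ wordLength {a, b} ((a * b) ^ n) := by
    obtain ⟨l, hl, hlen, hprod⟩ : wordLength {a, b} ((a * b) ^ n) ∈
        {k | ∃ l : List W, (∀ x ∈ l, x ∈ ({a, b} : Set W)) ∧ l.length = k ∧
          l.prod = (a * b) ^ n} := by
      obtain ⟨l, h1, h2, h3⟩ := exists_list_rot ha hb n
      exact Nat.sInf_mem ⟨_, l, h1, rfl, h3⟩
    rw [← hlen]
    by_contra hlt
    rcases list_prod_pair ha hb l hl with ⟨i, hi, h⟩ | ⟨i, -, h⟩
    · have : (a * b) ^ ((n : ℤ) - i) = 1 := by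
        rw [zpow_sub, zpow_natCast, ← hprod, h, mul_inv_cancel]
      obtain ⟨c, hc⟩ := hordz _ this
      rw [abs_le] at hi
      have h3 : 0 < (n : ℤ) - i := by omega
      have h4 : (n : ℤ) - i < ((2 * n : ℕ) : ℤ) := by push_cast; omega
      have h5 := Int.le_of_dvd h3 ⟨c, hc⟩
      omega
    -- a reflection cannot be a rotation, as rotations commute with `a * b` and `(a * b) ^ 2 ≠ 1`
    · have h2 : a = (a * b) ^ ((n : ℤ) - i) := by
        rw [sub_eq_neg_add, zpow_add, zpow_natCast, ← hprod, h, ← mul_assoc, ← zpow_add]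
        simp
      have h3 := mul_rot_zpow_left ha hb 1
      have h4 : Commute ((a * b) ^ ((n : ℤ) - i)) ((a * b) ^ (1 : ℤ)) :=
        Commute.zpow_zpow_self _ _ _
      rw [← h2] at h4
      rw [h4.eq] at h3
      have h5 := mul_right_cancel h3
      have h6 : (a * b) ^ (2 : ℤ) = 1 := by
        rw [show (2 : ℤ) = 1 - -1 by norm_num, zpow_sub, h5, mul_inv_cancel]
      have := Int.le_of_dvd (by norm_num) (hordz 2 h6)
      push_cast at this
      omega
  have hzl : 2 * n ≤ wordLength {a, b} z := hlow.trans (hz.2 _ hmem)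
  -- representatives `i` of the exponent are taken in `[-n, n)`; the exponent `-n` equals `n`
  have hred : ∀ i : ℤ, ∃ j : ℤ, -(n : ℤ) ≤ j ∧ j < n ∧ (a * b) ^ i = (a * b) ^ j := by
    intro i
    have p1 := Int.emod_nonneg (i + n) (b := ((2 * n : ℕ) : ℤ)) (by push_cast; omega)
    have p2 := Int.emod_lt_of_pos (i + n) (b := ((2 * n : ℕ) : ℤ)) (by push_cast; omega)
    refine ⟨(i + n) % ((2 * n : ℕ) : ℤ) - n, by omega, by push_cast at p2 ⊢; omega, ?_⟩
    rw [zpow_sub, hcomm, zpow_add, mul_inv_cancel_right]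
  rcases mem_closure_pair ha hb hz.1 with ⟨i, rfl⟩ | ⟨i, rfl⟩
  · obtain ⟨j, hj1, hj2, hj⟩ := hred i
    rw [hj] at hzl ⊢
    have := wordLength_rot_le ha hb j
    have hj3 : j = -n := by
      rcases abs_cases (2 * j) with h | h <;> omega
    rw [hj3, ← zpow_natCast, ← mul_one ((a * b) ^ (-(n : ℤ))), ← h1z, ← zpow_add]
    congr 1
    push_cast
    ring
  · obtain ⟨j, hj1, hj2, hj⟩ := hred i
    rw [hj] at hzl
    have := wordLength_refl_le ha hb j
    rcases abs_cases (2 * j + 1) with h | h <;> omega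

end Dihedral

/-! ### Dihedral products, commutators and changes of generators -/

theorem commute_of_sq {x y : W} (hx : x * x = 1) (hy : y * y = 1) (h : (x * y) ^ 2 = 1) :
    Commute x y := by
  have hx' : x⁻¹ = x := inv_eq_of_mul_eq_one_left hx
  have hy' : y⁻¹ = y := inv_eq_of_mul_eq_one_left hy
  have : (x * y)⁻¹ = x * y := inv_eq_of_mul_eq_one_left (by rw [← pow_two, h])
  rw [mul_inv_rev, hx', hy'] at this
  exact this.symm

theorem sq_of_commute {x y : W} (hx : x * x = 1) (hy : y * y = 1) (h : Commute x y) :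
    (x * y) ^ 2 = 1 := by
  rw [h.mul_pow, pow_two, pow_two, hx, hy, mul_one]

theorem mul_pow_swap {x y : W} {k : ℕ} (h : (x * y) ^ k = 1) : (y * x) ^ k = 1 := by
  have : y * x = y * (x * y) * y⁻¹ := by group
  rw [this, conj_pow, h]
  group

/-- If the involutions `b` and `c` satisfy the dihedral relation of odd order `2 * q + 1` and the
involution `z` commutes with both, then `a = z * ((c * b) ^ q * c)` is an involution with
`a * b * a = c` and `(a * b) ^ (2 * q + 1) = z`. -/
theorem split_dihedral {b c z : W} {q : ℕ} (hb : b * b = 1) (hc : c * c = 1) (hz : z * z = 1)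
    (hzb : Commute z b) (hzc : Commute z c) (hcb : (c * b) ^ (2 * q + 1) = 1) :
    z * ((c * b) ^ q * c) * (z * ((c * b) ^ q * c)) = 1 ∧
    z * ((c * b) ^ q * c) * b * (z * ((c * b) ^ q * c)) = c ∧
    (z * ((c * b) ^ q * c) * b) ^ (2 * q + 1) = z := by
  have hzr : Commute z ((c * b) ^ q) := (hzc.mul_right hzb).pow_right q
  have hzp : Commute z ((c * b) ^ q * c) := hzr.mul_right hzc
  have hpp : (c * b) ^ q * c * ((c * b) ^ q * c) = 1 := by
    have := mul_rot_zpow_left hc hb q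
    rw [zpow_neg, zpow_natCast] at this
    calc (c * b) ^ q * c * ((c * b) ^ q * c) = (c * b) ^ q * (c * (c * b) ^ q) * c := by
          simp only [mul_assoc]
      _ = 1 := by rw [this, mul_inv_cancel_left, hc]
  have hab : z * ((c * b) ^ q * c) * b = z * (c * b) ^ (q + 1) := by
    rw [pow_succ]; simp only [mul_assoc]
  have hzr' : Commute z ((c * b) ^ (q + 1)) := (hzc.mul_right hzb).pow_right _
  refine ⟨?_, ?_, ?_⟩
  · rw [hzp.symm.mul_mul_mul_comm, hz, hpp, one_mul]
  · rw [hab, hzr'.symm.mul_mul_mul_comm, hz, one_mul, ← mul_assoc, ← pow_add,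
      show q + 1 + q = 2 * q + 1 by ring, hcb, one_mul]
  · rw [hab, hzr'.mul_pow, ← pow_mul, mul_comm (q + 1), pow_mul, hcb, one_pow, mul_one, pow_succ,
      pow_mul, pow_two, hz, one_pow, one_mul]

open scoped commutatorElement in
theorem commutator_mul_left {u h g : W} (huh : Commute u h) (hug : Commute u g) :
    (⁅u * h, g⁆ : W) = ⁅h, g⁆ := by
  have : Commute u (h * g * h⁻¹) := (huh.mul_right hug).mul_right huh.inv_right
  rw [commutatorElement_def, commutatorElement_def, mul_inv_rev]
  calc u * h * g * (h⁻¹ * u⁻¹) * g⁻¹ = u * (h * g * h⁻¹) * u⁻¹ * g⁻¹ := by group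
    _ = _ := by rw [this.eq, mul_inv_cancel_right]

open scoped commutatorElement in
theorem commutator_mul_right {u h g : W} (huh : Commute u h) (hug : Commute u g) :
    ⁅g, u * h⁆ = ⁅g, h⁆ := by
  rw [← commutatorElement_inv, commutator_mul_left huh hug, commutatorElement_inv]

/-- If `H` is generated by its subgroup `K` and an element `z` centralizing `H`, then `H` and `K`
have the same commutator subgroup. -/
theorem commutator_eq_of_central {H K : Subgroup W} {z : W} (hKH : K ≤ H)
    (hz : ∀ h ∈ H, Commute z h) (hH : ∀ g ∈ H, ∃ i : ℤ, ∃ h ∈ K, g = z ^ i * h) :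
    ⁅H, H⁆ = ⁅K, K⁆ := by
  apply le_antisymm _ (Subgroup.commutator_mono hKH hKH)
  rw [Subgroup.commutator_le]
  intro g hg g' hg'
  obtain ⟨i, h, hh, rfl⟩ := hH g hg
  obtain ⟨j, h', hh', rfl⟩ := hH g' hg'
  rw [commutator_mul_left ((hz h (hKH hh)).zpow_left i) ((hz _ hg').zpow_left i),
    commutator_mul_right ((hz h' (hKH hh')).zpow_left j) ((hz h (hKH hh)).zpow_left j)]
  exact Subgroup.commutator_mem_commutator hh hh'

/-- The properties of a Coxeter system `(W, S)` used here: symmetry and diagonal of `m`, the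
defining relations, generation by `S`, the divisibility by `m s t` of every exponent that kills
`s * t` (for `m s t ≠ 1, 2`), and the independence of a generator from two others. -/
theorem IsCoxeterSystemOn.facts {m : W → W → ℕ} {S : Set W} (h : IsCoxeterSystemOn m S) :
    (∀ s ∈ S, s * s = 1) ∧ (∀ s ∈ S, m s s = 1) ∧ (∀ s ∈ S, ∀ t ∈ S, m s t = m t s) ∧
    (∀ s ∈ S, ∀ t ∈ S, s ≠ t → m s t ≠ 1) ∧ (∀ s ∈ S, ∀ t ∈ S, (s * t) ^ m s t = 1) ∧
    (∀ s ∈ S, ∀ t ∈ S, m s t = 0 ∨ 3 ≤ m s t → ∀ k : ℕ, (s * t) ^ k = 1 → m s t ∣ k) ∧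
    (∀ s ∈ S, ∀ t ∈ S, ∀ u ∈ S, u ≠ s → u ≠ t → u ∉ Subgroup.closure {s, t}) ∧
    Subgroup.closure S = ⊤ := by
  obtain ⟨cm, cs, hs, hm⟩ := h
  refine ⟨?_, ?_, ?_, ?_, ?_, ?_, ?_, ?_⟩
  · intro s hS
    have := cs.simple_mul_simple_self ⟨s, hS⟩
    rwa [hs] at this
  · intro s hS
    rw [← hm ⟨s, hS⟩ ⟨s, hS⟩, cm.diagonal]
  · intro s hS t hT
    rw [← hm ⟨s, hS⟩ ⟨t, hT⟩, ← hm ⟨t, hT⟩ ⟨s, hS⟩, cm.symmetric]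
  · intro s hS t hT hne
    rw [← hm ⟨s, hS⟩ ⟨t, hT⟩]
    exact cm.off_diagonal _ _ (by simpa using hne)
  · intro s hS t hT
    have := cs.simple_mul_simple_pow ⟨s, hS⟩ ⟨t, hT⟩
    rwa [hs, hs, hm] at this
  · intro s hS t hT h k hk
    have := dvd_of_simple_mul_pow_eq_one cs (i := ⟨s, hS⟩) (j := ⟨t, hT⟩) (k := k)
    rw [hs, hs, hm] at this
    exact this h hk
  · intro s hS t hT u hU h1 h2
    have := simple_notMem_closure_pair cs (i := ⟨s, hS⟩) (j := ⟨t, hT⟩) (k := ⟨u, hU⟩)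
      (by simpa using h1) (by simpa using h2)
    rwa [hs, hs, hs] at this
  · rw [← cs.subgroup_closure_range_simple]
    congr 1
    ext x
    simp [hs]

/-- A generating set satisfying the relations of `cm` is a set of Coxeter generators as soon as
there is a homomorphism `φ` to the Coxeter group of `cm` sending each generator to its namesake:
`φ` is then inverse to the canonical map. -/
theorem isCoxeterSystemOn_of_retraction {m : W → W → ℕ} {S : Set W} (cm : CoxeterMatrix S)
    (hm : ∀ s t : S, cm.M s t = m s t) (hrel : ∀ s t : S, ((s : W) * t) ^ m s t = 1)
    (hgen : Subgroup.closure S = ⊤) (φ : W →* cm.Group)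
    (hφ : ∀ s : S, φ s = cm.toCoxeterSystem.simple s) : IsCoxeterSystemOn m S := by
  have hl : cm.IsLiftable (fun s : S => (s : W)) := fun s t => by rw [hm]; exact hrel s t
  let ψ : cm.Group →* W := cm.toCoxeterSystem.lift ⟨_, hl⟩
  have hψ : ∀ s : S, ψ (cm.toCoxeterSystem.simple s) = s :=
    fun s => cm.toCoxeterSystem.lift_apply_simple hl s
  have h1 : ψ.comp φ = MonoidHom.id W := by
    apply MonoidHom.eq_of_eqOn_dense hgen
    intro s hs
    simpa using (congrArg ψ (hφ ⟨s, hs⟩)).trans (hψ ⟨s, hs⟩)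
  have h2 : φ.comp ψ = MonoidHom.id cm.Group := by
    apply cm.toCoxeterSystem.ext_simple
    intro s
    rw [MonoidHom.comp_apply, hψ, hφ, MonoidHom.id_apply]
  refine ⟨cm, ⟨MonoidHom.toMulEquiv φ ψ h1 h2⟩, ?_, hm⟩
  intro s
  exact hψ s

/-! ### The new Coxeter system -/

open scoped Classical in
/-- Label of the edge from `s ∈ S \ {a}` to a new generator whose label with `b` is `k`. -/
noncomputable def newLabel (m : W → W → ℕ) (a b : W) (k : ℕ) (s : W) : ℕ :=
  if s = b then k else if m s a = 0 then 0 else 2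

open scoped Classical in
/-- The Coxeter matrix on `(S \ {a}) ∪ {c, z}`, where `n` is the order of `b * c`; it agrees with
`m` on `S \ {a}`. -/
noncomputable def newMatrix (m : W → W → ℕ) (a b c z : W) (n : ℕ) (x y : W) : ℕ :=
  if x = y then 1
  else if x = c then (if y = z then 2 else newLabel m a b n y)
  else if y = c then (if x = z then 2 else newLabel m a b n x)
  else if x = z then newLabel m a b 2 y
  else if y = z then newLabel m a b 2 x
  else m x y

/-- The construction with the longest element already identified as `z = (a * b) ^ (2 * q + 1)`,
and `c` a name for `a * b * a`. -/
theorem dihedral_matching_aux (m : W → W → ℕ) (S : Set W)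
    (hcs : IsCoxeterSystemOn m S) (q : ℕ) (hq : 1 ≤ q) (a b : W) (hab : a ≠ b)
    (haS : a ∈ S) (hbS : b ∈ S)
    (hBfin : (Subgroup.closure {a, b} : Set W).Finite) (hm : m a b = 4 * q + 2)
    (hcond : ∀ s ∈ S, s ≠ a → s ≠ b → m s a ≠ 0 → m s a = 2 ∧ m s b = 2)
    (z c : W) (hz : z = (a * b) ^ (2 * q + 1)) (hc : c = a * b * a) :
    ∃ m' : W → W → ℕ,
      IsCoxeterSystemOn m' ((S \ {a}) ∪ {c, z}) ∧
      IsBase m' ((S \ {a}) ∪ {c, z}) ({b, c} : Set W) ∧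
      HasType m' ({b, c} : Set W) (d2Mat (2 * q + 1)) ∧
      Matches ({a, b} : Set W) ({b, c} : Set W) ∧
      m' z b = 2 ∧ m' z c = 2 ∧
      (∀ s ∈ S, s ∉ ({a, b} : Set W) → ∀ t ∈ ({c, z} : Set W),
        (m' s t ≠ 0 ↔ m s a ≠ 0) ∧ (m' s t ≠ 0 → m' s t = 2)) := by
  obtain ⟨hsq, hdiag, hsymm, hoff, hrel, hord, hnot, hgen⟩ := hcs.facts
  have ha := hsq a haS
  have hb := hsq b hbS
  have hr : (a * b) ^ (2 * (2 * q + 1)) = 1 := by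
    rw [← hrel a haS b hbS, hm]; congr 1; ring
  have hro : ∀ k : ℕ, (a * b) ^ k = 1 → 2 * (2 * q + 1) ∣ k := by
    intro k hk
    have := hord a haS b hbS (Or.inr (by omega)) k hk
    rwa [hm, show 4 * q + 2 = 2 * (2 * q + 1) by ring] at this
  have hne : ∀ k : ℕ, 0 < k → k ≤ 5 → (a * b) ^ k ≠ 1 := by
    intro k hk0 hk h
    have := Nat.le_of_dvd hk0 (hro k h)
    omega
  have haH : a ∈ Subgroup.closure {a, b} := Subgroup.subset_closure (by simp)
  have hbH : b ∈ Subgroup.closure {a, b} := Subgroup.subset_closure (by simp)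
  have hcH : c ∈ Subgroup.closure {a, b} := hc ▸ mul_mem (mul_mem haH hbH) haH
  have hzH : z ∈ Subgroup.closure {a, b} := hz ▸ pow_mem (mul_mem haH hbH) _
  have hcc : c * c = 1 := by
    rw [hc]
    calc a * b * a * (a * b * a) = a * (b * (a * a) * b) * a := by simp only [mul_assoc]
      _ = 1 := by rw [ha, mul_one, hb, mul_one, ha]
  have hzz : z * z = 1 := by rw [hz, ← pow_two, ← pow_mul, mul_comm, hr]
  have hza : Commute z a := by
    have h := mul_rot_zpow_left ha hb ((2 * q + 1 : ℕ) : ℤ)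
    rw [zpow_neg, zpow_natCast, ← hz, inv_eq_of_mul_eq_one_left hzz] at h
    exact h.symm
  have hzr : Commute z (a * b) := hz ▸ Commute.pow_self _ _
  have hzb : Commute z b := by
    have h := hza.mul_right hzr
    rwa [← mul_assoc, ha, one_mul] at h
  have hzc : Commute z c := hc ▸ (hza.mul_right hzb).mul_right hza
  have hcb : c * b = (a * b) ^ 2 := by rw [hc, pow_two]; simp only [mul_assoc]
  have hcbn : (c * b) ^ (2 * q + 1) = 1 := by rw [hcb, ← pow_mul, hr]
  have ha_eq : a = z * ((c * b) ^ q * c) := by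
    rw [hcb, ← pow_mul, hc, hz, ← mul_assoc, ← mul_assoc, ← pow_add, ← pow_succ,
      show 2 * q + 1 + 2 * q + 1 = 2 * (2 * q + 1) by ring, hr, one_mul]
  have hcb_ncomm : ¬ Commute c b := by
    intro h
    have h2 := sq_of_commute hcc hb h
    rw [hcb, ← pow_mul] at h2
    exact hne _ (by norm_num) (by norm_num) h2
  have hcneb : c ≠ b := fun h => hcb_ncomm (h ▸ Commute.refl b)
  have hznec : z ≠ c := fun h => hcb_ncomm (h ▸ hzb)
  have hzneb : z ≠ b := fun h => hcb_ncomm (h ▸ hzc).symm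
  -- `⟨a, b⟩` meets `S` in `{a, b}`, so `c` and `z` are new generators
  have hold : ∀ s ∈ S, s ≠ a → s ≠ c ∧ s ≠ z := by
    intro s hs hsa
    by_cases hsb : s = b
    · subst hsb
      exact ⟨hcneb.symm, hzneb.symm⟩
    · have := hnot a haS b hbS s hs hsa hsb
      exact ⟨fun h => this (h ▸ hcH), fun h => this (h ▸ hzH)⟩
  set m' := newMatrix m a b c z (2 * q + 1) with hm'
  have v_old : ∀ s ∈ S, s ≠ a → ∀ t ∈ S, t ≠ a → m' s t = m s t := by
    intro s hs hsa t ht hta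
    have h1 := hold s hs hsa
    have h2 := hold t ht hta
    by_cases h : s = t
    · subst h
      simp [hm', newMatrix, hdiag s hs]
    · simp [hm', newMatrix, h, h1, h2]
  have v_diag : ∀ x, m' x x = 1 := fun x => by simp [hm', newMatrix]
  have v_cs : ∀ s ∈ S, s ≠ a → m' c s = newLabel m a b (2 * q + 1) s := by
    intro s hs hsa
    have h1 := hold s hs hsa
    simp [hm', newMatrix, h1, h1.1.symm]
  have v_zs : ∀ s ∈ S, s ≠ a → m' z s = newLabel m a b 2 s := by
    intro s hs hsa
    have h1 := hold s hs hsa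
    simp [hm', newMatrix, h1, h1.2.symm, hznec]
  have v_sc : ∀ s ∈ S, s ≠ a → m' s c = newLabel m a b (2 * q + 1) s := by
    intro s hs hsa
    have h1 := hold s hs hsa
    simp [hm', newMatrix, h1]
  have v_sz : ∀ s ∈ S, s ≠ a → m' s z = newLabel m a b 2 s := by
    intro s hs hsa
    have h1 := hold s hs hsa
    simp [hm', newMatrix, h1, hznec]
  have v_cz : m' c z = 2 := by simp [hm', newMatrix, hznec.symm]
  have v_zc : m' z c = 2 := by simp [hm', newMatrix, hznec]
  have l_b : ∀ k, newLabel m a b k b = k := fun k => by simp [newLabel]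
  have l_fin : ∀ k, ∀ s ∈ S, s ≠ a → s ≠ b → m s a ≠ 0 → newLabel m a b k s = 2 :=
    fun k s _ _ hsb h => by simp [newLabel, hsb, h]
  have l_inf : ∀ k, ∀ s ∈ S, s ≠ a → s ≠ b → m s a = 0 → newLabel m a b k s = 0 :=
    fun k s _ _ hsb h => by simp [newLabel, hsb, h]
  have hcomm : ∀ s ∈ S, s ≠ a → s ≠ b → m s a ≠ 0 → Commute s c ∧ Commute s z := by
    intro s hs hsa hsb h
    obtain ⟨h1, h2⟩ := hcond s hs hsa hsb h
    have c1 : Commute s a := commute_of_sq (hsq s hs) ha (by rw [← h1]; exact hrel s hs a haS)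
    have c2 : Commute s b := commute_of_sq (hsq s hs) hb (by rw [← h2]; exact hrel s hs b hbS)
    exact ⟨hc ▸ (c1.mul_right c2).mul_right c1, hz ▸ (c1.mul_right c2).pow_right _⟩
  have hcases : ∀ x ∈ (S \ {a}) ∪ {c, z}, (x ∈ S ∧ x ≠ a) ∨ x = c ∨ x = z := by
    rintro x (⟨h1, h2⟩ | h | h)
    · exact Or.inl ⟨h1, h2⟩
    · exact Or.inr (Or.inl h)
    · exact Or.inr (Or.inr h)
  have hbS' : b ∈ (S \ {a}) ∪ {c, z} := Or.inl ⟨hbS, hab.symm⟩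
  have hcS' : c ∈ (S \ {a}) ∪ {c, z} := Or.inr (Or.inl rfl)
  have hzS' : z ∈ (S \ {a}) ∪ {c, z} := Or.inr (Or.inr rfl)
  have lab_ne : ∀ k, k ≠ 1 → ∀ s, newLabel m a b k s ≠ 1 := by
    intro k hk s
    unfold newLabel
    split_ifs <;> omega
  let cm : CoxeterMatrix ((S \ {a}) ∪ {c, z} : Set W) :=
    { M := fun x y => m' x y
      isSymm := by
        refine Matrix.IsSymm.ext fun x y => ?_
        rcases hcases x x.2 with ⟨hx, hxa⟩ | hx | hx <;>
          rcases hcases y y.2 with ⟨hy, hya⟩ | hy | hy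
        · rw [v_old _ hx hxa _ hy hya, v_old _ hy hya _ hx hxa, hsymm _ hx _ hy]
        · rw [hy, v_sc _ hx hxa, v_cs _ hx hxa]
        · rw [hy, v_sz _ hx hxa, v_zs _ hx hxa]
        · rw [hx, v_sc _ hy hya, v_cs _ hy hya]
        · rw [hx, hy]
        · rw [hx, hy, v_cz, v_zc]
        · rw [hx, v_sz _ hy hya, v_zs _ hy hya]
        · rw [hx, hy, v_cz, v_zc]
        · rw [hx, hy]
      diagonal := fun x => v_diag x
      off_diagonal := by
        intro x y hxy
        have hxy' : (x : W) ≠ y := fun h => hxy (Subtype.ext h)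
        rcases hcases x x.2 with ⟨hx, hxa⟩ | hx | hx <;>
          rcases hcases y y.2 with ⟨hy, hya⟩ | hy | hy
        · rw [v_old _ hx hxa _ hy hya]
          exact hoff _ hx _ hy hxy'
        · rw [hy, v_sc _ hx hxa]
          exact lab_ne _ (by omega) _
        · rw [hy, v_sz _ hx hxa]
          exact lab_ne _ (by omega) _
        · rw [hx, v_cs _ hy hya]
          exact lab_ne _ (by omega) _
        · exact absurd (hx.trans hy.symm) hxy'
        · rw [hx, hy, v_cz]; norm_num
        · rw [hx, v_zs _ hy hya]
          exact lab_ne _ (by omega) _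
        · rw [hx, hy, v_zc]; norm_num
        · exact absurd (hx.trans hy.symm) hxy' }
  have hcm : ∀ x y, cm.M x y = m' x y := fun _ _ => rfl
  have hrelc : ∀ s ∈ S, s ≠ a → (c * s) ^ newLabel m a b (2 * q + 1) s = 1 := by
    intro s hs hsa
    by_cases hsb : s = b
    · rw [hsb, l_b, hcbn]
    · by_cases h : m s a = 0
      · rw [l_inf _ s hs hsa hsb h, pow_zero]
      · rw [l_fin _ s hs hsa hsb h]
        exact sq_of_commute hcc (hsq s hs) (hcomm s hs hsa hsb h).1.symm
  have hrelz : ∀ s ∈ S, s ≠ a → (z * s) ^ newLabel m a b 2 s = 1 := by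
    intro s hs hsa
    by_cases hsb : s = b
    · rw [hsb, l_b]
      exact sq_of_commute hzz hb hzb
    · by_cases h : m s a = 0
      · rw [l_inf _ s hs hsa hsb h, pow_zero]
      · rw [l_fin _ s hs hsa hsb h]
        exact sq_of_commute hzz (hsq s hs) (hcomm s hs hsa hsb h).2.symm
  have hrel' : ∀ x y : ((S \ {a}) ∪ {c, z} : Set W), ((x : W) * y) ^ m' x y = 1 := by
    intro x y
    rcases hcases x x.2 with ⟨hx, hxa⟩ | hx | hx <;>
      rcases hcases y y.2 with ⟨hy, hya⟩ | hy | hy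
    · rw [v_old _ hx hxa _ hy hya]
      exact hrel _ hx _ hy
    · rw [hy, v_sc _ hx hxa]
      exact mul_pow_swap (hrelc _ hx hxa)
    · rw [hy, v_sz _ hx hxa]
      exact mul_pow_swap (hrelz _ hx hxa)
    · rw [hx, v_cs _ hy hya]
      exact hrelc _ hy hya
    · rw [hx, hy, v_diag, pow_one, hcc]
    · rw [hx, hy, v_cz]
      exact sq_of_commute hcc hzz hzc.symm
    · rw [hx, v_zs _ hy hya]
      exact hrelz _ hy hya
    · rw [hx, hy, v_zc]
      exact sq_of_commute hzz hcc hzc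
    · rw [hx, hy, v_diag, pow_one, hzz]
  have hgen' : Subgroup.closure ((S \ {a}) ∪ {c, z}) = ⊤ := by
    rw [← top_le_iff, ← hgen, Subgroup.closure_le]
    intro s hs
    by_cases hsa : s = a
    · have h1 := Subgroup.subset_closure hbS'
      have h2 := Subgroup.subset_closure hcS'
      have h3 := Subgroup.subset_closure hzS'
      have h4 := mul_mem h3 (mul_mem (pow_mem (mul_mem h2 h1) q) h2)
      rw [← ha_eq] at h4
      rw [hsa]
      exact h4
    · exact Subgroup.subset_closure (Or.inl ⟨hs, hsa⟩)
  -- the inverse isomorphism sends `a` to the word for it in the new generators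
  have hφ : ∃ φ : W →* cm.Group, ∀ s : ((S \ {a}) ∪ {c, z} : Set W),
      φ s = cm.toCoxeterSystem.simple s := by
    set cs' := cm.toCoxeterSystem with hcs'
    let B : cm.Group := cs'.simple ⟨b, hbS'⟩
    let C : cm.Group := cs'.simple ⟨c, hcS'⟩
    let Z : cm.Group := cs'.simple ⟨z, hzS'⟩
    have hB : B * B = 1 := cs'.simple_mul_simple_self _
    have hC : C * C = 1 := cs'.simple_mul_simple_self _
    have hZ : Z * Z = 1 := cs'.simple_mul_simple_self _
    have hCB : (C * B) ^ (2 * q + 1) = 1 := by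
      have := cs'.simple_mul_simple_pow ⟨c, hcS'⟩ ⟨b, hbS'⟩
      rwa [hcm, v_cs b hbS hab.symm, l_b] at this
    have hcomm2 : ∀ x y, m' x y = 2 → ∀ hx hy,
        Commute (cs'.simple ⟨x, hx⟩) (cs'.simple ⟨y, hy⟩) := by
      intro x y h hx hy
      have := cs'.simple_mul_simple_pow ⟨x, hx⟩ ⟨y, hy⟩
      rw [hcm, h] at this
      exact commute_of_sq (cs'.simple_mul_simple_self _) (cs'.simple_mul_simple_self _) this
    have hZB : Commute Z B := hcomm2 z b (by rw [v_zs b hbS hab.symm, l_b]) _ _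
    have hZC : Commute Z C := hcomm2 z c v_zc _ _
    obtain ⟨hA, hABA, hABn⟩ := split_dihedral hB hC hZ hZB hZC hCB
    set A := Z * ((C * B) ^ q * C) with hAdef
    classical
    let f : S → cm.Group := fun s =>
      if h : (s : W) = a then A else cs'.simple ⟨s, Or.inl ⟨s.2, h⟩⟩
    have hfa : ∀ s : S, (s : W) = a → f s = A := fun s h => by simp [f, h]
    have hfs : ∀ (s : S) (h : (s : W) ≠ a), f s = cs'.simple ⟨s, Or.inl ⟨s.2, h⟩⟩ :=
      fun s h => by simp [f, h]
    have hAs : ∀ s : S, (s : W) ≠ a → (A * f s) ^ m a s = 1 := by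
      intro s hsa
      rw [hfs s hsa]
      by_cases hsb : (s : W) = b
      · have e : (⟨s, Or.inl ⟨s.2, hsa⟩⟩ : ((S \ {a}) ∪ {c, z} : Set W)) = ⟨b, hbS'⟩ :=
          Subtype.ext hsb
        rw [e, hsb, hm, show 4 * q + 2 = (2 * q + 1) * 2 by ring, pow_mul]
        change ((A * B) ^ _) ^ 2 = 1
        rw [hABn, pow_two, hZ]
      · rw [hsymm a haS s s.2]
        by_cases h : m s a = 0
        · rw [h, pow_zero]
        · obtain ⟨h1, h2⟩ := hcond s s.2 hsa hsb h
          have hs' : (s : W) ∈ (S \ {a}) ∪ {c, z} := Or.inl ⟨s.2, hsa⟩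
          have c1 : Commute (cs'.simple ⟨s, hs'⟩) B :=
            hcomm2 s b (by rw [v_old s s.2 hsa b hbS hab.symm, h2]) _ _
          have c2 : Commute (cs'.simple ⟨s, hs'⟩) C :=
            hcomm2 s c (by rw [v_sc s s.2 hsa, l_fin _ s s.2 hsa hsb h]) _ _
          have c3 : Commute (cs'.simple ⟨s, hs'⟩) Z :=
            hcomm2 s z (by rw [v_sz s s.2 hsa, l_fin _ s s.2 hsa hsb h]) _ _
          rw [h1]
          refine sq_of_commute hA (cs'.simple_mul_simple_self _) (Commute.symm ?_)
          exact c3.mul_right (((c2.mul_right c1).pow_right q).mul_right c2)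
    obtain ⟨cm0, cs0, hs0, hm0⟩ := hcs
    have hf : cm0.IsLiftable f := by
      intro s t
      rw [hm0]
      by_cases hsa : (s : W) = a <;> by_cases hta : (t : W) = a
      · rw [hfa s hsa, hfa t hta, hA, one_pow]
      · rw [hfa s hsa, hsa]
        exact hAs t hta
      · rw [hfa t hta, hta, hsymm s s.2 a haS]
        exact mul_pow_swap (hAs s hsa)
      · rw [hfs s hsa, hfs t hta, ← v_old s s.2 hsa t t.2 hta]
        exact cs'.simple_mul_simple_pow ⟨s, Or.inl ⟨s.2, hsa⟩⟩ ⟨t, Or.inl ⟨t.2, hta⟩⟩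
    have hlift : ∀ s : S, cs0.lift ⟨f, hf⟩ (s : W) = f s := by
      intro s
      rw [← hs0 s]
      exact cs0.lift_apply_simple hf s
    have hla : cs0.lift ⟨f, hf⟩ a = A := (hlift ⟨a, haS⟩).trans (hfa _ rfl)
    have hlb : cs0.lift ⟨f, hf⟩ b = B := (hlift ⟨b, hbS⟩).trans (hfs _ hab.symm)
    have hlc : cs0.lift ⟨f, hf⟩ c = C := by
      have h := congrArg (cs0.lift ⟨f, hf⟩) hc
      rwa [map_mul, map_mul, hla, hlb, hABA] at h
    have hlz : cs0.lift ⟨f, hf⟩ z = Z := by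
      have h := congrArg (cs0.lift ⟨f, hf⟩) hz
      rwa [map_pow, map_mul, hla, hlb, hABn] at h
    refine ⟨cs0.lift ⟨f, hf⟩, ?_⟩
    rintro ⟨x, hx'⟩
    rcases hcases x hx' with ⟨hx, hxa⟩ | hx | hx
    · exact (hlift ⟨x, hx⟩).trans (hfs _ hxa)
    · have e : (⟨x, hx'⟩ : ((S \ {a}) ∪ {c, z} : Set W)) = ⟨c, hcS'⟩ := Subtype.ext hx
      rw [e]
      exact hlc
    · have e : (⟨x, hx'⟩ : ((S \ {a}) ∪ {c, z} : Set W)) = ⟨z, hzS'⟩ := Subtype.ext hx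
      rw [e]
      exact hlz
  obtain ⟨φ, hφ⟩ := hφ
  have hnew : IsCoxeterSystemOn m' ((S \ {a}) ∪ {c, z}) :=
    isCoxeterSystemOn_of_retraction cm hcm hrel' hgen' φ hφ
  have hbH' : b ∈ Subgroup.closure {b, c} := Subgroup.subset_closure (by simp)
  have hcH' : c ∈ Subgroup.closure {b, c} := Subgroup.subset_closure (by simp)
  have hle : Subgroup.closure {b, c} ≤ Subgroup.closure {a, b} := by
    rw [Subgroup.closure_le]
    rintro x (rfl | rfl)
    · exact hbH
    · exact hcH
  have v_bc : m' b c = 2 * q + 1 := by rw [v_sc b hbS hab.symm, l_b]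
  have v_cb : m' c b = 2 * q + 1 := by rw [v_cs b hbS hab.symm, l_b]
  have v_bz : m' b z = 2 := by rw [v_sz b hbS hab.symm, l_b]
  refine ⟨m', hnew, ⟨?_, ⟨⟨b, by simp⟩, ?_⟩, ?_, ?_, ?_⟩, ?_, ⟨1, ?_⟩, ?_, v_zc, ?_⟩
  · rintro x (rfl | rfl)
    · exact hbS'
    · exact hcS'
  · rintro u (rfl | rfl) v (rfl | rfl)
    · exact Relation.ReflTransGen.refl
    · exact Relation.ReflTransGen.single ⟨by simp, by simp, hcneb.symm, Or.inr (by omega)⟩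
    · exact Relation.ReflTransGen.single ⟨by simp, by simp, hcneb, Or.inr (by omega)⟩
    · exact Relation.ReflTransGen.refl
  · exact hBfin.subset hle
  · intro hcyc
    have := hcyc.isMulCommutative.is_comm.comm (⟨c, hcH'⟩ : Subgroup.closure {b, c}) ⟨b, hbH'⟩
    exact hcb_ncomm (congrArg Subtype.val this)
  · intro B' hB'S hB' ⟨_, hconn⟩ hfinB'
    refine Set.Subset.antisymm ?_ hB'
    have hbB' : b ∈ B' := hB' (by simp)
    have hcB' : c ∈ B' := hB' (by simp)
    intro v hv
    have hpath := hconn b hbB' v hv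
    -- no edge of finite label leaves `{b, c}`, so a path in a finite `⟨B'⟩` stays in `{b, c}`
    clear hv
    induction hpath with
    | refl => simp
    | @tail x y _ hstep ih =>
      obtain ⟨-, hy, -, hedge⟩ := hstep
      rcases hcases y (hB'S hy) with ⟨hyS, hya⟩ | hyc | hyz
      · by_cases hyb : y = b
        · simp [hyb]
        exfalso
        by_cases h : m y a = 0
        · have h0 : m' y c = 0 := by rw [v_sc y hyS hya, l_inf _ y hyS hya hyb h]
          obtain ⟨-, -, -, -, -, hord', -⟩ := hnew.facts
          have hmem : y * c ∈ Subgroup.closure B' :=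
            mul_mem (Subgroup.subset_closure hy) (Subgroup.subset_closure hcB')
          have : Finite (Subgroup.closure B') := hfinB'
          obtain ⟨k, hk0, hk⟩ := isOfFinOrder_iff_pow_eq_one.1
            (isOfFinOrder_of_finite (⟨y * c, hmem⟩ : Subgroup.closure B'))
          have := hord' y (hB'S hy) c hcS' (Or.inl h0) k (by simpa using congrArg Subtype.val hk)
          rw [h0, zero_dvd_iff] at this
          omega
        · have h2 := (hcond y hyS hya hyb h).2
          rcases ih with hx | hx
          · rw [hx, v_old b hbS hab.symm y hyS hya, hsymm b hbS y hyS, h2] at hedge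
            omega
          · rw [hx, v_cs y hyS hya, l_fin _ y hyS hya hyb h] at hedge
            omega
      · simp [hyc]
      · exfalso
        rcases ih with hx | hx
        · rw [hx, hyz, v_bz] at hedge
          omega
        · rw [hx, hyz, v_cz] at hedge
          omega
  · classical
    refine ⟨⟨fun u => if (u : W) = b then 0 else 1, ![⟨b, by simp⟩, ⟨c, by simp⟩], ?_, ?_⟩, ?_⟩
    · rintro ⟨u, rfl | rfl⟩
      · simp
      · simp [hcneb]
    · intro i
      fin_cases i
      · simp
      · simp [hcneb]
    · rintro ⟨u, rfl | rfl⟩ ⟨v, rfl | rfl⟩ <;> simp [d2Mat, v_diag, hcneb, v_bc, v_cb]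
  · rw [map_one]
    have hzall : ∀ h ∈ Subgroup.closure {a, b}, Commute z h := by
      intro h hh
      induction hh using Subgroup.closure_induction with
      | mem x hx =>
        rcases hx with rfl | rfl
        · exact hza
        · exact hzb
      | one => exact Commute.one_right _
      | mul x y _ _ hx hy => exact hx.mul_right hy
      | inv x _ hx => exact hx.inv_right
    refine Eq.trans (Subgroup.map_id _) (commutator_eq_of_central hle hzall ?_)
    intro g hg
    induction hg using Subgroup.closure_induction with
    | mem x hx =>
      rcases hx with rfl | rfl
      · exact ⟨1, (c * b) ^ q * c, mul_mem (pow_mem (mul_mem hcH' hbH') q) hcH',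
          by rw [zpow_one, ← ha_eq]⟩
      · exact ⟨0, x, hbH', by simp⟩
    | one => exact ⟨0, 1, one_mem _, by simp⟩
    | mul x y _ _ hx hy =>
      obtain ⟨i, h, hh, rfl⟩ := hx
      obtain ⟨j, k, hk, rfl⟩ := hy
      refine ⟨i + j, h * k, mul_mem hh hk, ?_⟩
      rw [((hzall h (hle hh)).zpow_left j).symm.mul_mul_mul_comm, zpow_add]
    | inv x _ hx =>
      obtain ⟨i, h, hh, rfl⟩ := hx
      refine ⟨-i, h⁻¹, inv_mem hh, ?_⟩
      rw [((hzall h (hle hh)).zpow_left i).eq, mul_inv_rev, zpow_neg]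
  · rw [v_zs b hbS hab.symm, l_b]
  · intro s hs hsB t ht
    have hsa : s ≠ a := fun h => hsB (by simp [h])
    have hsb : s ≠ b := fun h => hsB (by simp [h])
    by_cases h : m s a = 0
    · have h0 : m' s t = 0 := by
        rcases ht with rfl | rfl
        · rw [v_sc s hs hsa, l_inf _ s hs hsa hsb h]
        · rw [v_sz s hs hsa, l_inf _ s hs hsa hsb h]
      simp [h0, h]
    · have h0 : m' s t = 2 := by
        rcases ht with rfl | rfl
        · rw [v_sc s hs hsa, l_fin _ s hs hsa hsb h]
        · rw [v_sz s hs hsa, l_fin _ s hs hsa hsb h]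
      simp [h0, h]

theorem dihedral_matching_construction (m : W → W → ℕ) (S : Set W)
    (hcs : IsCoxeterSystemOn m S) (hfin : S.Finite)
    (q : ℕ) (hq : 1 ≤ q) (a b : W) (hab : a ≠ b)
    (hB : IsBase m S ({a, b} : Set W)) (hm : m a b = 4 * q + 2)
    (hcond : ∀ s ∈ S, s ∉ ({a, b} : Set W) → m s a ≠ 0 → m s a = 2 ∧ m s b = 2)
    (z : W) (hz : IsLongestElement ({a, b} : Set W) z) :
    ∃ m' : W → W → ℕ,
      IsCoxeterSystemOn m' ((S \ {a}) ∪ {a * b * a, z}) ∧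
      IsBase m' ((S \ {a}) ∪ {a * b * a, z}) ({b, a * b * a} : Set W) ∧
      HasType m' ({b, a * b * a} : Set W) (d2Mat (2 * q + 1)) ∧
      Matches ({a, b} : Set W) ({b, a * b * a} : Set W) ∧
      m' z b = 2 ∧ m' z (a * b * a) = 2 ∧
      (∀ s ∈ S, s ∉ ({a, b} : Set W) → ∀ t ∈ ({a * b * a, z} : Set W),
        (m' s t ≠ 0 ↔ m s a ≠ 0) ∧ (m' s t ≠ 0 → m' s t = 2)) := by
  obtain ⟨hBS, -, hBfin, -, -⟩ := hB
  have haS : a ∈ S := hBS (by simp)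
  have hbS : b ∈ S := hBS (by simp)
  obtain ⟨hsq, -, -, -, hrel, hord, -, -⟩ := hcs.facts
  have e : 4 * q + 2 = 2 * (2 * q + 1) := by ring
  have hz' : z = (a * b) ^ (2 * q + 1) := by
    refine eq_of_isLongestElement (hsq a haS) (hsq b hbS) (by omega) ?_ ?_ hz
    · rw [← e, ← hm]
      exact hrel a haS b hbS
    · intro k hk
      rw [← e, ← hm]
      exact hord a haS b hbS (Or.inr (by omega)) k hk
  exact dihedral_matching_aux m S hcs q hq a b hab haS hbS hBfin hm
    (fun s hs hsa hsb h => hcond s hs (by simp [hsa, hsb]) h) z _ hz' rfl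
end
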